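/- Let n ≥ 5. Then every (n-1)-tuple (H_1, …, H_{n-1}) of core-free subgroups of the symmetric group S_n is regular; moreover, if H is the stabilizer in S_n of the point n, then for all g_1, …, g_{n-2} ∈ S_n the intersection ⋂_{i=1}^{n-2} g_i H g_i^{-1} is nontrivial, so this (n-2)-tuple of core-free subgroups is non-regular. Consequently the regularity number of S_n equals n-1. -/

import Mathlib

/-!
For the lower bound, `n - 2` conjugates of a point stabilizer are stabilizers of at most `n - 2`
points, so their intersection contains the transposition of two other points.

For the upper bound, the groups are conjugated one at a time and the intersection `K` so far is
followed until it is trivial. Each group is intransitive, imprimitive or primitive.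

* Two groups with blocks of size two can be placed so that they centralize two perfect matchings
  forming a Hamiltonian cycle. Their intersection has order at most `n`, and each further core-free
  group can be made to halve it at least (`regS_of_two_matchings`).
* If no group is primitive and one is intransitive, this one gives two orbits, and every further
  group can be made to add an orbit (`NonPrim.split`, `regS_of_intr`).
* If all groups but at most one are imprimitive, some imprimitive group has a block `B` of at least
  three points. Two groups give two orbits, one less than wanted per group. The orbit is recovered
  when the orbits cease to meet `B` all of them, since then each orbit splits (`regS_of_block`).
* Otherwise there are a primitive group and a further group `κ` that is primitive or intransitive.
  A nontrivial element of a core-free primitive group moves at least four points (Jordan), so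
  Bochert's argument gives a set `Δ` of at least half of the points supporting no nontrivial element
  of the group (`NS.exists_good`). The set `Δ` is enlarged point by point: the elements of `K`
  supported on `Δ ∪ {c}` form a group acting regularly on the orbit of `c`, hence of order at most
  `|Δ| + 1`. While this order is at most `⌊n/2⌋ + 1`, one core-free group can be conjugated to meet
  it trivially (`kills_low`). The next two points together cost three groups: if the order
  `⌊n/2⌋ + 2` occurs, then either the second point is free or the regular group has at most one
  involution (`next_level`), in which case one group still suffices for it (`kills_two`). Every
  later point costs two groups, one halving the regular group and one killing the rest, and `κ` is
  among the two used for the last point, where no fixed point is left. In total `n - 1` groups are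
  used. In degrees 5 and 6 this count is replaced by `regS_of_primT_small`.

The kills rest on counting: over a regular orbit `R` of `M` such that no nontrivial element of `H`
is supported on `R`, a nontrivial element of `M` is conjugated into `H` by few permutations of `R`
(`kills_of_good_five`); slightly above half the degree, transpositions `(c b)` with `b ∉ R` are used
instead, no element of `M` being conjugated into `H` by two of them (`NS.swap_unique`).
-/

/-- The conjugate `g H g⁻¹` of a subgroup `H` by an element `g`. -/
def conjSub {G : Type*} [Group G] (g : G) (H : Subgroup G) : Subgroup G :=
  H.map (MulAut.conj g).toMonoidHom

/-- A `k`-tuple of subgroups is regular if some intersection of conjugates is trivial. -/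
def IsRegularTuple {G : Type*} [Group G] {k : ℕ} (H : Fin k → Subgroup G) : Prop :=
  ∃ g : Fin k → G, (⨅ i, conjSub (g i) (H i)) = ⊥

/-! ### Regular tuples built one group at a time, and the lower bound -/

namespace RegNum

set_option linter.unusedSectionVars false

open Equiv

section Framework

variable {G : Type*} [Group G] {ι : Type*} [DecidableEq ι]

lemma mem_conjSub {g x : G} {H : Subgroup G} : x ∈ conjSub g H ↔ g⁻¹ * x * g ∈ H := by
  unfold conjSub
  constructor
  · rintro ⟨h, hh, rfl⟩
    simpa [mul_assoc] using hh
  · intro h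
    exact ⟨g⁻¹ * x * g, h, by simp [mul_assoc]⟩

lemma conjSub_mul (a b : G) (H : Subgroup G) : conjSub a (conjSub b H) = conjSub (a * b) H := by
  ext x
  simp [mem_conjSub, mul_assoc]

lemma conj_mem_conjSub {g x : G} {H : Subgroup G} (hx : x ∈ H) : g * x * g⁻¹ ∈ conjSub g H := by
  rw [mem_conjSub]
  simpa [mul_assoc] using hx

/-- `K` together with suitable conjugates of the `H i`, `i ∈ s`, intersects trivially. -/
def RegS (H : ι → Subgroup G) (K : Subgroup G) (s : Finset ι) : Prop :=
  ∃ g : ι → G, ∀ x ∈ K, (∀ i ∈ s, x ∈ conjSub (g i) (H i)) → x = 1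

lemma RegS.of_bot {H : ι → Subgroup G} {K : Subgroup G} {s : Finset ι} (h : K = ⊥) :
    RegS H K s := ⟨fun _ => 1, fun x hx _ => by simpa [h] using hx⟩

lemma RegS.step {H : ι → Subgroup G} {K : Subgroup G} {s : Finset ι} {i : ι} (hi : i ∈ s) (g : G)
    (h : RegS H (K ⊓ conjSub g (H i)) (s.erase i)) : RegS H K s := by
  obtain ⟨f, hf⟩ := h
  refine ⟨Function.update f i g, fun x hx hs => hf x ⟨hx, by simpa using hs i hi⟩ ?_⟩
  intro j hj
  have := hs j (Finset.mem_of_mem_erase hj)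
  rwa [Function.update_of_ne (Finset.ne_of_mem_erase hj)] at this

lemma RegS.mono {H : ι → Subgroup G} {K : Subgroup G} {s t : Finset ι} (hst : s ⊆ t)
    (h : RegS H K s) : RegS H K t := by
  obtain ⟨f, hf⟩ := h
  exact ⟨f, fun x hx hs => hf x hx fun i hi => hs i (hst hi)⟩

lemma exists_not_mem_conjSub {H : Subgroup G} (hH : H.normalCore = ⊥) {x : G} (hx : x ≠ 1) :
    ∃ g, x ∉ conjSub g H := by
  by_contra! h
  apply hx
  have : x ∈ H.normalCore := by
    intro b
    have := h b⁻¹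
    rw [mem_conjSub] at this
    simpa using this
  simpa [hH] using this

/-- Some conjugate of `H` meets `M` trivially. -/
def Kills (H M : Subgroup G) : Prop := ∃ g, M ⊓ conjSub g H = ⊥

lemma kills_of_bot {H M : Subgroup G} (h : M = ⊥) : Kills H M := ⟨1, by simp [h]⟩

lemma kills_iff {H M : Subgroup G} :
    Kills H M ↔ ∃ g, ∀ x ∈ M, x ∈ conjSub g H → x = 1 := by
  simp [Kills, Subgroup.eq_bot_iff_forall]

lemma Kills.mono {H M M' : Subgroup G} (h : M' ≤ M) (hk : Kills H M) : Kills H M' := by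
  rw [kills_iff] at *
  obtain ⟨g, hg⟩ := hk
  exact ⟨g, fun x hx => hg x (h hx)⟩

/-- If one nontrivial element is a power of every nontrivial element of `M`, then every core-free
subgroup has a conjugate avoiding it, hence meeting `M` trivially. -/
lemma kills_of_monolith {H M : Subgroup G} (hH : H.normalCore = ⊥) {z : G} (hz : z ≠ 1)
    (h : ∀ x ∈ M, x ≠ 1 → ∃ k : ℕ, x ^ k = z) : Kills H M := by
  obtain ⟨g, hg⟩ := exists_not_mem_conjSub hH hz
  rw [kills_iff]
  refine ⟨g, fun x hx hxg => ?_⟩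
  by_contra hne
  obtain ⟨k, rfl⟩ := h x hx hne
  exact hg (pow_mem hxg k)

lemma kills_of_prime [Finite G] {H M : Subgroup G} (hH : H.normalCore = ⊥)
    (hp : (Nat.card M).Prime) : Kills H M := by
  have : Fact (Nat.card M).Prime := ⟨hp⟩
  have hne : Nontrivial M := by
    rw [← Finite.one_lt_card_iff_nontrivial]; exact hp.one_lt
  obtain ⟨z, hz⟩ := exists_ne (1 : M)
  refine kills_of_monolith hH (z := z) (by simpa using hz) fun x hx hx1 => ?_
  have : z ∈ Submonoid.powers (⟨x, hx⟩ : M) :=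
    mem_powers_of_prime_card (p := Nat.card M) rfl (by simpa [Subtype.ext_iff] using hx1)
  obtain ⟨k, hk⟩ := this
  exact ⟨k, by simpa [Subtype.ext_iff] using hk⟩

lemma kills_of_cyclic_four [Finite G] {H M : Subgroup G} (hH : H.normalCore = ⊥)
    (hc : Nat.card M = 4) {x : G} (hx : x ∈ M) (hx2 : x ^ 2 ≠ 1) : Kills H M := by
  have hx4 : x ^ 4 = 1 := by
    have := pow_card_eq_one' (x := (⟨x, hx⟩ : M))
    rw [hc] at this
    simpa [Subtype.ext_iff] using this
  have hord : orderOf x = 4 := by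
    have := orderOf_eq_prime_pow (p := 2) (n := 1) (x := x) (by simpa using hx2)
      (by simpa using hx4)
    simpa using this
  have hz : Subgroup.zpowers x = M := by
    apply Subgroup.eq_of_le_of_card_ge
    · simpa using hx
    · rw [Nat.card_zpowers, hord, hc]
  refine kills_of_monolith hH (z := x ^ 2) hx2 fun y hy hy1 => ?_
  rw [← hz] at hy
  classical
  have hy' := (isOfFinOrder_of_finite x).mem_zpowers_iff_mem_range_orderOf.1 hy
  rw [hord] at hy'
  simp only [Finset.mem_image, Finset.mem_range] at hy'
  obtain ⟨k, hk, rfl⟩ := hy'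
  interval_cases k
  · simp at hy1
  · exact ⟨2, by simp⟩
  · exact ⟨1, by simp⟩
  · refine ⟨2, ?_⟩
    rw [← pow_mul, show 3 * 2 = 4 + 2 by rfl, pow_add, hx4, one_mul]

lemma two_mul_card_le_of_lt [Finite G] {M M' : Subgroup G} (h : M' < M) :
    2 * Nat.card M' ≤ Nat.card M := by
  have hd := Subgroup.card_dvd_of_le h.le
  obtain ⟨k, hk⟩ := hd
  have hne : Nat.card M' ≠ Nat.card M := fun h' =>
    h.ne (Subgroup.eq_of_le_of_card_ge h.le h'.ge)
  have h0 : 0 < Nat.card M := Nat.card_pos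
  rcases k with _ | _ | k
  · simp [hk] at h0
  · simp at hk; omega
  · rw [hk]; nlinarith [Nat.zero_le (k * Nat.card M')]

lemma exists_halve [Finite G] {H M : Subgroup G} (hH : H.normalCore = ⊥) (hM : M ≠ ⊥) :
    ∃ g, 2 * Nat.card ↥(M ⊓ conjSub g H) ≤ Nat.card M := by
  obtain ⟨⟨x, hx⟩, hx'⟩ := Subgroup.ne_bot_iff_exists_ne_one.1 hM
  have hx1 : x ≠ 1 := by simpa [Subtype.ext_iff] using hx'
  obtain ⟨g, hg⟩ := exists_not_mem_conjSub hH hx1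
  refine ⟨g, two_mul_card_le_of_lt (lt_of_le_of_ne inf_le_left fun h => hg ?_)⟩
  rw [← h] at hx
  exact hx.2

lemma regS_of_card_lt [Finite G] {H : ι → Subgroup G} (hH : ∀ i, (H i).normalCore = ⊥)
    (s : Finset ι) : ∀ K : Subgroup G, Nat.card K < 2 ^ (s.card + 1) → RegS H K s := by
  induction s using Finset.induction_on with
  | empty =>
    intro K hK
    apply RegS.of_bot
    rw [← Subgroup.card_eq_one]
    have : 0 < Nat.card K := Nat.card_pos
    simp at hK
    omega
  | insert i s hi ih =>
    intro K hK
    by_cases hb : K = ⊥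
    · exact RegS.of_bot hb
    obtain ⟨g, hg⟩ := exists_halve (hH i) hb
    refine RegS.step (Finset.mem_insert_self i s) g ?_
    rw [Finset.erase_insert hi]
    apply ih
    rw [Finset.card_insert_of_notMem hi, pow_succ] at hK
    omega

end Framework

section Easy

variable {n : ℕ}

lemma not_reg_stabilizer {k : ℕ} (hk : k + 2 ≤ n) (p : Fin n) (g : Fin k → Perm (Fin n)) :
    (⨅ i, conjSub (g i) (MulAction.stabilizer (Perm (Fin n)) p)) ≠ ⊥ := by
  classical
  set T : Finset (Fin n) := Finset.univ.image (fun i => g i p)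
  have hT : T.card ≤ k := by simpa using Finset.card_image_le (s := Finset.univ) (f := fun i => g i p)
  have hTc : 1 < Tᶜ.card := by rw [Finset.card_compl, Fintype.card_fin]; omega
  obtain ⟨a, ha, b, hb, hab⟩ := Finset.one_lt_card.1 hTc
  intro h
  have : swap a b ∈ (⨅ i, conjSub (g i) (MulAction.stabilizer (Perm (Fin n)) p)) := by
    rw [Subgroup.mem_iInf]
    intro i
    rw [mem_conjSub, MulAction.mem_stabilizer_iff]
    have h1 : g i p ≠ a := by rintro rfl; simp [T] at ha
    have h2 : g i p ≠ b := by rintro rfl; simp [T] at hb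
    simp [Perm.smul_def, swap_apply_of_ne_of_ne h1 h2]
  rw [h, Subgroup.mem_bot, swap_eq_one_iff] at this
  exact hab this

lemma normalCore_stabilizer (p : Fin n) :
    (MulAction.stabilizer (Perm (Fin n)) p).normalCore = ⊥ := by
  rw [Subgroup.eq_bot_iff_forall]
  intro x hx
  ext q
  have := hx (swap q p)
  rw [MulAction.mem_stabilizer_iff] at this
  simp only [Perm.smul_def, Perm.mul_apply, swap_inv, swap_apply_right] at this
  have h2 := congrArg (swap q p) this
  simp at h2
  simp [h2]

lemma isRegularTuple_of_regS {G : Type*} [Group G] {k : ℕ} {H : Fin k → Subgroup G}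
    (h : RegS H ⊤ Finset.univ) : IsRegularTuple H := by
  obtain ⟨g, hg⟩ := h
  refine ⟨g, ?_⟩
  rw [Subgroup.eq_bot_iff_forall]
  intro x hx
  rw [Subgroup.mem_iInf] at hx
  exact hg x trivial fun i _ => hx i

end Easy
end RegNum

/-! ### Intransitive and imprimitive groups -/

namespace RegNum

set_option linter.unusedSectionVars false

open Equiv

section Types

variable {α : Type*} [Fintype α] [DecidableEq α]

/-- Two colourings with the same colour-class sizes differ by a permutation. -/
lemma exists_perm_of_fiber_card {γ : Type*} (f f' : α → γ)
    (h : ∀ c, Nat.card {x // f x = c} = Nat.card {x // f' x = c}) :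
    ∃ g : Perm α, ∀ x, f' (g x) = f x := by
  classical
  have e : ∀ c, Nonempty ({x // f x = c} ≃ {x // f' x = c}) := fun c => by
    have := h c
    rw [Nat.card_eq_fintype_card, Nat.card_eq_fintype_card] at this
    exact ⟨Fintype.equivOfCardEq this⟩
  have e := fun c => Classical.choice (e c)
  refine ⟨((Equiv.sigmaFiberEquiv f).symm.trans (Equiv.sigmaCongrRight e)).trans
    (Equiv.sigmaFiberEquiv f'), fun x => ?_⟩
  have := (e (f x) ⟨x, rfl⟩).2
  simpa [Equiv.sigmaFiberEquiv] using this

lemma exists_perm_image {B C : Finset α} (h : B.card = C.card) :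
    ∃ g : Perm α, ∀ x, g x ∈ C ↔ x ∈ B := by
  have hc := congrArg (fun k => Fintype.card α - k) h
  obtain ⟨g, hg⟩ := exists_perm_of_fiber_card (fun x => decide (x ∈ B)) (fun x => decide (x ∈ C))
    (fun c => by
      cases c
      · simpa [Fintype.card_subtype_compl] using hc
      · simpa using h)
  exact ⟨g, fun x => by simpa using hg x⟩

lemma exists_perm_image₂ {B B' C C' : Finset α} (h : B.card = C.card) (h' : B'.card = C'.card)
    (hd : Disjoint B B') (hd' : Disjoint C C') :
    ∃ g : Perm α, (∀ x, g x ∈ C ↔ x ∈ B) ∧ (∀ x, g x ∈ C' ↔ x ∈ B') := by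
  have key : ∀ U U' : Finset α, Disjoint U U' → ∀ c : Bool × Bool,
      Nat.card {x // ((decide (x ∈ U), decide (x ∈ U')) : Bool × Bool) = c} =
        match c with
        | (true, true) => 0
        | (true, false) => U.card
        | (false, true) => U'.card
        | (false, false) => Fintype.card α - (U.card + U'.card) := by
    intro U U' hU c
    have hU1 : ∀ x, x ∈ U → x ∉ U' := fun _ h => Finset.disjoint_left.1 hU h
    rw [Nat.card_eq_fintype_card, Fintype.card_subtype]
    rcases c with ⟨_ | _, _ | _⟩
    · simp only [Prod.mk.injEq, decide_eq_false_iff_not]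
      rw [← Finset.card_union_of_disjoint hU, ← Finset.card_compl]
      congr 1; ext; simp
    · simp only [Prod.mk.injEq, decide_eq_false_iff_not, decide_eq_true_eq]
      congr 1; ext x; simp; exact fun h h' => hU1 x h' h
    · simp only [Prod.mk.injEq, decide_eq_false_iff_not, decide_eq_true_eq]
      congr 1; ext x; simp; exact hU1 x
    · simp only [Prod.mk.injEq, decide_eq_true_eq, Finset.card_eq_zero]
      ext x; simp; exact hU1 x
  obtain ⟨g, hg⟩ := exists_perm_of_fiber_card
    (fun x => ((decide (x ∈ B), decide (x ∈ B')) : Bool × Bool))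
    (fun x => ((decide (x ∈ C), decide (x ∈ C')) : Bool × Bool))
    (fun c => by rw [key B B' hd, key C C' hd', h, h'])
  refine ⟨g, fun x => ?_, fun x => ?_⟩
  · have := congrArg Prod.fst (hg x); simpa using this
  · have := congrArg Prod.snd (hg x); simpa using this

/-- `A` is an invariant set of `H`. -/
def Inv (H : Subgroup (Perm α)) (A : Finset α) : Prop := ∀ x ∈ H, ∀ a ∈ A, x a ∈ A

/-- Transitivity of a permutation group. -/
def Trans (H : Subgroup (Perm α)) : Prop := ∀ y z, ∃ x ∈ H, x y = z

/-- `B` is a block: an element of `H` mapping some point of `B` into `B` preserves `B`. -/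
def IsBlk (H : Subgroup (Perm α)) (B : Finset α) : Prop :=
  ∀ x ∈ H, ∀ a ∈ B, x a ∈ B → ∀ b ∈ B, x b ∈ B

/-- `H` is intransitive, with a nonempty invariant set of size at most `n / 2`. -/
def Intr (H : Subgroup (Perm α)) : Prop :=
  ∃ A : Finset α, A.Nonempty ∧ 2 * A.card ≤ Fintype.card α ∧ Inv H A

/-- `H` is transitive with a nontrivial block of size `a`. -/
def ImpB (H : Subgroup (Perm α)) (a : ℕ) : Prop :=
  Trans H ∧ ∃ B : Finset α, B.card = a ∧ 2 ≤ a ∧ 2 * a ≤ Fintype.card α ∧ IsBlk H B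

lemma Inv.iff {H : Subgroup (Perm α)} {A : Finset α} (h : Inv H A) {x : Perm α} (hx : x ∈ H)
    (a : α) : x a ∈ A ↔ a ∈ A :=
  ⟨fun ha => by simpa using h x⁻¹ (inv_mem hx) _ ha, h x hx a⟩

lemma IsBlk.iff {H : Subgroup (Perm α)} {B : Finset α} (h : IsBlk H B) {x : Perm α} (hx : x ∈ H)
    {a : α} (ha : a ∈ B) (hxa : x a ∈ B) (b : α) : x b ∈ B ↔ b ∈ B :=
  ⟨fun hb => by simpa using h x⁻¹ (inv_mem hx) _ hxa (by simpa using ha) _ hb, h x hx a ha hxa b⟩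

lemma Inv.conj {H : Subgroup (Perm α)} {A C : Finset α} (h : Inv H A) {g : Perm α}
    (hg : ∀ x, g x ∈ C ↔ x ∈ A) : Inv (conjSub g H) C := by
  intro x hx a ha
  rw [mem_conjSub] at hx
  have h1 : g⁻¹ a ∈ A := by rw [← hg]; simpa using ha
  have := h _ hx _ h1
  rw [← hg] at this
  simpa using this

lemma IsBlk.conj {H : Subgroup (Perm α)} {A C : Finset α} (h : IsBlk H A) {g : Perm α}
    (hg : ∀ x, g x ∈ C ↔ x ∈ A) : IsBlk (conjSub g H) C := by
  intro x hx a ha hxa b hb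
  rw [mem_conjSub] at hx
  have h1 : g⁻¹ a ∈ A := by rw [← hg]; simpa using ha
  have h2 : g⁻¹ b ∈ A := by rw [← hg]; simpa using hb
  have := h _ hx _ h1 (by rw [← hg]; simpa using hxa) _ h2
  rw [← hg] at this
  simpa using this

lemma Trans.conj {H : Subgroup (Perm α)} (h : Trans H) (g : Perm α) : Trans (conjSub g H) := by
  intro y z
  obtain ⟨x, hx, hxy⟩ := h (g⁻¹ y) (g⁻¹ z)
  exact ⟨g * x * g⁻¹, conj_mem_conjSub hx, by simp only [Perm.mul_apply, hxy]; simp⟩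

lemma IsBlk.mono {H K : Subgroup (Perm α)} {B : Finset α} (h : IsBlk H B) (hK : K ≤ H) :
    IsBlk K B := fun x hx => h x (hK hx)

lemma Inv.mono {H K : Subgroup (Perm α)} {B : Finset α} (h : Inv H B) (hK : K ≤ H) :
    Inv K B := fun x hx => h x (hK hx)

/-- The translate of a block by a group element that moves one of its points outside is disjoint
from the block. -/
lemma IsBlk.disjoint {H : Subgroup (Perm α)} {B : Finset α} (h : IsBlk H B) {x : Perm α}
    (hx : x ∈ H) {a : α} (ha : a ∈ B) (hxa : x a ∉ B) : Disjoint B (B.map x.toEmbedding) := by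
  rw [Finset.disjoint_left]
  intro b hb hb'
  rw [Finset.mem_map] at hb'
  obtain ⟨c, hc, rfl⟩ := hb'
  exact hxa (h x hx c hc hb a ha)

lemma IsBlk.translate {H : Subgroup (Perm α)} {B : Finset α} (h : IsBlk H B) {x : Perm α}
    (hx : x ∈ H) : IsBlk H (B.map x.toEmbedding) := by
  intro y hy a ha hya b hb
  rw [Finset.mem_map] at ha hya hb ⊢
  obtain ⟨a, ha, rfl⟩ := ha
  obtain ⟨a', ha', hya⟩ := hya
  obtain ⟨b, hb, rfl⟩ := hb
  refine ⟨x⁻¹ (y (x b)), ?_, by simp⟩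
  refine h (x⁻¹ * y * x) (mul_mem (mul_mem (inv_mem hx) hy) hx) a ha ?_ b hb
  have : x a' = y (x a) := hya
  simpa [← this] using ha'

/-- Every permutation group is intransitive, imprimitive or primitive. -/
lemma trichotomy (H : Subgroup (Perm α)) :
    Intr H ∨ (∃ a, ImpB H a) ∨ (Trans H ∧ MulAction.IsPreprimitive H α) := by
  classical
  by_cases hT : Trans H
  · right
    by_cases hP : MulAction.IsPreprimitive H α
    · exact Or.inr ⟨hT, hP⟩
    left
    have : MulAction.IsPretransitive H α := ⟨fun y z => by
      obtain ⟨x, hx, hxy⟩ := hT y z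
      exact ⟨⟨x, hx⟩, hxy⟩⟩
    have hB : ∃ B : Set α, MulAction.IsBlock H B ∧ ¬ MulAction.IsTrivialBlock B := by
      by_contra! hB
      exact hP ⟨fun {B} h => hB B h⟩
    obtain ⟨B, hB, hB'⟩ := hB
    have hB1 : ¬ B.Subsingleton := fun h => hB' (Or.inl h)
    have hB2 : B ≠ Set.univ := fun h => hB' (Or.inr h)
    have hblk : IsBlk H B.toFinset := by
      intro x hx a ha hxa b hb
      simp only [Set.mem_toFinset] at *
      have := (MulAction.isBlock_iff_smul_eq_of_mem.1 hB) (g := (⟨x, hx⟩ : H)) ha hxa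
      rw [← this]
      exact ⟨b, hb, rfl⟩
    rw [Set.not_subsingleton_iff] at hB1
    obtain ⟨a, ha, b, hb, hab⟩ := hB1
    obtain ⟨c, hc⟩ := (Set.ne_univ_iff_exists_notMem B).1 hB2
    obtain ⟨x, hx, rfl⟩ := hT a c
    refine ⟨_, hT, B.toFinset, rfl, ?_, ?_, hblk⟩
    · exact Finset.one_lt_card.2 ⟨a, by simpa using ha, b, by simpa using hb, hab⟩
    · have hd := hblk.disjoint hx (a := a) (by simpa using ha) (by simpa using hc)
      have := Finset.card_union_of_disjoint hd
      rw [Finset.card_map] at this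
      have h2 := Finset.card_le_univ (B.toFinset ∪ B.toFinset.map x.toEmbedding)
      omega
  · left
    unfold Trans at hT
    push Not at hT
    obtain ⟨y, z, hyz⟩ := hT
    set O : Finset α := Finset.univ.filter fun w => ∃ x ∈ H, x y = w with hO
    have hOinv : Inv H O := by
      intro x hx a ha
      simp only [hO, Finset.mem_filter, Finset.mem_univ, true_and] at ha ⊢
      obtain ⟨x', hx', rfl⟩ := ha
      exact ⟨x * x', mul_mem hx hx', rfl⟩
    have hy : y ∈ O := by simp only [hO, Finset.mem_filter, Finset.mem_univ, true_and]; exact ⟨1, one_mem _, rfl⟩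
    have hz : z ∉ O := by
      simp only [hO, Finset.mem_filter, Finset.mem_univ, true_and]
      push Not; exact hyz
    have hcard := Finset.card_compl O
    have hle := Finset.card_le_univ O
    by_cases h2 : 2 * O.card ≤ Fintype.card α
    · exact ⟨O, ⟨y, hy⟩, h2, hOinv⟩
    · refine ⟨Oᶜ, ⟨z, by simpa using hz⟩, by omega, fun x hx a ha => ?_⟩
      rw [Finset.mem_compl] at *
      rwa [hOinv.iff hx]

lemma Intr.conj_to {H : Subgroup (Perm α)} {A C : Finset α} (h : Inv H A)
    (hc : A.card = C.card) : ∃ g, Inv (conjSub g H) C := by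
  obtain ⟨g, hg⟩ := exists_perm_image hc
  exact ⟨g, h.conj hg⟩

lemma IsBlk.conj_to {H : Subgroup (Perm α)} {A C : Finset α} (h : IsBlk H A)
    (hc : A.card = C.card) : ∃ g, IsBlk (conjSub g H) C := by
  obtain ⟨g, hg⟩ := exists_perm_image hc
  exact ⟨g, h.conj hg⟩

/-- Any two disjoint sets of the right size belong to one block system of some conjugate of an
imprimitive group. -/
lemma ImpB.conj_to {H : Subgroup (Perm α)} {a : ℕ} (h : ImpB H a) {C C' : Finset α}
    (hC : C.card = a) (hC' : C'.card = a) (hd : Disjoint C C') :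
    ∃ g, IsBlk (conjSub g H) C ∧
      ∀ k ∈ conjSub g H, ∀ y ∈ C, k y ∈ C' → ∀ c ∈ C, k c ∈ C' := by
  obtain ⟨hT, B, hB, h2, h2n, hblk⟩ := h
  obtain ⟨b, hb⟩ : B.Nonempty := by rw [← Finset.card_pos]; omega
  have hlt : B.card < (Finset.univ : Finset α).card := by rw [Finset.card_univ]; omega
  obtain ⟨c, -, hc⟩ := Finset.exists_mem_notMem_of_card_lt_card hlt
  obtain ⟨x, hx, rfl⟩ := hT b c
  obtain ⟨g, hg, hg'⟩ := exists_perm_image₂ (B := B) (B' := B.map x.toEmbedding) (C := C) (C' := C')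
    (by omega) (by rw [Finset.card_map]; omega) (hblk.disjoint hx hb hc) hd
  have hgB := hblk.conj hg
  refine ⟨g, hgB, ?_⟩
  -- `t` carries `C` onto `C'`
  set t := g * x * g⁻¹ with ht
  have htH : t ∈ conjSub g H := conj_mem_conjSub hx
  have htC : ∀ c, t c ∈ C' ↔ c ∈ C := by
    intro c
    have h1 : t c = g (x (g⁻¹ c)) := rfl
    have h2 : c = g (g⁻¹ c) := by simp
    rw [h1, hg', h2, hg]
    simp
  intro k hk y hy hky c hc
  have h1 := hgB (t⁻¹ * k) (mul_mem (inv_mem htH) hk) y hy (by rw [← htC]; simpa using hky) c hc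
  rw [← htC] at h1
  simpa using h1

/-- Two disjoint sets containing prescribed points, meeting `S` in different numbers of points. -/
lemma exists_unbalanced {S : Finset α} {y y' p q : α} {a : ℕ} (hyy : y ≠ y') (hp : p ∈ S)
    (hpy : p ≠ y) (hpy' : p ≠ y') (hq : q ∉ S) (hqy : q ≠ y) (hqy' : q ≠ y') (ha : 2 ≤ a)
    (han : 2 * a ≤ Fintype.card α) :
    ∃ C C' : Finset α, C.card = a ∧ C'.card = a ∧ Disjoint C C' ∧ y ∈ C ∧ y' ∈ C' ∧
      (C ∩ S).card ≠ (C' ∩ S).card := by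
  have hpq : p ≠ q := by rintro rfl; exact hq hp
  have hcard : ({y, y', p, q} : Finset α).card = 4 := by
    rw [Finset.card_insert_of_notMem, Finset.card_insert_of_notMem, Finset.card_insert_of_notMem,
      Finset.card_singleton]
    · simpa using hpq
    · simpa using ⟨hpy'.symm, hqy'.symm⟩
    · simpa using ⟨hyy, hpy.symm, hqy.symm⟩
  obtain ⟨W, hW, hWc⟩ : ∃ W ⊆ ({y, y', p, q} : Finset α)ᶜ, W.card = 2 * (a - 2) :=
    Finset.exists_subset_card_eq (by rw [Finset.card_compl, hcard]; omega)
  obtain ⟨W1, hW1, hW1c⟩ : ∃ W1 ⊆ W, W1.card = a - 2 :=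
    Finset.exists_subset_card_eq (by omega)
  have hW2c : (W \ W1).card = a - 2 := by rw [Finset.card_sdiff_of_subset hW1]; omega
  set W2 := W \ W1
  have hn : ∀ w ∈ W, w ≠ y ∧ w ≠ y' ∧ w ≠ p ∧ w ≠ q := fun w hw => by simpa using hW hw
  have hn1 : ∀ w ∈ W1, w ≠ y ∧ w ≠ y' ∧ w ≠ p ∧ w ≠ q := fun w hw => hn w (hW1 hw)
  have hn2 : ∀ w ∈ W2, w ≠ y ∧ w ≠ y' ∧ w ≠ p ∧ w ≠ q :=
    fun w hw => hn w (Finset.sdiff_subset hw)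
  have hd12 : Disjoint W1 W2 := Finset.disjoint_sdiff
  have c1 : ∀ u v : α, ∀ V : Finset α, u ≠ v → u ∉ V → v ∉ V → V.card = a - 2 →
      (insert u (insert v V)).card = a := by
    intro u v V h1 h2 h3 h4
    rw [Finset.card_insert_of_notMem (by simp [h1, h2]), Finset.card_insert_of_notMem h3]; omega
  have n1 : y ∉ W1 ∧ y' ∉ W1 ∧ p ∉ W1 ∧ q ∉ W1 := by
    refine ⟨?_, ?_, ?_, ?_⟩ <;> intro h <;> have := hn1 _ h <;> simp at this
  have n2 : y ∉ W2 ∧ y' ∉ W2 ∧ p ∉ W2 ∧ q ∉ W2 := by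
    refine ⟨?_, ?_, ?_, ?_⟩ <;> intro h <;> have := hn2 _ h <;> simp at this
  have dd : ∀ u v : α, u ∉ W2 → v ∉ W1 → u ≠ v → u ≠ y' → v ≠ y →
      Disjoint (insert y (insert u W1)) (insert y' (insert v W2)) := by
    intro u v h1 h2 h3 h4 h5
    have n1' := n1.2.1
    have n2' := n2.1
    simp only [Finset.disjoint_insert_left, Finset.disjoint_insert_right, Finset.mem_insert]
    grind
  have key : ∀ u v : α, ∀ V : Finset α, u ≠ v → u ∉ V → v ∉ V →
      ((insert u (insert v V)) ∩ S).card =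
        (if u ∈ S then 1 else 0) + (if v ∈ S then 1 else 0) + (V ∩ S).card := by
    intro u v V h1 h2 h3
    have h2' : u ∉ insert v V ∩ S := by simp [h1, h2]
    have h3' : v ∉ V ∩ S := by simp [h3]
    by_cases hu : u ∈ S <;> by_cases hv : v ∈ S <;>
      simp only [hu, hv, Finset.insert_inter_of_mem, Finset.insert_inter_of_notMem, if_true,
        if_false, not_false_eq_true]
    · rw [Finset.card_insert_of_notMem, Finset.card_insert_of_notMem h3']; · ring
      simp [h1, h2]
    · rw [Finset.card_insert_of_notMem]; · ring
      simp [h2]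
    · rw [Finset.card_insert_of_notMem h3']; ring
    · ring
  by_cases hne : ((insert y (insert p W1)) ∩ S).card ≠ ((insert y' (insert q W2)) ∩ S).card
  · exact ⟨_, _, c1 _ _ _ hpy.symm n1.1 n1.2.2.1 hW1c, c1 _ _ _ hqy'.symm n2.2.1 n2.2.2.2 hW2c,
      dd p q n2.2.2.1 n1.2.2.2 hpq hpy' hqy, by simp, by simp, hne⟩
  · refine ⟨_, _, c1 _ _ _ hqy.symm n1.1 n1.2.2.2 hW1c, c1 _ _ _ hpy'.symm n2.2.1 n2.2.2.1 hW2c,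
      dd q p n2.2.2.2 n1.2.2.1 hpq.symm hqy' hpy, by simp, by simp, ?_⟩
    rw [key _ _ _ hpy.symm n1.1 n1.2.2.1, key _ _ _ hqy'.symm n2.2.1 n2.2.2.2] at hne
    rw [key _ _ _ hqy.symm n1.1 n1.2.2.2, key _ _ _ hpy'.symm n2.2.1 n2.2.2.1]
    simp only [hp, hq, if_true, if_false] at hne ⊢
    omega

end Types
end RegNum

/-! ### Counting orbits -/

namespace RegNum

set_option linter.unusedSectionVars false

open Equiv

section Orbits

variable {α : Type*} [Fintype α] [DecidableEq α]

/-- The relation of lying in the same orbit of `K`. -/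
def orbS (K : Subgroup (Perm α)) : Setoid α where
  r a b := ∃ k ∈ K, k a = b
  iseqv :=
    { refl := fun _ => ⟨1, one_mem _, rfl⟩
      symm := by rintro a b ⟨k, hk, rfl⟩; exact ⟨k⁻¹, inv_mem hk, by simp⟩
      trans := by
        rintro a b c ⟨k, hk, rfl⟩ ⟨l, hl, rfl⟩
        exact ⟨l * k, mul_mem hl hk, rfl⟩ }

/-- The number of orbits of `K`. -/
noncomputable def numOrb (K : Subgroup (Perm α)) : ℕ := Nat.card (Quotient (orbS K))

lemma orbS_iff {K : Subgroup (Perm α)} {a b : α} : (orbS K) a b ↔ ∃ k ∈ K, k a = b := Iff.rfl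

lemma numOrb_lt {K K' : Subgroup (Perm α)} (h : K' ≤ K) {y y' : α} (hy : ∃ k ∈ K, k y = y')
    (hy' : ¬ ∃ k ∈ K', k y = y') : numOrb K < numOrb K' := by
  by_contra! hle
  let f : Quotient (orbS K') → Quotient (orbS K) :=
    Quotient.map' id (by rintro a b ⟨k, hk, rfl⟩; exact ⟨k, h hk, rfl⟩)
  have hf : Function.Surjective f := by
    rintro ⟨a⟩; exact ⟨Quotient.mk _ a, rfl⟩
  have hb := hf.bijective_of_nat_card_le hle
  have : (Quotient.mk (orbS K') y) = Quotient.mk (orbS K') y' :=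
    hb.1 (Quotient.sound hy : Quotient.mk (orbS K) y = Quotient.mk (orbS K) y')
  exact hy' (Quotient.exact this)

lemma two_le_numOrb {K : Subgroup (Perm α)} {y y' : α} (h : ¬ ∃ k ∈ K, k y = y') :
    2 ≤ numOrb K := by
  have : Nontrivial (Quotient (orbS K)) :=
    ⟨Quotient.mk _ y, Quotient.mk _ y', fun he => h (Quotient.exact he)⟩
  exact Finite.one_lt_card

lemma three_le_numOrb {K : Subgroup (Perm α)} {x y z : α} (h1 : ¬ ∃ k ∈ K, k x = y)
    (h2 : ¬ ∃ k ∈ K, k x = z) (h3 : ¬ ∃ k ∈ K, k y = z) : 3 ≤ numOrb K := by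
  classical
  have := Fintype.ofFinite (Quotient (orbS K))
  rw [numOrb, Nat.card_eq_fintype_card, ← Finset.card_univ]
  refine Finset.two_lt_card.2 ⟨Quotient.mk _ x, Finset.mem_univ _, Quotient.mk _ y,
    Finset.mem_univ _, Quotient.mk _ z, Finset.mem_univ _, ?_, ?_, ?_⟩
  · exact fun he => h1 (Quotient.exact he)
  · exact fun he => h2 (Quotient.exact he)
  · exact fun he => h3 (Quotient.exact he)

lemma one_le_numOrb [Nonempty α] (K : Subgroup (Perm α)) : 1 ≤ numOrb K :=
  have : Nonempty (Quotient (orbS K)) := ⟨Quotient.mk _ (Classical.arbitrary α)⟩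
  Finite.card_pos

lemma eq_bot_of_card_le_numOrb {K : Subgroup (Perm α)} (h : Fintype.card α ≤ numOrb K) :
    K = ⊥ := by
  rw [Subgroup.eq_bot_iff_forall]
  intro k hk
  have hs : Function.Surjective (Quotient.mk (orbS K)) := Quotient.mk_surjective
  have hb := hs.bijective_of_nat_card_le (by rw [Nat.card_eq_fintype_card]; exact h)
  ext a
  exact (hb.1 (Quotient.sound ⟨k, hk, rfl⟩ : Quotient.mk (orbS K) a = Quotient.mk (orbS K) (k a))).symm

/-- A set meeting every orbit has at least as many points as there are orbits. -/
lemma numOrb_le_of_represent {K : Subgroup (Perm α)} (T : Finset α)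
    (h : ∀ y, ∃ k ∈ K, k y ∈ T) : numOrb K ≤ T.card := by
  have hs : Function.Surjective (fun t : T => Quotient.mk (orbS K) (t : α)) := by
    rintro ⟨y⟩
    obtain ⟨k, hk, hky⟩ := h y
    exact ⟨⟨k y, hky⟩, Quotient.sound ⟨k⁻¹, inv_mem hk, by simp⟩⟩
  have := Nat.card_le_card_of_surjective _ hs
  simpa [numOrb] using this

/-- With at least `n - 1` orbits, `K` contains at most one nontrivial element. -/
lemma card_le_two_of_numOrb {K : Subgroup (Perm α)} (h : Fintype.card α ≤ numOrb K + 1) :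
    Nat.card K ≤ 2 := by
  have key : ∀ y z : α, ∀ k ∈ K, ∀ l ∈ K, k y ≠ y → l z ≠ z → z = y ∨ z = k y := by
    intro y z k hk l hl hky hlz
    by_contra! hne
    have hT : ∃ T : Finset α, T.card + 2 ≤ Fintype.card α ∧ ∀ w, ∃ k ∈ K, k w ∈ T := by
      by_cases hly : l z = y
      · refine ⟨({z, k y} : Finset α)ᶜ, ?_, fun w => ?_⟩
        · rw [Finset.card_compl, Finset.card_pair hne.2]
          have := Finset.card_le_univ ({z, k y} : Finset α)
          rw [Finset.card_pair hne.2] at this; omega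
        · by_cases hw : w = z
          · exact ⟨l, hl, by subst hw; rw [hly]; simp [hne.1.symm, hky.symm]⟩
          by_cases hw' : w = k y
          · exact ⟨k⁻¹, inv_mem hk, by subst hw'; simp [hne.1.symm, hky.symm]⟩
          · exact ⟨1, one_mem _, by simp [hw, hw']⟩
      · refine ⟨({z, y} : Finset α)ᶜ, ?_, fun w => ?_⟩
        · rw [Finset.card_compl, Finset.card_pair hne.1]
          have := Finset.card_le_univ ({z, y} : Finset α)
          rw [Finset.card_pair hne.1] at this; omega
        · by_cases hw : w = z
          · exact ⟨l, hl, by subst hw; simp [hlz, hly]⟩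
          by_cases hw' : w = y
          · exact ⟨k, hk, by subst hw'; simp [hky, hne.2.symm]⟩
          · exact ⟨1, one_mem _, by simp [hw, hw']⟩
    obtain ⟨T, hT, hT'⟩ := hT
    have := numOrb_le_of_represent T hT'
    omega
  have huniq : ∀ k ∈ K, ∀ l ∈ K, k ≠ 1 → l ≠ 1 → k = l := by
    intro k hk l hl hk1 hl1
    obtain ⟨y, hy⟩ : ∃ y, k y ≠ y := by
      by_contra! hc; exact hk1 (Equiv.ext hc)
    obtain ⟨z, hz⟩ : ∃ z, l z ≠ z := by
      by_contra! hc; exact hl1 (Equiv.ext hc)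
    have hyz := key z y l hl k hk hz hy
    have hall : ∀ m ∈ K, m ≠ 1 → m = swap y (k y) := by
      intro m hm hm1
      have h1 : ∀ w, m w ≠ w → w = y ∨ w = k y := fun w hw => key y w k hk m hm hy hw
      have h2 : ∀ w, m w ≠ w → m w = y ∨ m w = k y :=
        fun w hw => h1 _ (fun h => hw (m.injective h))
      ext w
      by_cases hw : m w = w
      · have : w ≠ y ∧ w ≠ k y := by
          obtain ⟨v, hv⟩ : ∃ v, m v ≠ v := by
            by_contra! hc; exact hm1 (Equiv.ext hc)
          have a1 := h1 v hv
          have a2 := h2 v hv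
          have a3 : m (m v) ≠ m v := fun h => hv (m.injective h)
          constructor <;> rintro rfl <;> grind
        rw [hw, swap_apply_of_ne_of_ne this.1 this.2]
      · rcases h1 w hw with rfl | rfl
        · rw [swap_apply_left]; exact (h2 _ hw).resolve_left hw
        · rw [swap_apply_right]; exact (h2 _ hw).resolve_right hw
    rw [hall l hl hl1]; exact hall k hk hk1
  by_contra! hc
  have := Fintype.ofFinite K
  rw [Nat.card_eq_fintype_card, ← Finset.card_univ] at hc
  obtain ⟨a, -, b, -, c, -, hab, hac, hbc⟩ := Finset.two_lt_card.1 hc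
  have h3 : ∀ u v : K, u ≠ v → u ≠ 1 → v ≠ 1 → False := by
    intro u v huv hu hv
    exact huv (Subtype.ext (huniq u u.2 v v.2 (by simpa using hu) (by simpa using hv)))
  by_cases ha : a = 1
  · subst ha; exact h3 b c hbc hab.symm hac.symm
  by_cases hb : b = 1
  · subst hb; exact h3 a c hac ha hbc.symm
  · exact h3 a b hab ha hb

/-- `H` is intransitive or imprimitive. -/
def NonPrim (H : Subgroup (Perm α)) : Prop := Intr H ∨ ∃ a, ImpB H a

lemma Intr.separate {H : Subgroup (Perm α)} (hH : Intr H) {y y' : α} (h : y ≠ y') :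
    ∃ g, ∀ k ∈ conjSub g H, k y ≠ y' := by
  obtain ⟨A, hA, hAc, hinv⟩ := hH
  have hpos := hA.card_pos
  have h2 : A.card ≤ ({y'}ᶜ : Finset α).card := by
    rw [Finset.card_compl, Finset.card_singleton]; omega
  obtain ⟨C, hyC, hC, hCc⟩ := Finset.exists_subsuperset_card_eq
    (s := {y}) (t := ({y'}ᶜ : Finset α)) (n := A.card) (by simpa using h.symm) (by simpa using hpos) h2
  obtain ⟨g, hg⟩ := Intr.conj_to hinv hCc.symm
  refine ⟨g, fun k hk hky => ?_⟩
  have h1 := hg k hk y (hyC (by simp))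
  rw [hky] at h1
  have := hC h1
  simp at this

/-- Suppose every `k ∈ K` with `k y = y'` preserves `S`. If two blocks of one system contain `y` and
`y'` and meet `S` in different numbers of points, then no element of `K` preserving the system maps
`y` to `y'`; the points `p ∈ S` and `q ∉ S` make such a choice of blocks possible. -/
lemma ImpB.separate {H K : Subgroup (Perm α)} {a : ℕ} (hH : ImpB H a) {S : Finset α} {y y' p q : α}
    (hyy : y ≠ y') (hp : p ∈ S) (hpy : p ≠ y) (hpy' : p ≠ y') (hq : q ∉ S) (hqy : q ≠ y)
    (hqy' : q ≠ y') (hS : ∀ k ∈ K, k y = y' → ∀ s, k s ∈ S ↔ s ∈ S) :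
    ∃ g, ∀ k ∈ K ⊓ conjSub g H, k y ≠ y' := by
  obtain ⟨hT, B, hB, h2, h2n, hblk⟩ := hH
  obtain ⟨C, C', hC, hC', hd, hyC, hyC', hne⟩ :=
    exists_unbalanced hyy hp hpy hpy' hq hqy hqy' h2 h2n
  obtain ⟨g, -, hg⟩ := ImpB.conj_to ⟨hT, B, hB, h2, h2n, hblk⟩ hC hC' hd
  refine ⟨g, fun k hk hky => hne ?_⟩
  have hmap : C.map k.toEmbedding = C' := by
    apply Finset.eq_of_subset_of_card_le
    · intro c hc
      obtain ⟨d, hd', rfl⟩ := Finset.mem_map.1 hc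
      exact hg k hk.2 y hyC (by rwa [hky]) d hd'
    · rw [Finset.card_map]; omega
  rw [← hmap, ← Finset.card_map k.toEmbedding]
  congr 1
  ext c
  have := hS k hk.1 hky (k⁻¹ c)
  simp only [Finset.mem_map, Finset.mem_inter, Equiv.coe_toEmbedding]
  constructor
  · rintro ⟨d, ⟨hd, hdS⟩, rfl⟩
    exact ⟨⟨d, hd, rfl⟩, (hS k hk.1 hky d).2 hdS⟩
  · rintro ⟨⟨d, hd, rfl⟩, hdS⟩
    exact ⟨d, ⟨hd, (hS k hk.1 hky d).1 hdS⟩, rfl⟩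

/-- A nontrivial intransitive group gains an orbit when intersected with a suitable conjugate of
a group that is not primitive. -/
lemma NonPrim.split {H K : Subgroup (Perm α)} (hH : NonPrim H) (hn : 5 ≤ Fintype.card α)
    (hK : K ≠ ⊥) (hK2 : 2 ≤ numOrb K) : ∃ g, numOrb K + 1 ≤ numOrb (K ⊓ conjSub g H) := by
  classical
  suffices hs : ∃ y y' g, (∃ k ∈ K, k y = y') ∧ ∀ k ∈ K ⊓ conjSub g H, k y ≠ y' by
    obtain ⟨y, y', g, h1, h2⟩ := hs
    exact ⟨g, numOrb_lt inf_le_left h1 (by push Not; exact h2)⟩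
  obtain ⟨⟨x, hx⟩, hx'⟩ := Subgroup.ne_bot_iff_exists_ne_one.1 hK
  have hx1 : x ≠ 1 := by simpa [Subtype.ext_iff] using hx'
  obtain ⟨y, hy⟩ : ∃ y, x y ≠ y := by
    by_contra! hc; exact hx1 (Equiv.ext hc)
  rcases hH with hH | ⟨a, hH⟩
  · obtain ⟨g, hg⟩ := hH.separate hy.symm
    exact ⟨y, x y, g, ⟨x, hx, rfl⟩, fun k hk => hg k hk.2⟩
  set O : α → Finset α := fun z => Finset.univ.filter fun w => ∃ k ∈ K, k z = w with hO
  have memO : ∀ z w, w ∈ O z ↔ ∃ k ∈ K, k z = w := fun z w => by simp [hO]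
  have hOinv : ∀ z, Inv K (O z) := by
    intro z k hk a ha
    rw [memO] at ha ⊢
    obtain ⟨l, hl, rfl⟩ := ha
    exact ⟨k * l, mul_mem hk hl, rfl⟩
  have hself : ∀ z, z ∈ O z := fun z => (memO z z).2 ⟨1, one_mem _, rfl⟩
  have hnot : ∀ z, ∃ w, w ∉ O z := by
    intro z
    by_contra! hc
    have := numOrb_le_of_represent (K := K) {z} (fun w => by
      obtain ⟨k, hk, rfl⟩ := (memO z w).1 (hc w)
      exact ⟨k⁻¹, inv_mem hk, by simp⟩)
    simp at this; omega
  have hyO : x y ∈ O y := (memO _ _).2 ⟨x, hx, rfl⟩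
  -- a `K`-invariant set `S` and two points of one orbit, as needed by `ImpB.separate`
  have fin : ∀ z w p q : α, ∀ S : Finset α, Inv K S → (∃ k ∈ K, k z = w) → z ≠ w → p ∈ S →
      p ≠ z → p ≠ w → q ∉ S → q ≠ z → q ≠ w →
      ∃ y y' g, (∃ k ∈ K, k y = y') ∧ ∀ k ∈ K ⊓ conjSub g H, k y ≠ y' := by
    intro z w p q S hS hzw hne h1 h2 h3 h4 h5 h6
    obtain ⟨g, hg⟩ := hH.separate (K := K) hne h1 h2 h3 h4 h5 h6 (fun k hk _ s => hS.iff hk s)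
    exact ⟨z, w, g, hzw, hg⟩
  have hbig : ∀ z, 3 ≤ (O z).card →
      ∃ y y' g, (∃ k ∈ K, k y = y') ∧ ∀ k ∈ K ⊓ conjSub g H, k y ≠ y' := by
    intro z hz
    obtain ⟨w, hw, hwz⟩ := Finset.exists_mem_ne (s := O z) (by omega) z
    obtain ⟨p, hp, hp'⟩ := Finset.exists_mem_notMem_of_card_lt_card
      (s := {z, w}) (t := O z) (by have := Finset.card_le_two (a := z) (b := w); omega)
    obtain ⟨q, hq⟩ := hnot z
    simp only [Finset.mem_insert, Finset.mem_singleton, not_or] at hp'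
    refine fin z w p q (O z) (hOinv z) ((memO _ _).1 hw) hwz.symm hp hp'.1 hp'.2 hq ?_ ?_
    · rintro rfl; exact hq (hself _)
    · rintro rfl; exact hq hw
  by_cases h3 : 3 ≤ (O y).card
  · exact hbig y h3
  obtain ⟨z, hz⟩ := hnot y
  by_cases h4 : 3 ≤ (O z).card
  · exact hbig z h4
  obtain ⟨q, -, hq⟩ := Finset.exists_mem_notMem_of_card_lt_card
    (s := O y ∪ O z) (t := Finset.univ)
    (by have := Finset.card_union_le (O y) (O z); rw [Finset.card_univ]; omega)
  rw [Finset.mem_union, not_or] at hq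
  refine fin y (x y) z q (O z) (hOinv z) ⟨x, hx, rfl⟩ hy.symm (hself z) ?_ ?_ hq.2 ?_ ?_
  · rintro rfl; exact hz (hself _)
  · rintro rfl; exact hz hyO
  · rintro rfl; exact hq.1 (hself _)
  · rintro rfl; exact hq.1 hyO

section

variable {ι : Type*} [DecidableEq ι]

/-- Each group adds an orbit until there are as many orbits as points. -/
lemma regS_of_nonPrim {H : ι → Subgroup (Perm α)} (hn : 5 ≤ Fintype.card α) (s : Finset ι) :
    (∀ i ∈ s, NonPrim (H i)) → ∀ K : Subgroup (Perm α), 2 ≤ numOrb K →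
      Fintype.card α ≤ numOrb K + s.card → RegS H K s := by
  induction s using Finset.induction_on with
  | empty =>
    intro _ K _ hc
    exact RegS.of_bot (eq_bot_of_card_le_numOrb (by simpa using hc))
  | insert i s hi ih =>
    intro hs K h2 hc
    by_cases hb : K = ⊥
    · exact RegS.of_bot hb
    obtain ⟨g, hg⟩ := (hs i (Finset.mem_insert_self i s)).split hn hb h2
    refine RegS.step (Finset.mem_insert_self i s) g ?_
    rw [Finset.erase_insert hi]
    rw [Finset.card_insert_of_notMem hi] at hc
    exact ih (fun j hj => hs j (Finset.mem_insert_of_mem hj)) _ (by omega) (by omega)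

/-- All groups nonprimitive, one of them intransitive. -/
lemma regS_of_intr {H : ι → Subgroup (Perm α)} (hn : 5 ≤ Fintype.card α) {s : Finset ι}
    (hs : ∀ i ∈ s, NonPrim (H i)) (hc : s.card + 1 = Fintype.card α) {i : ι} (hi : i ∈ s)
    (hI : Intr (H i)) : RegS H ⊤ s := by
  obtain ⟨y, y', hy⟩ : ∃ y y' : α, y ≠ y' := by
    have : Nontrivial α := Fintype.one_lt_card_iff_nontrivial.1 (by omega)
    exact exists_pair_ne α
  obtain ⟨g, hg⟩ := hI.separate hy
  refine RegS.step hi g ?_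
  have h2 : 2 ≤ numOrb (⊤ ⊓ conjSub g (H i)) :=
    two_le_numOrb (y := y) (y' := y') (by push Not; exact fun k hk => hg k hk.2)
  exact regS_of_nonPrim hn _ (fun j hj => hs j (Finset.mem_of_mem_erase hj)) _ h2
    (by rw [Finset.card_erase_of_mem hi]; omega)

end

end Orbits
end RegNum

/-! ### Imprimitive groups -/

namespace RegNum

set_option linter.unusedSectionVars false

open Equiv

section Imprimitive

variable {α : Type*} [Fintype α] [DecidableEq α] {ι : Type*} [DecidableEq ι]

/-- If every orbit of `K` meets the block `B` but not every orbit of `K' ≤ K` does, then each orbit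
of `K` splits into at least two orbits of `K'`. -/
lemma two_mul_numOrb_le {L K K' : Subgroup (Perm α)} {B : Finset α} (hB : IsBlk L B) (hKL : K ≤ L)
    (hK' : K' ≤ K) (hT : ∀ y, ∃ k ∈ K, k y ∈ B) (hT' : ¬ ∀ y, ∃ k ∈ K', k y ∈ B) :
    2 * numOrb K ≤ numOrb K' := by
  push Not at hT'
  obtain ⟨y0, hy0⟩ := hT'
  obtain ⟨k0, hk0, hk0B⟩ := hT y0
  have hrep : ∀ c : Quotient (orbS K), ∃ z ∈ B, Quotient.mk (orbS K) z = c := by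
    rintro ⟨y⟩
    obtain ⟨k, hk, hky⟩ := hT y
    exact ⟨k y, hky, Quotient.sound ⟨k⁻¹, inv_mem hk, by simp⟩⟩
  choose z hzB hz using hrep
  let f : Quotient (orbS K) × Bool → Quotient (orbS K') := fun p =>
    Quotient.mk _ (if p.2 then z p.1 else k0⁻¹ (z p.1))
  have hno : ∀ c d, ∀ k ∈ K', k (k0⁻¹ (z c)) ≠ z d := by
    intro c d k hk h
    have h1 := hB (k * k0⁻¹) (hKL (mul_mem (hK' hk) (inv_mem hk0))) (z c) (hzB c)
      (by rw [Perm.mul_apply, h]; exact hzB d) (k0 y0) hk0B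
    exact hy0 k hk (by simpa using h1)
  have hf : Function.Injective f := by
    rintro ⟨c, b⟩ ⟨d, b'⟩ h
    obtain ⟨k, hk, hkz⟩ := Quotient.exact h
    have hcd : c = d := by
      rw [← hz c, ← hz d]
      apply Quotient.sound
      cases b <;> cases b' <;> simp only [if_true, if_false, Bool.false_eq_true] at hkz
      · exact ⟨k0 * k * k0⁻¹, mul_mem (mul_mem hk0 (hK' hk)) (inv_mem hk0), by
          simp only [Perm.mul_apply, hkz]; simp⟩
      · exact ⟨k * k0⁻¹, mul_mem (hK' hk) (inv_mem hk0), by simpa using hkz⟩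
      · exact ⟨k0 * k, mul_mem hk0 (hK' hk), by simp [hkz]⟩
      · exact ⟨k, hK' hk, hkz⟩
    subst hcd
    cases b <;> cases b' <;> simp only [if_true, if_false, Bool.false_eq_true] at hkz
    · rfl
    · exact absurd hkz (hno _ _ k hk)
    · refine absurd ?_ (hno c c k⁻¹ (inv_mem hk))
      rw [← hkz]; simp
    · rfl
  have := Nat.card_le_card_of_injective f hf
  simp only [Nat.card_prod, Nat.card_eq_fintype_card (α := Bool), Fintype.card_bool] at this
  unfold numOrb
  omega

/-- The induction keeps `j` orbits, and one to spare unless every orbit of `K` still meets the block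
`B`. As long as every orbit meets `B`, there are at most `|B| ≤ n / 2` orbits, so this stops before
there are `n` of them; the spare orbit, gained by `two_mul_numOrb_le` when it stops, makes room for
the possible group in `w`, of which nothing but core-freeness is known. -/
lemma regS_of_block_aux {H : ι → Subgroup (Perm α)} (hH : ∀ i, (H i).normalCore = ⊥)
    (hn : 5 ≤ Fintype.card α) {L : Subgroup (Perm α)} {B : Finset α} (hB : IsBlk L B)
    (hBn : 2 * B.card ≤ Fintype.card α) {w : Finset ι} (hw : w.card ≤ 1) (v : Finset ι) :
    (∀ i ∈ v, ∃ a, ImpB (H i) a) → Disjoint v w → ∀ K ≤ L, ∀ j, 2 ≤ j → j ≤ numOrb K →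
      ((∀ y, ∃ k ∈ K, k y ∈ B) ∨ j + 1 ≤ numOrb K) →
      Fintype.card α ≤ j + v.card + w.card + 1 → RegS H K (v ∪ w) := by
  induction v using Finset.induction_on with
  | empty =>
    intro _ _ K hK j h2 hj hT hc
    rw [Finset.empty_union]
    rw [Finset.card_empty] at hc
    rcases hT with hT | hT
    · have := numOrb_le_of_represent B hT
      omega
    · apply regS_of_card_lt hH
      rcases Nat.lt_or_ge 0 w.card with h0 | h0
      · have := card_le_two_of_numOrb (K := K) (by omega)
        have h1 : w.card = 1 := by omega
        rw [h1]; omega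
      · have h1 : w.card = 0 := by omega
        have := eq_bot_of_card_le_numOrb (K := K) (by omega)
        subst this; simp
  | insert i v hi ih =>
    intro hv hd K hK j h2 hj hT hc
    by_cases hb : K = ⊥
    · exact RegS.of_bot hb
    obtain ⟨g, hg⟩ := NonPrim.split (H := H i) (Or.inr (hv i (Finset.mem_insert_self i v))) hn hb
      (by omega)
    rw [Finset.disjoint_insert_left] at hd
    refine RegS.step (Finset.mem_union_left _ (Finset.mem_insert_self i v)) g ?_
    rw [Finset.insert_union, Finset.erase_insert (by simp [hi, hd.1])]
    rw [Finset.card_insert_of_notMem hi] at hc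
    refine ih (fun j hj => hv j (Finset.mem_insert_of_mem hj)) hd.2 _ (inf_le_left.trans hK)
      (j + 1) (by omega) (by omega) ?_ (by omega)
    by_cases hT' : ∀ y, ∃ k ∈ K ⊓ conjSub g (H i), k y ∈ B
    · exact Or.inl hT'
    · right
      rcases hT with hT | hT
      · have := two_mul_numOrb_le hB hK inf_le_left hT hT'
        omega
      · omega

/-- Enough imprimitive groups, one of them with blocks of size at least three, together with at
most one further group. -/
lemma regS_of_block {H : ι → Subgroup (Perm α)} (hH : ∀ i, (H i).normalCore = ⊥)
    (hn : 5 ≤ Fintype.card α) {v w : Finset ι} (hv : ∀ i ∈ v, ∃ a, ImpB (H i) a)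
    (hd : Disjoint v w) (hw : w.card ≤ 1) {i j : ι} (hi : i ∈ v) (hj : j ∈ v) (hij : i ≠ j) {a : ℕ}
    (ha : 3 ≤ a) (hI : ImpB (H i) a) (hc : Fintype.card α ≤ v.card + w.card + 1) :
    RegS H ⊤ (v ∪ w) := by
  obtain ⟨hT, B, hBc, -, h2n, hB⟩ := hI
  have hB1 : IsBlk (⊤ ⊓ conjSub 1 (H i)) B := (hB.conj (C := B) (fun x => Iff.rfl)).mono inf_le_right
  obtain ⟨y, y', p, hy, hy', hp, hyy, hyp, hyp'⟩ := Finset.two_lt_card_iff.1 (by omega : 2 < B.card)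
  obtain ⟨q, -, hq⟩ := Finset.exists_mem_notMem_of_card_lt_card
    (s := B) (t := Finset.univ) (by rw [Finset.card_univ]; omega)
  obtain ⟨b, hb⟩ := hv j hj
  obtain ⟨g, hg⟩ := hb.separate (K := ⊤ ⊓ conjSub 1 (H i)) hyy hp hyp.symm hyp'.symm hq
    (by rintro rfl; exact hq hy) (by rintro rfl; exact hq hy')
    (fun k hk hky s => hB1.iff hk hy (by rwa [hky]) s)
  refine RegS.step (Finset.mem_union_left _ hi) 1 (RegS.step (i := j) ?_ g ?_)
  · simp [hj, hij.symm]
  have hjw := Finset.disjoint_left.1 hd hj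
  have hiw := Finset.disjoint_left.1 hd hi
  have he : ((v ∪ w).erase i).erase j = (v.erase i).erase j ∪ w := by
    ext x; simp only [Finset.mem_erase, Finset.mem_union]
    constructor
    · tauto
    · rintro (h | h)
      · tauto
      · exact ⟨by rintro rfl; exact hjw h, by rintro rfl; exact hiw h, Or.inr h⟩
  rw [he]
  have hle : (v.erase i).erase j ⊆ v := (Finset.erase_subset _ _).trans (Finset.erase_subset _ _)
  have hcard : ((v.erase i).erase j).card + 2 = v.card := by
    have h1 : 1 < v.card := Finset.one_lt_card.2 ⟨i, hi, j, hj, hij⟩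
    rw [Finset.card_erase_of_mem (by simp [hj, hij.symm]), Finset.card_erase_of_mem hi]; omega
  refine regS_of_block_aux hH hn hB1 (by omega) hw _ (fun x hx => hv x (hle hx))
    (hd.mono_left hle) _ inf_le_left 2 le_rfl ?_ ?_ (by omega)
  · exact two_le_numOrb (y := y) (y' := y') (by push Not; exact hg)
  · by_cases hT' : ∀ z, ∃ k ∈ ⊤ ⊓ conjSub 1 (H i) ⊓ conjSub g (H j), k z ∈ B
    · exact Or.inl hT'
    right
    push Not at hT'
    obtain ⟨z, hz⟩ := hT'
    refine three_le_numOrb (x := y) (y := y') (z := z) (by push Not; exact hg) ?_ ?_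
    · rintro ⟨k, hk, rfl⟩; exact hz k⁻¹ (inv_mem hk) (by simpa using hy)
    · rintro ⟨k, hk, rfl⟩; exact hz k⁻¹ (inv_mem hk) (by simpa using hy')

/-- A transitive group with a block of size two centralizes a fixed-point-free involution. -/
lemma ImpB.exists_involution {H : Subgroup (Perm α)} (h : ImpB H 2) :
    ∃ σ : Perm α, (∀ y, σ y ≠ y) ∧ σ ^ 2 = 1 ∧ ∀ x ∈ H, ∀ y, x (σ y) = σ (x y) := by
  obtain ⟨hT, B, hB, -, -, hblk⟩ := h
  obtain ⟨b, b', hbb, rfl⟩ := Finset.card_eq_two.1 hB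
  have hmem : ∀ x ∈ H, (x b = b → x b' = b') ∧ (x b = b' → x b' = b) := by
    intro x hx
    constructor
    · intro hxb
      have := hblk x hx b (by simp) (by simp [hxb]) b' (by simp)
      simp only [Finset.mem_insert, Finset.mem_singleton] at this
      refine this.resolve_left fun h => hbb ?_
      exact x.injective (hxb.trans h.symm)
    · intro hxb
      have := hblk x hx b (by simp) (by simp [hxb]) b' (by simp)
      simp only [Finset.mem_insert, Finset.mem_singleton] at this
      refine this.resolve_right fun h => hbb ?_
      exact x.injective (hxb.trans h.symm)
  choose x hx hxy using fun y => hT b y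
  set f : α → α := fun y => x y b' with hf
  have hwd : ∀ u ∈ H, f (u b) = u b' := by
    intro u hu
    have := (hmem (u⁻¹ * x (u b)) (mul_mem (inv_mem hu) (hx _))).1 (by simp [hxy])
    have h2 := congrArg u this
    simpa using h2
  obtain ⟨t, ht, htb⟩ := hT b b'
  have htb' := (hmem t ht).2 htb
  have hinv : Function.Involutive f := by
    intro y
    have h1 : f y = (x y * t) b := by simp [hf, htb]
    rw [h1, hwd _ (mul_mem (hx y) ht)]
    simp [htb', hxy]
  refine ⟨hinv.toPerm f, fun y hy => ?_, ?_, fun u hu y => ?_⟩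
  · have h1 : x y b' = y := hy
    exact hbb ((x y).injective ((hxy y).trans h1.symm))
  · ext y
    simp [pow_two, hinv y]
  · have h1 := hwd (u * x y) (mul_mem hu (hx y))
    simp only [Perm.mul_apply, hxy] at h1
    exact h1.symm

lemma isConj_of_involution {σ τ : Perm α} (h1 : ∀ y, σ y ≠ y) (h2 : σ ^ 2 = 1)
    (h3 : ∀ y, τ y ≠ y) (h4 : τ ^ 2 = 1) : IsConj σ τ := by
  have key : ∀ ρ : Perm α, (∀ y, ρ y ≠ y) → ρ ^ 2 = 1 →
      ρ.cycleType = Multiset.replicate (Fintype.card α / 2) 2 := by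
    intro ρ h h'
    have : Fact (Nat.Prime 2) := ⟨Nat.prime_two⟩
    rw [Perm.pow_prime_eq_one_iff] at h'
    have h5 := Multiset.eq_replicate.2 ⟨rfl, h'⟩
    have h6 := ρ.sum_cycleType
    rw [h5, Multiset.sum_replicate] at h6
    have h7 : ρ.support = Finset.univ := by
      ext y; simp [h y]
    rw [h7, Finset.card_univ, smul_eq_mul] at h6
    rw [h5, ← h6]; simp
  rw [Perm.isConj_iff_cycleType_eq, key σ h1 h2, key τ h3 h4]

end Imprimitive

section TwoMatchings

variable {n : ℕ} {ι : Type*} [DecidableEq ι]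

/-- Two perfect matchings of `Fin n` forming a Hamiltonian cycle. -/
lemma exists_matchings (hn : 2 ∣ n) : ∃ σ τ : Perm (Fin n),
    (∀ y, σ y ≠ y) ∧ σ ^ 2 = 1 ∧ (∀ y, τ y ≠ y) ∧ τ ^ 2 = 1 ∧
    ∀ y z : Fin n, y.val + 1 = z.val → (σ y = z ∧ σ z = y) ∨ (τ y = z ∧ τ z = y) := by
  let f : Fin n → Fin n := fun y =>
    if h : y.val % 2 = 0 then ⟨y.val + 1, by have := y.2; omega⟩ else ⟨y.val - 1, by have := y.2; omega⟩
  let f' : Fin n → Fin n := fun y =>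
    if h : y.val % 2 = 0 then (if h0 : y.val = 0 then ⟨n - 1, by have := y.2; omega⟩
      else ⟨y.val - 1, by have := y.2; omega⟩)
      else (if h1 : y.val + 1 = n then ⟨0, by omega⟩ else ⟨y.val + 1, by have := y.2; omega⟩)
  have e : ∀ y, (f y).val = if y.val % 2 = 0 then y.val + 1 else y.val - 1 := by
    intro y; simp only [f]; split_ifs <;> rfl
  have e' : ∀ y, (f' y).val = if y.val % 2 = 0 then (if y.val = 0 then n - 1 else y.val - 1)
      else (if y.val + 1 = n then 0 else y.val + 1) := by
    intro y; simp only [f']; split_ifs <;> rfl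
  have hf : Function.Involutive f := by
    intro y; apply Fin.ext
    have := y.2
    rw [e, e]; split_ifs <;> omega
  have hf' : Function.Involutive f' := by
    intro y; apply Fin.ext
    have := y.2
    have a1 := e' y
    have a2 := e' (f' y)
    split_ifs at a1 a2 <;> omega
  refine ⟨hf.toPerm f, hf'.toPerm f', ?_, ?_, ?_, ?_, ?_⟩
  · intro y h
    have h1 := congrArg Fin.val h
    simp only [Function.Involutive.coe_toPerm, e] at h1
    split_ifs at h1 <;> omega
  · ext1 y; simp [pow_two, hf y]
  · intro y h
    have h1 := congrArg Fin.val h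
    simp only [Function.Involutive.coe_toPerm, e'] at h1
    split_ifs at h1 <;> omega
  · ext1 y; simp [pow_two, hf' y]
  · intro y z hyz
    simp only [Function.Involutive.coe_toPerm, Fin.ext_iff, e, e']
    have := z.2
    split_ifs <;> omega

lemma exists_conj_centralizes {H : Subgroup (Perm (Fin n))} (h : ImpB H 2) {τ : Perm (Fin n)}
    (h1 : ∀ y, τ y ≠ y) (h2 : τ ^ 2 = 1) :
    ∃ g, ∀ x ∈ conjSub g H, ∀ y, x (τ y) = τ (x y) := by
  obtain ⟨σ, hσ, hσ2, hc⟩ := h.exists_involution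
  obtain ⟨g, hg⟩ := isConj_iff.1 (isConj_of_involution hσ hσ2 h1 h2)
  refine ⟨g, fun x hx y => ?_⟩
  rw [mem_conjSub] at hx
  have := hc _ hx (g⁻¹ y)
  have h3 := congrArg g this
  rw [← hg]
  simpa using h3

/-- Two groups with blocks of size two are conjugated so as to centralize the two matchings of a
Hamiltonian cycle. Their intersection centralizes a transitive group, so it has order at most `n`,
and halving it with each further group suffices since `n < 2 ^ (n - 2)`. -/
lemma regS_of_two_matchings {H : ι → Subgroup (Perm (Fin n))} (hH : ∀ i, (H i).normalCore = ⊥)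
    (hn : 5 ≤ n) {s : Finset ι} (hs : s.card + 1 = n) {i j : ι} (hi : i ∈ s) (hj : j ∈ s)
    (hij : i ≠ j) (hIi : ImpB (H i) 2) (hIj : ImpB (H j) 2) : RegS H ⊤ s := by
  have h2 : 2 ∣ n := by
    obtain ⟨σ, hσ, hσ2, -⟩ := hIi.exists_involution
    have : Fact (Nat.Prime 2) := ⟨Nat.prime_two⟩
    have h3 := Perm.pow_prime_eq_one_iff.1 hσ2
    have h4 := σ.sum_cycleType
    have h7 : σ.support = Finset.univ := by
      ext y; simp [hσ y]
    rw [h7, Finset.card_univ, Fintype.card_fin] at h4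
    rw [← h4]
    exact Multiset.dvd_sum fun c hc => (h3 c hc).symm ▸ dvd_rfl
  obtain ⟨σ, τ, s1, s2, t1, t2, hst⟩ := exists_matchings h2
  obtain ⟨g, hg⟩ := exists_conj_centralizes hIi s1 s2
  obtain ⟨g', hg'⟩ := exists_conj_centralizes hIj t1 t2
  refine RegS.step hi g (RegS.step (i := j) (by simp [hj, hij.symm]) g' ?_)
  set K := ⊤ ⊓ conjSub g (H i) ⊓ conjSub g' (H j)
  have hcard : Nat.card K ≤ n := by
    have p0 : Fin n := ⟨0, by omega⟩
    have hinj : Function.Injective (fun k : K => (k : Perm (Fin n)) p0) := by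
      intro k l hkl
      have hkl' : (l⁻¹ * k : Perm (Fin n)) p0 = p0 := by
        have : (k : Perm (Fin n)) p0 = (l : Perm (Fin n)) p0 := hkl
        simp [this]
      have hmem : (l⁻¹ * k : Perm (Fin n)) ∈ K := mul_mem (inv_mem l.2) k.2
      set u := (l⁻¹ * k : Perm (Fin n))
      have hF : ∀ y z : Fin n, y.val + 1 = z.val → (u y = y ↔ u z = z) := by
        intro y z hyz
        rcases hst y z hyz with ⟨h1, h2⟩ | ⟨h1, h2⟩
        · have e1 := hg u hmem.1.2 y
          have e2 := hg u hmem.1.2 z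
          rw [h1] at e1; rw [h2] at e2
          constructor
          · intro h; rw [h] at e1; rw [e1, h1]
          · intro h; rw [h] at e2; rw [e2, h2]
        · have e1 := hg' u hmem.2 y
          have e2 := hg' u hmem.2 z
          rw [h1] at e1; rw [h2] at e2
          constructor
          · intro h; rw [h] at e1; rw [e1, h1]
          · intro h; rw [h] at e2; rw [e2, h2]
      have hall : ∀ k (hk : k < n), (u ⟨k, hk⟩ = ⟨k, hk⟩ ↔ u ⟨0, by omega⟩ = ⟨0, by omega⟩) := by
        intro k
        induction k with
        | zero => intro _; rfl
        | succ k ih => intro hk; rw [← ih (by omega)]; exact (hF ⟨k, by omega⟩ ⟨k + 1, hk⟩ rfl).symm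
      have hu : u = 1 := by
        ext1 y
        exact (hall y.1 y.2).2 ((hall p0.1 p0.2).1 hkl')
      exact Subtype.ext (inv_mul_eq_one.1 hu).symm
    have := Nat.card_le_card_of_injective _ hinj
    simpa using this
  apply regS_of_card_lt hH
  refine lt_of_le_of_lt hcard ?_
  rw [Finset.card_erase_of_mem (by simp [hj, hij.symm]), Finset.card_erase_of_mem hi]
  obtain ⟨m, rfl⟩ : ∃ m, n = m + 6 := ⟨n - 6, by omega⟩
  have : s.card - 1 - 1 + 1 = m + 4 := by omega
  rw [this, pow_add]
  have := Nat.lt_two_pow_self (n := m)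
  omega

end TwoMatchings
end RegNum

/-! ### Primitive groups and Bochert's argument -/

namespace RegNum

set_option linter.unusedSectionVars false

open Equiv

section Good

variable {α : Type*} [Fintype α] [DecidableEq α]

/-- Every nontrivial element moves at least four points. -/
def NS (H : Subgroup (Perm α)) : Prop := ∀ x ∈ H, x ≠ 1 → 4 ≤ x.support.card

lemma support_conj_card (g x : Perm α) : (g⁻¹ * x * g).support.card = x.support.card := by
  have := Perm.card_support_conj (σ := g⁻¹) (τ := x)
  simpa using this

lemma NS.conj {H : Subgroup (Perm α)} (h : NS H) (g : Perm α) : NS (conjSub g H) := by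
  intro x hx hx1
  rw [mem_conjSub] at hx
  rw [← support_conj_card g x]
  refine h _ hx fun h1 => hx1 ?_
  have : x = g * (g⁻¹ * x * g) * g⁻¹ := by simp [mul_assoc]
  rw [this, h1]; simp

/-- A primitive core-free group contains no transposition and no 3-cycle. -/
lemma ns_of_primitive {H : Subgroup (Perm α)} (hn : 5 ≤ Fintype.card α)
    (hH : H.normalCore = ⊥) (hP : MulAction.IsPreprimitive H α) : NS H := by
  intro x hx hx1
  by_contra! hlt
  have h0 : 2 ≤ x.support.card := Perm.two_le_card_support_of_ne_one hx1
  have hnt : Nontrivial α := Fintype.one_lt_card_iff_nontrivial.1 (by omega)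
  rcases (by omega : x.support.card = 2 ∨ x.support.card = 3) with h2 | h3
  · have hs := Perm.card_support_eq_two.1 h2
    have := Perm.subgroup_eq_top_of_isPreprimitive_of_isSwap_mem hP x hs hx
    subst this
    have h4 : (⊤ : Subgroup (Perm α)) ≤ (⊤ : Subgroup (Perm α)).normalCore :=
      Subgroup.normal_le_normalCore.2 le_rfl
    rw [hH] at h4
    exact hx1 (by simpa using h4 (Subgroup.mem_top x))
  · have hc := card_support_eq_three_iff.1 h3
    have := Perm.alternatingGroup_le_of_isPreprimitive_of_isThreeCycle_mem hP hc hx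
    have h4 : alternatingGroup α ≤ H.normalCore := Subgroup.normal_le_normalCore.2 this
    rw [hH] at h4
    exact hx1 (by simpa using h4 hc.mem_alternatingGroup)

/-- Two elements whose supports meet in a single point have a commutator moving exactly three
points. -/
lemma NS.no_single_meet {H : Subgroup (Perm α)} (h : NS H) {x y : Perm α} (hx : x ∈ H) (hy : y ∈ H)
    {c : α} (hxc : x c ≠ c) (hyc : y c ≠ c) (hd : ∀ a, a ≠ c → x a = a ∨ y a = a) : False := by
  have hmem : x * y * x⁻¹ * y⁻¹ ∈ H :=
    mul_mem (mul_mem (mul_mem hx hy) (inv_mem hx)) (inv_mem hy)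
  have hne : x * y * x⁻¹ * y⁻¹ ≠ 1 := by
    intro h1
    have h2 : x * y = y * x := by
      have := congrArg (fun t => t * (y * x)) h1
      simpa [mul_assoc] using this
    have h3 : y⁻¹ c ≠ c := fun h => hyc (by rw [Perm.inv_eq_iff_eq] at h; exact h.symm)
    have h4 : x (y⁻¹ c) = y⁻¹ c := by
      refine (hd _ h3).resolve_right fun h5 => ?_
      simp at h5
      exact h3 h5.symm
    have h5 := congrArg (fun t : Perm α => t (y⁻¹ c)) h2
    simp only [Perm.mul_apply, h4] at h5
    simp at h5
    exact hxc h5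
  have hsub : (x * y * x⁻¹ * y⁻¹).support ⊆ {c, x c, y c} := by
    intro a ha
    by_contra hn
    simp only [Finset.mem_insert, Finset.mem_singleton, not_or] at hn
    obtain ⟨n1, n2, n3⟩ := hn
    apply Perm.mem_support.1 ha
    simp only [Perm.mul_apply]
    by_cases hya : y a = a
    · have h1 : y⁻¹ a = a := by rw [Perm.inv_eq_iff_eq]; exact hya.symm
      rw [h1]
      by_cases hxa : x a = a
      · have h2 : x⁻¹ a = a := by rw [Perm.inv_eq_iff_eq]; exact hxa.symm
        rw [h2, hya, hxa]
      · have h2 : x⁻¹ a ≠ c := fun h => n2 (by rw [Perm.inv_eq_iff_eq] at h; exact h)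
        have h3 : y (x⁻¹ a) = x⁻¹ a := by
          refine (hd _ h2).resolve_left fun h5 => hxa ?_
          have h6 : x (x⁻¹ a) = a := by simp
          rw [h6] at h5
          exact Perm.eq_inv_iff_eq.1 h5
        rw [h3]; simp
    · have hxa : x a = a := (hd a n1).resolve_right hya
      have h2 : y⁻¹ a ≠ c := fun h => n3 (by rw [Perm.inv_eq_iff_eq] at h; exact h)
      have h3 : x (y⁻¹ a) = y⁻¹ a := by
        refine (hd _ h2).resolve_right fun h5 => hya ?_
        have h6 : y (y⁻¹ a) = a := by simp
        rw [h6] at h5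
        exact Perm.eq_inv_iff_eq.1 h5
      have h4 : x⁻¹ (y⁻¹ a) = y⁻¹ a := by rw [Perm.inv_eq_iff_eq]; exact h3.symm
      rw [h4]; simp [hxa]
  have := h _ hmem hne
  have h3 := (Finset.card_le_card hsub).trans Finset.card_le_three
  omega

/-- No nontrivial element of `K` is supported on `Δ`. -/
def Good (K : Subgroup (Perm α)) (Δ : Finset α) : Prop :=
  ∀ x ∈ K, (∀ a, a ∉ Δ → x a = a) → x = 1

lemma Good.mono {K K' : Subgroup (Perm α)} {Δ Δ' : Finset α} (h : Good K Δ) (hK : K' ≤ K)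
    (hΔ : Δ' ⊆ Δ) : Good K' Δ' :=
  fun x hx ha => h x (hK hx) fun a h' => ha a fun h'' => h' (hΔ h'')

lemma Good.conj_to {K : Subgroup (Perm α)} {Δ R : Finset α} (h : Good K Δ)
    (hc : R.card ≤ Δ.card) : ∃ g, Good (conjSub g K) R := by
  obtain ⟨Δ', hΔ', hc'⟩ := Finset.exists_subset_card_eq hc
  obtain ⟨g, hg⟩ := exists_perm_image hc'
  refine ⟨g, fun x hx hxa => ?_⟩
  rw [mem_conjSub] at hx
  have h1 := h _ hx fun a ha => by
    have : g a ∉ R := fun h' => ha (hΔ' ((hg a).1 h'))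
    simp [hxa _ this]
  have : x = g * (g⁻¹ * x * g) * g⁻¹ := by simp [mul_assoc]
  rw [this, h1]; simp

/-- Bochert's argument: some set of at least half of the points supports no nontrivial element. -/
lemma NS.exists_good {H : Subgroup (Perm α)} (h : NS H) :
    ∃ Δ : Finset α, Good H Δ ∧ Fintype.card α ≤ 2 * Δ.card := by
  classical
  have hne : ((Finset.univ : Finset (Finset α)).filter fun Δ => Good H Δ).Nonempty :=
    ⟨∅, by
      simp only [Finset.mem_filter, Finset.mem_univ, true_and]
      exact fun x _ hx => Equiv.ext fun a => hx a (by simp)⟩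
  obtain ⟨Δ, hΔ, hmax⟩ := Finset.exists_max_image _ Finset.card hne
  simp only [Finset.mem_filter, Finset.mem_univ, true_and] at hΔ hmax
  refine ⟨Δ, hΔ, ?_⟩
  by_contra! hlt
  have hc : ¬ Good H Δᶜ := fun hg => by
    have := hmax _ hg
    rw [Finset.card_compl] at this; omega
  unfold Good at hc
  push Not at hc
  obtain ⟨y, hy, hya, hy1⟩ := hc
  obtain ⟨c, hc⟩ : ∃ c, y c ≠ c := by
    by_contra! h'; exact hy1 (Equiv.ext h')
  have hcΔ : c ∉ Δ := fun h' => hc (hya c (by simpa using h'))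
  have hi : ¬ Good H (insert c Δ) := fun hg => by
    have := hmax _ hg
    rw [Finset.card_insert_of_notMem hcΔ] at this; omega
  unfold Good at hi
  push Not at hi
  obtain ⟨x, hx, hxa, hx1⟩ := hi
  have hxc : x c ≠ c := by
    intro h'
    refine hx1 (hΔ x hx fun a ha => ?_)
    by_cases hac : a = c
    · rw [hac, h']
    · exact hxa a (by simp [hac, ha])
  refine h.no_single_meet hx hy hxc hc fun a hac => ?_
  by_cases ha : a ∈ Δ
  · exact Or.inr (hya a (by simpa using ha))
  · exact Or.inl (hxa a (by simp [hac, ha]))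

/-- The symmetric group on `S`, as the group of permutations fixing all points outside `S`. -/
def symOn (S : Finset α) : Subgroup (Perm α) where
  carrier := {x | ∀ a, a ∉ S → x a = a}
  mul_mem' := by
    intro x y hx hy a ha
    rw [Perm.mul_apply, hy a ha, hx a ha]
  one_mem' := fun _ _ => rfl
  inv_mem' := by
    intro x hx a ha
    rw [Perm.inv_eq_iff_eq, hx a ha]

lemma mem_symOn {S : Finset α} {x : Perm α} : x ∈ symOn S ↔ ∀ a, a ∉ S → x a = a := Iff.rfl

lemma symOn_apply_mem {S : Finset α} {x : Perm α} (hx : x ∈ symOn S) {a : α} :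
    x a ∈ S ↔ a ∈ S := by
  constructor
  · intro h
    by_contra ha
    rw [hx a ha] at h; exact ha h
  · intro h
    by_contra ha
    have := x.injective (hx _ ha)
    rw [this] at ha; exact ha h

lemma good_of_kill {K H : Subgroup (Perm α)} {E : Finset α} (h : Kills H (K ⊓ symOn E)) :
    ∃ g, Good (K ⊓ conjSub g H) E := by
  rw [kills_iff] at h
  obtain ⟨g, hg⟩ := h
  exact ⟨g, fun x hx hxa => hg x ⟨hx.1, hxa⟩ hx.2⟩

lemma good_univ {K : Subgroup (Perm α)} (h : Good K Finset.univ) : K = ⊥ := by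
  rw [Subgroup.eq_bot_iff_forall]
  exact fun x hx => h x hx (by simp)

/-- The orbit of `c` under `M`. -/
noncomputable def orbF (M : Subgroup (Perm α)) (c : α) : Finset α :=
  by classical exact Finset.univ.filter fun a => ∃ m ∈ M, m c = a

lemma mem_orbF {M : Subgroup (Perm α)} {c a : α} : a ∈ orbF M c ↔ ∃ m ∈ M, m c = a := by
  simp [orbF]

lemma self_mem_orbF {M : Subgroup (Perm α)} {c : α} : c ∈ orbF M c :=
  mem_orbF.2 ⟨1, one_mem _, rfl⟩

lemma orbF_inv {M : Subgroup (Perm α)} {c : α} : Inv M (orbF M c) := by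
  intro x hx a ha
  rw [mem_orbF] at ha ⊢
  obtain ⟨m, hm, rfl⟩ := ha
  exact ⟨x * m, mul_mem hx hm, rfl⟩

/-- The stabilizer of `c` in `M` is trivial, so that `M` acts regularly on the orbit of `c`. -/
def Free (M : Subgroup (Perm α)) (c : α) : Prop := ∀ x ∈ M, x c = c → x = 1

lemma Free.mono {M M' : Subgroup (Perm α)} {c : α} (h : Free M c) (hM : M' ≤ M) : Free M' c :=
  fun x hx => h x (hM hx)

lemma Free.eq {M : Subgroup (Perm α)} {c : α} (h : Free M c) {x y : Perm α} (hx : x ∈ M)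
    (hy : y ∈ M) (hxy : x c = y c) : x = y := by
  have := h (y⁻¹ * x) (mul_mem (inv_mem hy) hx) (by simp [hxy])
  exact (inv_mul_eq_one.1 this).symm

lemma Free.moves {M : Subgroup (Perm α)} {c : α} (h : Free M c) {x : Perm α} (hx : x ∈ M)
    (hx1 : x ≠ 1) {a : α} (ha : a ∈ orbF M c) : x a ≠ a := by
  obtain ⟨m, hm, rfl⟩ := mem_orbF.1 ha
  intro hxa
  have := h (m⁻¹ * x * m) (mul_mem (mul_mem (inv_mem hm) hx) hm) (by simp [hxa])
  apply hx1
  have h2 : x = m * (m⁻¹ * x * m) * m⁻¹ := by simp [mul_assoc]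
  rw [h2, this]; simp

lemma Free.of_mem {M : Subgroup (Perm α)} {c a : α} (h : Free M c) (ha : a ∈ orbF M c) :
    Free M a := fun x hx hxa => by
  by_contra h1
  exact h.moves hx h1 ha hxa

lemma Free.card {M : Subgroup (Perm α)} {c : α} (h : Free M c) :
    (orbF M c).card = Nat.card M := by
  have : Function.Bijective (fun m : M => (⟨(m : Perm α) c, mem_orbF.2 ⟨m, m.2, rfl⟩⟩ : orbF M c)) := by
    constructor
    · intro x y hxy
      exact Subtype.ext (h.eq x.2 y.2 (by simpa using hxy))
    · rintro ⟨a, ha⟩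
      obtain ⟨m, hm, rfl⟩ := mem_orbF.1 ha
      exact ⟨⟨m, hm⟩, rfl⟩
  have h2 := Nat.card_congr (Equiv.ofBijective _ this)
  rw [h2]; simp

lemma free_of_good {K : Subgroup (Perm α)} {Δ : Finset α} (h : Good K Δ) (c : α) :
    Free (K ⊓ symOn (insert c Δ)) c := by
  intro x hx hxc
  refine h x hx.1 fun a ha => ?_
  by_cases hac : a = c
  · rw [hac, hxc]
  · exact hx.2 a (by simp [ha, hac])

lemma orbF_subset {M : Subgroup (Perm α)} {c : α} {E : Finset α} (hM : M ≤ symOn E) (hc : c ∈ E) :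
    orbF M c ⊆ E := by
  intro a ha
  obtain ⟨m, hm, rfl⟩ := mem_orbF.1 ha
  exact (symOn_apply_mem (hM hm)).2 hc

lemma card_le_of_free {M : Subgroup (Perm α)} {c : α} {E : Finset α} (h : Free M c)
    (hM : M ≤ symOn E) (hc : c ∈ E) : Nat.card M ≤ E.card := by
  rw [← h.card]; exact Finset.card_le_card (orbF_subset hM hc)

/-- A set `A` meeting the orbit of `c` in a prescribed set `Q`. -/
lemma exists_set_meeting {R Q : Finset α} (hQ : Q ⊆ R) {k : ℕ} (h1 : Q.card ≤ k)
    (h2 : k + R.card ≤ Fintype.card α + Q.card) {D : Finset α} (hD : Disjoint D R)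
    (h3 : Q.card + D.card ≤ k) : ∃ A : Finset α, A.card = k ∧ A ∩ R = Q ∧ D ⊆ A := by
  have hDR : D ⊆ Rᶜ := fun x hx => by simpa using Finset.disjoint_left.1 hD hx
  have hRc := Finset.card_compl R
  have hRle := Finset.card_le_univ R
  obtain ⟨C, hDC, hCR, hC⟩ := Finset.exists_subsuperset_card_eq hDR (n := k - Q.card)
    (by omega) (by omega)
  have hdis : Disjoint Q C := by
    rw [Finset.disjoint_left]
    intro x hx hxC
    have := hCR hxC
    simp only [Finset.mem_compl] at this
    exact this (hQ hx)
  refine ⟨Q ∪ C, ?_, ?_, hDC.trans Finset.subset_union_right⟩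
  · rw [Finset.card_union_of_disjoint hdis]; omega
  · ext x
    have h4 : x ∈ C → x ∉ R := fun h => by simpa using hCR h
    have h5 : x ∈ Q → x ∈ R := fun h => hQ h
    simp only [Finset.mem_inter, Finset.mem_union]; tauto

lemma kills_of_set {H M : Subgroup (Perm α)} {c : α} {Q A : Finset α}
    (hA : A ∩ orbF M c = Q) (hQ : ∀ x ∈ M, (∀ q ∈ Q, x q ∈ Q) → x = 1) {g : Perm α}
    (hg : ∀ x ∈ M, x ∈ conjSub g H → ∀ a ∈ A, x a ∈ A) : Kills H M := by
  rw [kills_iff]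
  refine ⟨g, fun x hx hxg => hQ x hx fun q hq => ?_⟩
  rw [← hA, Finset.mem_inter] at hq ⊢
  exact ⟨hg x hx hxg q hq.1, orbF_inv x hx q hq.2⟩

/-- An intransitive group kills `M`, by a conjugate whose invariant set meets the regular orbit of
`M` in a set `Q` with trivial setwise stabilizer. -/
lemma Intr.kills {H M : Subgroup (Perm α)} {c : α} {A Q : Finset α} (hI : Inv H A)
    (hQR : Q ⊆ orbF M c) (hQ : ∀ x ∈ M, (∀ q ∈ Q, x q ∈ Q) → x = 1) (h1 : Q.card ≤ A.card)
    (h2 : A.card + (orbF M c).card ≤ Fintype.card α + Q.card) : Kills H M := by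
  obtain ⟨A', hA', hAQ, -⟩ := exists_set_meeting hQR h1 h2 (D := ∅) (by simp) (by simpa using h1)
  obtain ⟨g, hg⟩ := Intr.conj_to hI hA'.symm
  exact kills_of_set hAQ hQ (g := g) fun x _ hxg => hg x hxg

/-- The same for a group with a block, placing a fixed point of `M` into the block. -/
lemma IsBlk.kills {H M : Subgroup (Perm α)} {c e : α} {B Q : Finset α} (hI : IsBlk H B)
    (hQR : Q ⊆ orbF M c) (hQ : ∀ x ∈ M, (∀ q ∈ Q, x q ∈ Q) → x = 1) (h1 : Q.card + 1 ≤ B.card)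
    (h2 : B.card + (orbF M c).card ≤ Fintype.card α + Q.card) (he : e ∉ orbF M c)
    (heM : ∀ x ∈ M, x e = e) : Kills H M := by
  obtain ⟨A', hA', hAQ, hD⟩ := exists_set_meeting hQR (by omega) h2 (D := {e}) (by simpa using he)
    (by simpa using h1)
  obtain ⟨g, hg⟩ := hI.conj_to hA'.symm
  have heA : e ∈ A' := hD (by simp)
  exact kills_of_set hAQ hQ (g := g) fun x hx hxg => hg x hxg e heA (by rwa [heM x hx])

lemma free_singleton {M : Subgroup (Perm α)} {c : α} (h : Free M c) :
    ∀ x ∈ M, (∀ q ∈ ({c} : Finset α), x q ∈ ({c} : Finset α)) → x = 1 := by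
  intro x hx hq
  exact h x hx (by simpa using hq)

lemma kills_of_intr {H M : Subgroup (Perm α)} {c : α} (hI : Intr H) (h : Free M c)
    (hr : 2 * Nat.card M ≤ Fintype.card α + 2) : Kills H M := by
  obtain ⟨A, hA, hA2, hinv⟩ := hI
  have := hA.card_pos
  refine Intr.kills hinv (c := c) (Q := {c}) (by simpa using self_mem_orbF) (free_singleton h)
    (by simpa using this) ?_
  rw [h.card, Finset.card_singleton]; omega

lemma kills_of_imp {H M : Subgroup (Perm α)} {c e : α} {a : ℕ} (hI : ImpB H a) (h : Free M c)
    (hr : 2 * Nat.card M ≤ Fintype.card α + 2) (he : e ∉ orbF M c)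
    (heM : ∀ x ∈ M, x e = e) : Kills H M := by
  obtain ⟨-, B, hB, h2, h2n, hblk⟩ := hI
  refine IsBlk.kills hblk (c := c) (e := e) (Q := {c}) (by simpa using self_mem_orbF)
    (free_singleton h) (by simpa [hB] using h2) ?_ he heM
  rw [h.card, Finset.card_singleton]; omega

end Good
end RegNum

/-! ### Counting conjugates over a regular orbit -/

namespace RegNum

set_option linter.unusedSectionVars false

open Equiv

section Prim

variable {α : Type*} [Fintype α] [DecidableEq α]

lemma Kills.of_conj {G : Type*} [Group G] {H M : Subgroup G} {g : G}
    (h : Kills (conjSub g H) M) : Kills H M := by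
  obtain ⟨k, hk⟩ := h
  rw [conjSub_mul] at hk
  exact ⟨k * g, hk⟩

/-- Two conjugates of `x` by permutations of `R` agree off `R`; if both lie in `H`, and no nontrivial
element of `H` is supported on `R`, they are equal. -/
lemma conj_eq_of_good {H : Subgroup (Perm α)} {R : Finset α} (hg : Good H R) {x u v : Perm α}
    (hx : ∀ a, x a ∈ R ↔ a ∈ R) (hu : u ∈ symOn R) (hv : v ∈ symOn R)
    (hxu : u⁻¹ * x * u ∈ H) (hxv : v⁻¹ * x * v ∈ H) : u⁻¹ * x * u = v⁻¹ * x * v := by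
  have hu' := inv_mem hu
  have hv' := inv_mem hv
  have key : ∀ {w : Perm α}, w ∈ symOn R → ∀ a, a ∉ R → (w⁻¹ * x * w) a = x a := by
    intro w hw a ha
    simp only [Perm.mul_apply]
    rw [hw a ha, inv_mem hw _ (by rwa [hx])]
  have := hg ((v⁻¹ * x * v)⁻¹ * (u⁻¹ * x * u)) (mul_mem (inv_mem hxv) hxu) fun a ha => by
    rw [Perm.mul_apply, key hu a ha, Perm.inv_eq_iff_eq, key hv a ha]
  exact (inv_mul_eq_one.1 this).symm

lemma swap_mem_symOn {R : Finset α} {a b : α} (ha : a ∈ R) (hb : b ∈ R) :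
    swap a b ∈ symOn R := fun _ hc =>
  swap_apply_of_ne_of_ne (fun h => hc (h ▸ ha)) (fun h => hc (h ▸ hb))

lemma orbF_iff {M : Subgroup (Perm α)} {c : α} {x : Perm α} (hx : x ∈ M) (a : α) :
    x a ∈ orbF M c ↔ a ∈ orbF M c := by
  refine ⟨fun h => ?_, orbF_inv x hx a⟩
  simpa using orbF_inv x⁻¹ (inv_mem hx) _ h

/-- If `R` has at least five points, a fixed point free `x` on `R` has `|R|` pairwise distinct
conjugates under the symmetric group on `R`. -/
lemma exists_distinct_conj {M : Subgroup (Perm α)} {c : α} (hf : Free M c)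
    (h5 : 5 ≤ (orbF M c).card) {x : Perm α} (hx : x ∈ M) (hx1 : x ≠ 1) :
    ∃ w : α → Perm α, (∀ d ∈ orbF M c, w d ∈ symOn (orbF M c)) ∧
      ∀ d ∈ orbF M c, ∀ d' ∈ orbF M c, w d * x * (w d)⁻¹ = w d' * x * (w d')⁻¹ → d = d' := by
  classical
  set R := orbF M c
  have hc : c ∈ R := self_mem_orbF
  have hβ : x c ∈ R := orbF_inv x hx c hc
  have hβc : x c ≠ c := hf.moves hx hx1 hc
  obtain ⟨p, hp, hpn⟩ : ∃ p ∈ R, p ∉ ({c, x c} : Finset α) := by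
    apply Finset.exists_mem_notMem_of_card_lt_card
    exact lt_of_le_of_lt Finset.card_le_two (by omega)
  obtain ⟨q, hq, hqn⟩ : ∃ q ∈ R, q ∉ ({c, x c, p, x p} : Finset α) := by
    apply Finset.exists_mem_notMem_of_card_lt_card
    exact lt_of_le_of_lt Finset.card_le_four (by omega)
  simp only [Finset.mem_insert, Finset.mem_singleton, not_or] at hpn hqn
  have hxp : x p ≠ p := hf.moves hx hx1 hp
  set w : α → Perm α := fun d => if d = c then swap p q else swap (x c) d with hw
  have hwc : w c = swap p q := by simp [hw]
  have hwd : ∀ d, d ≠ c → w d = swap (x c) d := fun d hd => by simp [hw, hd]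
  have hval : ∀ d, d ≠ c → (w d * x * (w d)⁻¹) c = d := by
    intro d hd
    rw [hwd d hd]
    simp [Perm.mul_apply, swap_apply_of_ne_of_ne hβc.symm (Ne.symm hd)]
  have hvalc : (w c * x * (w c)⁻¹) c = x c := by
    rw [hwc]
    simp [Perm.mul_apply, swap_apply_of_ne_of_ne (Ne.symm hpn.1) (Ne.symm hqn.1),
      swap_apply_of_ne_of_ne (Ne.symm hpn.2) (Ne.symm hqn.2.1)]
  have key : ∀ d, d ≠ c → w d * x * (w d)⁻¹ ≠ w c * x * (w c)⁻¹ := by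
    intro d hd h
    have h1 := hval d hd
    rw [h, hvalc] at h1
    have h2 : w d = 1 := by rw [hwd d hd, h1, swap_self]; rfl
    rw [h2] at h
    have h3 := congrArg (fun t : Perm α => t q) h
    rw [hwc] at h3
    simp only [Perm.mul_apply, one_mul, inv_one, mul_one, swap_inv, swap_apply_right] at h3
    rw [swap_apply_of_ne_of_ne hxp (Ne.symm hqn.2.2.2)] at h3
    exact hqn.2.2.1 (x.injective h3)
  refine ⟨w, fun d hd => ?_, fun d hd d' hd' h => ?_⟩
  · by_cases h : d = c
    · rw [h, hwc]; exact swap_mem_symOn hp hq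
    · rw [hwd d h]; exact swap_mem_symOn hβ hd
  · by_cases h1 : d = c <;> by_cases h2 : d' = c
    · rw [h1, h2]
    · subst h1; exact absurd h.symm (key d' h2)
    · subst h2; exact absurd h (key d h1)
    · rw [← hval d h1]
      rw [h]
      exact hval _ h2

/-- Each nontrivial element of `M` is conjugated into `H` by at most a proportion `1 / |M|` of the
permutations of the regular orbit, and there are fewer than `|M|` such elements, so that some
permutation avoids all of them. -/
lemma kills_of_good_five {H M : Subgroup (Perm α)} {c : α} (hf : Free M c)
    (h5 : 5 ≤ Nat.card M) (hg : Good H (orbF M c)) : Kills H M := by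
  classical
  by_contra hk
  rw [kills_iff] at hk
  push Not at hk
  set R := orbF M c
  have hR : R.card = Nat.card M := hf.card
  let S : Finset (Perm α) := Finset.univ.filter fun u => u ∈ symOn R
  let U : Perm α → Finset (Perm α) := fun x => S.filter fun u => u⁻¹ * x * u ∈ H
  let M' : Finset (Perm α) := Finset.univ.filter fun x => x ∈ M ∧ x ≠ 1
  have hM' : M'.card + 1 = Nat.card M := by
    have h1 : (insert 1 M') = Finset.univ.filter fun x => x ∈ M := by
      ext x
      simp only [M', Finset.mem_insert, Finset.mem_filter, Finset.mem_univ, true_and]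
      by_cases h : x = 1
      · simp [h]
      · simp [h]
    have h2 : (insert 1 M').card = M'.card + 1 := Finset.card_insert_of_notMem (by simp [M'])
    rw [← h2, h1, Nat.card_eq_fintype_card, Fintype.card_subtype]
  have hU : ∀ x ∈ M', R.card * (U x).card ≤ S.card := by
    intro x hx
    simp only [M', Finset.mem_filter, Finset.mem_univ, true_and] at hx
    obtain ⟨w, hw, hinj⟩ := exists_distinct_conj hf (by rw [hf.card]; exact h5) hx.1 hx.2
    rw [← Finset.card_product]
    refine Finset.card_le_card_of_injOn (fun t => w t.1 * t.2) ?_ ?_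
    · rintro ⟨d, u⟩ hdu
      simp only [Finset.coe_product, Set.mem_prod, Finset.mem_coe] at hdu
      have hu : u ∈ symOn R := by
        have := (Finset.mem_filter.1 hdu.2).1
        simpa [S] using this
      simp only [S, Finset.coe_filter, Finset.mem_univ, true_and, Set.mem_ofPred_eq]
      exact mul_mem (hw d hdu.1) hu
    · rintro ⟨d, u⟩ hdu ⟨d', u'⟩ hdu' h
      simp only [Finset.coe_product, Set.mem_prod, Finset.mem_coe, U, S, Finset.mem_filter,
        Finset.mem_univ, true_and] at hdu hdu' h
      have h1 := conj_eq_of_good hg (orbF_iff hx.1) hdu.2.1 hdu'.2.1 hdu.2.2 hdu'.2.2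
      have h2 : w d * x * (w d)⁻¹ = w d' * x * (w d')⁻¹ := by
        have e1 : w d = w d' * u' * u⁻¹ := by rw [← h]; simp
        have e2 : x = u * (u'⁻¹ * x * u') * u⁻¹ := by rw [← h1]; simp [mul_assoc]
        rw [e1]
        nth_rewrite 1 [e2]
        simp [mul_assoc]
      have h3 := hinj d hdu.1 d' hdu'.1 h2
      subst h3
      simpa using h
  have hS : S ⊆ M'.biUnion U := by
    intro u hu
    obtain ⟨x, hx, hxu, hx1⟩ := hk u
    rw [mem_conjSub] at hxu
    simp only [Finset.mem_biUnion, M', U, Finset.mem_filter, Finset.mem_univ, true_and]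
    exact ⟨x, ⟨hx, hx1⟩, hu, hxu⟩
  have h1 : S.card ≤ ∑ x ∈ M', (U x).card := (Finset.card_le_card hS).trans Finset.card_biUnion_le
  have h2 : R.card * S.card ≤ M'.card * S.card := by
    calc R.card * S.card ≤ R.card * ∑ x ∈ M', (U x).card := Nat.mul_le_mul_left _ h1
      _ = ∑ x ∈ M', R.card * (U x).card := Finset.mul_sum ..
      _ ≤ ∑ x ∈ M', S.card := Finset.sum_le_sum hU
      _ = M'.card * S.card := by rw [Finset.sum_const, smul_eq_mul]
  have h3 : 0 < S.card := Finset.card_pos.2 ⟨1, by simp [S, one_mem]⟩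
  have := Nat.le_of_mul_le_mul_right h2 h3
  omega

end Prim
end RegNum

/-! ### Klein four-groups on a regular orbit -/

namespace RegNum

set_option linter.unusedSectionVars false

open Equiv

section Prim

variable {α : Type*} [Fintype α] [DecidableEq α]

/-- Some element of `H` agrees with `w` on `R` and with `y` off `R`. -/
def Mix (H : Subgroup (Perm α)) (R : Finset α) (w y : Perm α) : Prop :=
  ∃ h ∈ H, (∀ z ∈ R, h z = w z) ∧ ∀ z, z ∉ R → h z = y z

lemma Mix.mul {H : Subgroup (Perm α)} {R : Finset α} {w y w' y' : Perm α}
    (hw' : ∀ z, w' z ∈ R ↔ z ∈ R) (hy' : ∀ z, y' z ∈ R ↔ z ∈ R)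
    (h : Mix H R w y) (h' : Mix H R w' y') : Mix H R (w * w') (y * y') := by
  obtain ⟨g, hg, h1, h2⟩ := h
  obtain ⟨g', hg', h1', h2'⟩ := h'
  refine ⟨g * g', mul_mem hg hg', fun z hz => ?_, fun z hz => ?_⟩
  · rw [Perm.mul_apply, h1' z hz, h1 _ ((hw' z).2 hz), Perm.mul_apply]
  · rw [Perm.mul_apply, h2' z hz, h2 _ (fun h => hz ((hy' z).1 h)), Perm.mul_apply]

/-- If no nontrivial element of `H` is supported on `R`, then an element of `H` is determined by its
action off `R`. -/
lemma Mix.unique {H : Subgroup (Perm α)} {R : Finset α} (hgood : Good H R) {w y w' : Perm α}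
    (h : Mix H R w y) (h' : Mix H R w' y) : ∀ z ∈ R, w z = w' z := by
  obtain ⟨g, hg, h1, h2⟩ := h
  obtain ⟨g', hg', h1', h2'⟩ := h'
  have := hgood (g'⁻¹ * g) (mul_mem (inv_mem hg') hg) fun a ha => by
    rw [Perm.mul_apply, h2 a ha, Perm.inv_eq_iff_eq, h2' a ha]
  intro z hz
  rw [← h1 z hz, ← h1' z hz, inv_mul_eq_one.1 this]

/-- The combinatorial contradiction for a Klein four-group with involutions `f 0`, `f 1`, `f 2`, where
`P i y` says that some element of `H` acts as `f i` on the regular orbit `R` and as `f y` off `R`.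
Such an element is determined by `y` (`hu`), products behave as in the four-group (`ht`, `hm`), and
every permutation of the three involutions, being induced by a permutation of `R`, would have to
satisfy one of the `P i y` (`hc`). -/
lemma boole_nine {P : Fin 3 → Fin 3 → Prop}
    (hu : ∀ i j y, i ≠ j → P i y → P j y → False)
    (ht : ∀ i y y' k y'', y ≠ y' → y'' ≠ y → y'' ≠ y' → P i y → P i y' → P k y'' → False)
    (hm : ∀ i j k y y' y'', i ≠ j → k ≠ i → k ≠ j → y ≠ y' → y'' ≠ y → y'' ≠ y' →
      P i y → P j y' → P k y'')
    (hc : ∀ π : Perm (Fin 3), P (π 0) 0 ∨ P (π 1) 1 ∨ P (π 2) 2) : False := by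
  have c1 : P 0 0 ∨ P 1 1 ∨ P 2 2 := hc 1
  have c2 : P 0 0 ∨ P 2 1 ∨ P 1 2 := hc (swap 1 2)
  have c3 : P 1 0 ∨ P 0 1 ∨ P 2 2 := hc (swap 0 1)
  have c4 : P 1 0 ∨ P 2 1 ∨ P 0 2 := hc (swap 0 1 * swap 1 2)
  have c5 : P 2 0 ∨ P 0 1 ∨ P 1 2 := hc (swap 1 2 * swap 0 1)
  have c6 : P 2 0 ∨ P 1 1 ∨ P 0 2 := hc (swap 0 2)
  have u1 := hu 0 1 0 (by decide)
  have u2 := hu 0 2 0 (by decide)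
  have u3 := hu 1 2 0 (by decide)
  have u4 := hu 0 1 1 (by decide)
  have u5 := hu 0 2 1 (by decide)
  have u6 := hu 1 2 1 (by decide)
  have u7 := hu 0 1 2 (by decide)
  have u8 := hu 0 2 2 (by decide)
  have v3 : ∀ k, P 0 1 → P 0 2 → P k 0 → False :=
    fun k => ht 0 1 2 k 0 (by decide) (by decide) (by decide)
  have v6 : ∀ k, P 1 1 → P 1 2 → P k 0 → False :=
    fun k => ht 1 1 2 k 0 (by decide) (by decide) (by decide)
  have v8 : ∀ k, P 2 0 → P 2 2 → P k 1 → False :=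
    fun k => ht 2 0 2 k 1 (by decide) (by decide) (by decide)
  have w5 := hm 2 0 1 0 1 2 (by decide) (by decide) (by decide) (by decide) (by decide) (by decide)
  have w6 := hm 2 1 0 0 1 2 (by decide) (by decide) (by decide) (by decide) (by decide) (by decide)
  have x6 := hm 2 0 1 0 2 1 (by decide) (by decide) (by decide) (by decide) (by decide) (by decide)
  have a0 := v3 0
  have a1 := v3 1
  have a2 := v3 2
  have b0 := v6 0
  have b1 := v6 1
  have b2 := v6 2
  have d0 := v8 0
  have d1 := v8 1
  have d2 := v8 2
  clear v3 v6 v8 hu ht hm hc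
  grind

/-- The Klein four-group case, with the three involutions listed as `f 0`, `f 1`, `f 2`. -/
lemma kills_of_fin_three {H M : Subgroup (Perm α)} {c : α} (hf : Free M c)
    (hg : Good H (orbF M c)) (f : Fin 3 → Perm α) (hfM : ∀ i, f i ∈ M) (hf1 : ∀ i, f i ≠ 1)
    (hsq : ∀ i, f i * f i = 1) (hmul : ∀ i j k, i ≠ j → k ≠ i → k ≠ j → f i * f j = f k)
    (hinj : Function.Injective f) (hall : ∀ x ∈ M, x ≠ 1 → ∃ i, x = f i) : Kills H M := by
  by_contra hk
  rw [kills_iff] at hk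
  push Not at hk
  have hiff : ∀ i z, f i z ∈ orbF M c ↔ z ∈ orbF M c := fun i z => orbF_iff (hfM i) z
  have hcR : c ∈ orbF M c := self_mem_orbF
  have hsqc : ∀ i z, f i (f i z) = z := fun i z => by rw [← Perm.mul_apply, hsq]; rfl
  have hmulc : ∀ i j k z, i ≠ j → k ≠ i → k ≠ j → f i (f j z) = f k z :=
    fun i j k z h1 h2 h3 => by rw [← Perm.mul_apply, hmul i j k h1 h2 h3]
  have hfc : ∀ i, f i c ≠ c := fun i h => hf1 i (hf _ (hfM i) h)
  let e : Fin 3 ↪ α := ⟨fun i => f i c, fun i j h => hinj (hf.eq (hfM i) (hfM j) h)⟩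
  have he : ∀ i, e i = f i c := fun _ => rfl
  refine boole_nine (P := fun i y => Mix H (orbF M c) (f i) (f y)) ?_ ?_ ?_ ?_
  · intro i j y hij h h'
    exact hij (hinj (hf.eq (hfM i) (hfM j) (h.unique hg h' c hcR)))
  · intro i y y' k y'' h1 h2 h3 h h' h''
    have := h.mul (hiff i) (hiff y') h'
    rw [hsq, hmul y y' y'' h1 h2 h3] at this
    exact hfc k (h''.unique hg this c hcR)
  · intro i j k y y' y'' h1 h2 h3 h4 h5 h6 h h'
    have := h.mul (hiff j) (hiff y') h'
    rwa [hmul y y' y'' h4 h5 h6, hmul i j k h1 h2 h3] at this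
  · intro π
    set u := π⁻¹.viaEmbedding e with hu
    have hue : ∀ i, u (f i c) = f (π⁻¹ i) c := fun i => by
      rw [← he, hu, Perm.viaEmbedding_apply, he]
    have hun : ∀ z, (∀ i, z ≠ f i c) → u z = z := fun z hz => by
      rw [hu, Perm.viaEmbedding_apply_of_notMem]
      rintro ⟨i, hi⟩
      exact hz i hi.symm
    have huc : u c = c := hun c fun i h => hfc i h.symm
    have huR : u ∈ symOn (orbF M c) := fun z hz =>
      hun z fun i h => hz (by rw [h, hiff]; exact hcR)
    have hui := inv_mem huR
    have huie : ∀ i, u⁻¹ (f i c) = f (π i) c := fun i => by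
      rw [Perm.inv_eq_iff_eq, hue]; simp
    have huic : u⁻¹ c = c := by rw [Perm.inv_eq_iff_eq, huc]
    obtain ⟨x, hx, hxu, hx1⟩ := hk u
    rw [mem_conjSub] at hxu
    obtain ⟨y, rfl⟩ := hall x hx hx1
    have hmix : Mix H (orbF M c) (f (π y)) (f y) := by
      refine ⟨_, hxu, fun z hz => ?_, fun z hz => ?_⟩
      · obtain ⟨m, hm, rfl⟩ := mem_orbF.1 hz
        simp only [Perm.mul_apply]
        by_cases hm1 : m = 1
        · subst hm1
          simp only [Perm.one_apply]
          rw [huc, huie]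
        · obtain ⟨i, rfl⟩ := hall m hm hm1
          rw [hue]
          by_cases hy : π⁻¹ i = y
          · have hy' : i = π y := by rw [← hy]; simp
            rw [hy, hy', hsqc, hsqc, huic]
          · obtain ⟨k, hk1, hk2⟩ : ∃ k : Fin 3, k ≠ y ∧ k ≠ π⁻¹ i := by
              clear * -
              generalize π⁻¹ i = t
              revert t y; decide
            rw [hmulc y (π⁻¹ i) k _ (Ne.symm hy) hk1 hk2, huie, hmulc (π y) i (π k)]
            · intro h; apply hy; rw [← h]; simp
            · intro h; exact hk1 (π.injective h)
            · intro h; apply hk2; rw [← h]; simp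
      · simp only [Perm.mul_apply]
        rw [huR z hz, hui _ (by rwa [hiff])]
    fin_cases y
    · exact Or.inl hmix
    · exact Or.inr (Or.inl hmix)
    · exact Or.inr (Or.inr hmix)

/-- The case of a Klein four-group, to which the count in `kills_of_good_five` does not apply. -/
lemma kills_of_good_four {H M : Subgroup (Perm α)} {c : α} (hf : Free M c)
    (h4 : Nat.card M = 4) (hsq : ∀ x ∈ M, x ^ 2 = 1) (hg : Good H (orbF M c)) : Kills H M := by
  classical
  have hR : (orbF M c).card = 4 := hf.card.trans h4
  have hsq' : ∀ x ∈ M, x * x = 1 := fun x hx => by rw [← sq]; exact hsq x hx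
  obtain ⟨p, hp, hpc⟩ : ∃ p ∈ orbF M c, p ∉ ({c} : Finset α) :=
    Finset.exists_mem_notMem_of_card_lt_card (by simp [hR])
  obtain ⟨a, ha, rfl⟩ := mem_orbF.1 hp
  obtain ⟨q, hq, hqc⟩ : ∃ q ∈ orbF M c, q ∉ ({c, a c} : Finset α) :=
    Finset.exists_mem_notMem_of_card_lt_card
      (lt_of_le_of_lt Finset.card_le_two (by omega))
  obtain ⟨b, hb, rfl⟩ := mem_orbF.1 hq
  simp only [Finset.mem_insert, Finset.mem_singleton, not_or] at hpc hqc
  have hcomm : ∀ x ∈ M, ∀ y ∈ M, x * y = y * x := by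
    intro x hx y hy
    have hinv : ∀ z ∈ M, z⁻¹ = z := fun z hz => inv_eq_of_mul_eq_one_left (hsq' z hz)
    rw [← hinv _ (mul_mem hx hy), mul_inv_rev, hinv x hx, hinv y hy]
  have ha1 : a ≠ 1 := fun h => hpc (by simp [h])
  have hb1 : b ≠ 1 := fun h => hqc.1 (by simp [h])
  have hab : a ≠ b := fun h => hqc.2 (by simp [h])
  have haa := hsq' a ha
  have hbb := hsq' b hb
  have hba := hcomm b hb a ha
  have e1 : a * (a * b) = b := by rw [← mul_assoc, haa, one_mul]
  have e2 : a * b * b = a := by rw [mul_assoc, hbb, mul_one]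
  have e3 : b * (a * b) = a := by rw [← mul_assoc, hba, e2]
  have e4 : a * b * a = b := by rw [mul_assoc, hba, e1]
  have hab1 : a * b ≠ 1 := fun h => hab (by
    have := eq_inv_of_mul_eq_one_left h
    rw [this]; exact (eq_inv_of_mul_eq_one_left hbb).symm)
  have hM : ∀ x ∈ M, x ≠ 1 → x = a ∨ x = b ∨ x = a * b := by
    have hsub : ({c, a c, b c, (a * b) c} : Finset α) ⊆ orbF M c := by
      intro z hz
      simp only [Finset.mem_insert, Finset.mem_singleton] at hz
      rcases hz with rfl | rfl | rfl | rfl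
      · exact self_mem_orbF
      · exact hp
      · exact hq
      · exact mem_orbF.2 ⟨_, mul_mem ha hb, rfl⟩
    have hca : ({c, a c, b c, (a * b) c} : Finset α).card = 4 := by
      have k1 : c ≠ a c := fun h => hpc (by simp [← h])
      have k2 : c ≠ b c := fun h => hqc.1 h.symm
      have k3 : c ≠ (a * b) c := fun h => hab1 (hf _ (mul_mem ha hb) h.symm)
      have k4 : a c ≠ b c := fun h => hqc.2 h.symm
      have k6 : b c ≠ (a * b) c := fun h => k1 (b.injective (by
        rw [h, ← hba]; rfl))
      rw [Finset.card_insert_of_notMem (by simpa using ⟨k1, k2, k3⟩),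
        Finset.card_insert_of_notMem (by simpa using ⟨k4, k2⟩),
        Finset.card_insert_of_notMem (by simpa using k6), Finset.card_singleton]
    have heq := Finset.eq_of_subset_of_card_le hsub (by omega)
    intro x hx hx1
    have hxc : x c ∈ orbF M c := mem_orbF.2 ⟨x, hx, rfl⟩
    rw [← heq] at hxc
    simp only [Finset.mem_insert, Finset.mem_singleton] at hxc
    rcases hxc with h | h | h | h
    · exact absurd (hf x hx h) hx1
    · exact Or.inl (hf.eq hx ha h)
    · exact Or.inr (Or.inl (hf.eq hx hb h))
    · exact Or.inr (Or.inr (hf.eq hx (mul_mem ha hb) h))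
  refine kills_of_fin_three hf hg ![a, b, a * b] ?_ ?_ ?_ ?_ ?_ ?_
  · intro i; fin_cases i
    exacts [ha, hb, mul_mem ha hb]
  · intro i; fin_cases i
    exacts [ha1, hb1, hab1]
  · intro i; fin_cases i
    exacts [haa, hbb, hsq' _ (mul_mem ha hb)]
  · intro i j k h1 h2 h3
    fin_cases i <;> fin_cases j <;> fin_cases k <;> simp_all
  · intro i j h
    have k1 : a ≠ a * b := fun h => hb1 (by simpa using h.symm)
    have k2 : b ≠ a * b := fun h => ha1 (by simpa using h.symm)
    fin_cases i <;> fin_cases j <;> simp_all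
  · intro x hx hx1
    rcases hM x hx hx1 with h | h | h
    exacts [⟨0, h⟩, ⟨1, h⟩, ⟨2, h⟩]

end Prim
end RegNum

/-! ### Regular groups of order at most half the degree -/

namespace RegNum

set_option linter.unusedSectionVars false

open Equiv

section Prim

variable {α : Type*} [Fintype α] [DecidableEq α]

/-- Subgroups of order at most five are killed by every core-free subgroup, except possibly Klein
four-groups. -/
lemma kills_of_small {G : Type*} [Group G] [Finite G] {H M : Subgroup G} (hH : H.normalCore = ⊥)
    (hM : Nat.card M ≤ 5) (h4 : Nat.card M = 4 → ∃ x ∈ M, x ^ 2 ≠ 1) : Kills H M := by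
  have hpos : 0 < Nat.card M := Nat.card_pos
  obtain h | h | h | h | h : Nat.card M = 1 ∨ Nat.card M = 2 ∨ Nat.card M = 3 ∨ Nat.card M = 4 ∨
      Nat.card M = 5 := by omega
  · exact kills_of_bot ((Subgroup.card_eq_one).1 h)
  · exact kills_of_prime hH (by rw [h]; norm_num)
  · exact kills_of_prime hH (by rw [h]; norm_num)
  · obtain ⟨x, hx, hx2⟩ := h4 h
    exact kills_of_cyclic_four hH h hx hx2
  · exact kills_of_prime hH (by rw [h]; norm_num)

/-- The kill of a group of order at most `(n + 1) / 2` with a regular orbit: a conjugate of `H` has no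
nontrivial element supported on that orbit, by Bochert's argument. -/
lemma kills_of_ns {H M : Subgroup (Perm α)} {c : α} (hH : H.normalCore = ⊥) (hNS : NS H)
    (hf : Free M c) (hM : 2 * Nat.card M ≤ Fintype.card α + 1) : Kills H M := by
  obtain ⟨Δ, hΔ, hc⟩ := hNS.exists_good
  obtain ⟨g, hg⟩ := hΔ.conj_to (R := orbF M c) (by rw [hf.card]; omega)
  by_cases h5 : 5 ≤ Nat.card M
  · exact Kills.of_conj (kills_of_good_five hf h5 hg)
  · by_cases h4 : Nat.card M = 4 ∧ ∀ x ∈ M, x ^ 2 = 1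
    · exact Kills.of_conj (kills_of_good_four hf h4.1 h4.2 hg)
    · refine kills_of_small hH (by omega) fun h => ?_
      by_contra! hsq
      exact h4 ⟨h, hsq⟩

/-- If the transpositions `(c b)` and `(c b')` conjugate the same nontrivial `x ∈ M` into `H`, then
`b = b'`: otherwise the quotient of the two conjugates would move at most three points. -/
lemma NS.swap_unique {H M : Subgroup (Perm α)} {c : α} (h : NS H) (hf : Free M c)
    (hM : M ≤ symOn (orbF M c)) {b b' : α} (hb : b = c ∨ b ∉ orbF M c)
    (hb' : b' = c ∨ b' ∉ orbF M c) {x : Perm α} (hx : x ∈ M) (hx1 : x ≠ 1)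
    (h1 : swap c b * x * swap c b ∈ H) (h2 : swap c b' * x * swap c b' ∈ H) : b = b' := by
  by_contra hbb
  have hxc : x c ≠ c := hf.moves hx hx1 self_mem_orbF
  have hxcR : x c ∈ orbF M c := mem_orbF.2 ⟨x, hx, rfl⟩
  -- the value of the swapped element away from the swapped points
  have hval : ∀ {d a : α}, (d = c ∨ d ∉ orbF M c) → a ≠ d → a ≠ x⁻¹ c → a ≠ c →
      (swap c d * x * swap c d) a = x a := by
    intro d a hd had hax hac
    simp only [Perm.mul_apply]
    rw [swap_apply_of_ne_of_ne hac had]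
    have h3 : x a ≠ c := fun h => hax (by rw [← h]; simp)
    have h4 : x a ≠ d := by
      rcases hd with rfl | hd
      · exact h3
      · intro h
        rw [← h, orbF_iff hx] at hd
        have := hM hx a hd
        exact had (this ▸ h)
    rw [swap_apply_of_ne_of_ne h3 h4]
  have hat : ∀ {d : α}, (d = c ∨ d ∉ orbF M c) → (swap c d * x * swap c d) d = x c := by
    intro d hd
    simp only [Perm.mul_apply, swap_apply_right]
    rcases hd with rfl | hd
    · simp
    · exact swap_apply_of_ne_of_ne hxc (fun h => hd (h ▸ hxcR))
  have hcc : ∀ {d : α}, d ≠ c → d ∉ orbF M c → (swap c d * x * swap c d) c = c := by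
    intro d hdc hd
    simp only [Perm.mul_apply, swap_apply_left]
    rw [hM hx d hd, swap_apply_right]
  set u := swap c b * x * swap c b with hu
  set v := swap c b' * x * swap c b' with hv
  have hvu : v⁻¹ * u ∈ H := mul_mem (inv_mem h2) h1
  have hne : v⁻¹ * u ≠ 1 := by
    intro h3
    have h4 : u = v := (inv_mul_eq_one.1 h3).symm
    have h5 := hat hb
    rw [← hu, h4, ← hat hb', ← hv] at h5
    exact hbb (v.injective h5)
  have hsub : (v⁻¹ * u).support ⊆ {b, b', x⁻¹ c} := by
    intro a ha
    by_contra hn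
    simp only [Finset.mem_insert, Finset.mem_singleton, not_or] at hn
    apply Perm.mem_support.1 ha
    rw [Perm.mul_apply, Perm.inv_eq_iff_eq]
    by_cases hac : a = c
    · subst hac
      rw [hu, hv, hcc (Ne.symm hn.1) (hb.resolve_left (Ne.symm hn.1)),
        hcc (Ne.symm hn.2.1) (hb'.resolve_left (Ne.symm hn.2.1))]
    · rw [hu, hv, hval hb hn.1 hn.2.2 hac, hval hb' hn.2.1 hn.2.2 hac]
  have := h _ hvu hne
  have h3 := (Finset.card_le_card hsub).trans Finset.card_le_three
  omega

end Prim
end RegNum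

/-! ### Conjugating by transpositions -/

namespace RegNum

set_option linter.unusedSectionVars false

open Equiv

section Prim

variable {α : Type*} [Fintype α] [DecidableEq α]

/-- `x` is a nontrivial element of `M` which the transposition `(c b)` conjugates into `H`. -/
def Hit (H M : Subgroup (Perm α)) (c b : α) (x : Perm α) : Prop :=
  x ∈ M ∧ x ≠ 1 ∧ swap c b * x * swap c b ∈ H

lemma Hit.inv {H M : Subgroup (Perm α)} {c b : α} {x : Perm α} (h : Hit H M c b x) :
    Hit H M c b x⁻¹ := by
  refine ⟨inv_mem h.1, inv_ne_one.2 h.2.1, ?_⟩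
  have := inv_mem h.2.2
  simpa [mul_assoc] using this

lemma Hit.pow {H M : Subgroup (Perm α)} {c b : α} {x : Perm α} (h : Hit H M c b x) {k : ℕ}
    (hk : x ^ k ≠ 1) : Hit H M c b (x ^ k) := by
  refine ⟨pow_mem h.1 k, hk, ?_⟩
  have h1 := pow_mem h.2.2 k
  have h2 := conj_pow (i := k) (a := swap c b) (b := x)
  rw [swap_inv] at h2
  rwa [h2] at h1

lemma exists_hit {H M : Subgroup (Perm α)} (hk : ¬ Kills H M) (c b : α) :
    ∃ x, Hit H M c b x := by
  rw [kills_iff] at hk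
  push Not at hk
  obtain ⟨x, hx, hxs, hx1⟩ := hk (swap c b)
  rw [mem_conjSub, swap_inv] at hxs
  exact ⟨x, hx, hx1, hxs⟩

/-- The pigeonhole count: the point `c` and the points outside its orbit need pairwise disjoint
sets `{x, x⁻¹}` of nontrivial elements of `M`. Here `I` is the set of involutions of `M`, and `T'`
consists of the points all of whose elements `x` have order greater than two. -/
lemma hit_count {H M : Subgroup (Perm α)} {c : α} (hNS : NS H) (hf : Free M c)
    (hM : M ≤ symOn (orbF M c)) (hk : ¬ Kills H M) :
    ∃ (T' : Finset α) (I : Finset (Perm α)), (∀ x, x ∈ I ↔ x ∈ M ∧ x ≠ 1 ∧ x ^ 2 = 1) ∧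
      (∀ b ∈ T', (b = c ∨ b ∉ orbF M c) ∧ ∀ x, Hit H M c b x → x ^ 2 ≠ 1) ∧
      Fintype.card α + 1 ≤ T'.card + I.card + Nat.card M ∧
      2 * T'.card + I.card + 1 ≤ Nat.card M := by
  classical
  set T : Finset α := insert c (orbF M c)ᶜ
  have hT : ∀ b, b ∈ T ↔ (b = c ∨ b ∉ orbF M c) := fun b => by simp [T]
  have hTc : T.card + Nat.card M = Fintype.card α + 1 := by
    have h1 : c ∉ (orbF M c)ᶜ := by simpa using self_mem_orbF
    have h2 := Finset.card_le_univ (orbF M c)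
    rw [Finset.card_insert_of_notMem h1, Finset.card_compl, ← hf.card]
    omega
  let I : Finset (Perm α) := Finset.univ.filter fun x => x ∈ M ∧ x ≠ 1 ∧ x ^ 2 = 1
  let T' := T.filter fun b => ∀ x, Hit H M c b x → x ^ 2 ≠ 1
  let T₂ := T.filter fun b => ¬ ∀ x, Hit H M c b x → x ^ 2 ≠ 1
  have hsum : T'.card + T₂.card = T.card := Finset.card_filter_add_card_filter_not _
  have hT₂ : T₂.card ≤ I.card := by
    have : ∀ b ∈ T₂, ∃ x, Hit H M c b x ∧ x ^ 2 = 1 := by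
      intro b hb
      have := (Finset.mem_filter.1 hb).2
      push Not at this
      exact this
    choose! f hf' using this
    refine Finset.card_le_card_of_injOn f (fun b hb => ?_) fun b hb b' hb' h => ?_
    · have := hf' b hb
      simp only [I, Finset.coe_filter, Finset.mem_univ, true_and, Set.mem_ofPred_eq]
      exact ⟨this.1.1, this.1.2.1, this.2⟩
    · have h1 := hf' b hb
      have h2 := hf' b' hb'
      rw [← h] at h2
      exact hNS.swap_unique hf hM ((hT b).1 (Finset.mem_filter.1 hb).1)
        ((hT b').1 (Finset.mem_filter.1 hb').1) h1.1.1 h1.1.2.1 h1.1.2.2 h2.1.2.2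
  refine ⟨T', I, fun x => by simp [I], fun b hb => ?_, by omega, ?_⟩
  · exact ⟨(hT b).1 (Finset.mem_filter.1 hb).1, (Finset.mem_filter.1 hb).2⟩
  · choose f hf' using fun b => exists_hit hk c b
    let J : Finset (Perm α) := Finset.univ.filter fun x => x ∈ M ∧ x ^ 2 ≠ 1
    have hJ : (T' ×ˢ (Finset.univ : Finset Bool)).card ≤ J.card := by
      refine Finset.card_le_card_of_injOn
        (fun t => if t.2 then f t.1 else (f t.1)⁻¹) ?_ ?_
      · rintro ⟨b, i⟩ hb
        simp only [Finset.coe_product, Set.mem_prod, Finset.mem_coe] at hb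
        have h1 := (Finset.mem_filter.1 hb.1).2 _ (hf' b)
        simp only [J, Finset.coe_filter, Finset.mem_univ, true_and, Set.mem_ofPred_eq]
        cases i
        · refine ⟨inv_mem (hf' b).1, ?_⟩
          simpa using h1
        · exact ⟨(hf' b).1, h1⟩
      · rintro ⟨b, i⟩ hb ⟨b', i'⟩ hb' h
        simp only [Finset.coe_product, Set.mem_prod, Finset.mem_coe] at hb hb' h
        have k1 : Hit H M c b (if i then f b else (f b)⁻¹) := by
          split_ifs
          · exact hf' b
          · exact (hf' b).inv
        have k2 : Hit H M c b' (if i' then f b' else (f b')⁻¹) := by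
          split_ifs
          · exact hf' b'
          · exact (hf' b').inv
        rw [← h] at k2
        have h3 := hNS.swap_unique hf hM ((hT b).1 (Finset.mem_filter.1 hb.1).1)
          ((hT b').1 (Finset.mem_filter.1 hb'.1).1) k1.1 k1.2.1 k1.2.2 k2.2.2
        subst h3
        have h4 := (Finset.mem_filter.1 hb.1).2 _ (hf' b)
        have h5 : f b ≠ (f b)⁻¹ := fun h => h4 (by
          rw [sq]; nth_rewrite 1 [h]; simp)
        cases i <;> cases i' <;> simp_all
    have hdis : Disjoint I J := by
      rw [Finset.disjoint_left]
      intro x hx hxJ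
      simp only [I, J, Finset.mem_filter] at hx hxJ
      exact hxJ.2.2 hx.2.2.2
    have h1 : (1 : Perm α) ∉ I ∪ J := by simp [I, J]
    have hsub : insert 1 (I ∪ J) ⊆ Finset.univ.filter fun x => x ∈ M := by
      intro x hx
      simp only [I, J, Finset.mem_insert, Finset.mem_union, Finset.mem_filter, Finset.mem_univ,
        true_and] at hx ⊢
      rcases hx with rfl | hx | hx
      exacts [one_mem _, hx.1, hx.1]
    have h2 := Finset.card_le_card hsub
    rw [Finset.card_insert_of_notMem h1, Finset.card_union_of_disjoint hdis] at h2
    rw [Nat.card_eq_fintype_card, Fintype.card_subtype]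
    rw [Finset.card_product] at hJ
    simp only [Finset.card_univ, Fintype.card_bool] at hJ
    omega

/-- Two elements of order three in a group of order six agree up to inversion. -/
lemma order_six {G : Type*} [Group G] (hG : Nat.card G = 6) {x y : G} (hx : x ^ 3 = 1)
    (hx1 : x ≠ 1) (hy : y ^ 3 = 1) (hy1 : y ≠ 1) : y = x ∨ y = x⁻¹ := by
  have ho : orderOf x = 3 := orderOf_eq_prime hx hx1
  have hidx : (Subgroup.zpowers x).index = 2 := by
    have := (Subgroup.zpowers x).card_mul_index
    rw [Nat.card_zpowers, ho, hG] at this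
    omega
  have h2 : y ^ 2 ∈ Subgroup.zpowers x := Subgroup.sq_mem_of_index_two hidx y
  have h3 : y ∈ Subgroup.zpowers x := by
    have := pow_mem h2 2
    have h4 : (y ^ 2) ^ 2 = y := by
      rw [← pow_mul, show 2 * 2 = 3 + 1 from rfl, pow_add, hy]; simp
    rwa [h4] at this
  have h4 : y ∈ Submonoid.powers x := by
    have : IsOfFinOrder x := orderOf_pos_iff.1 (by omega)
    exact this.mem_powers_iff_mem_zpowers.2 h3
  obtain ⟨k, rfl⟩ := h4
  have h5 : x ^ k = x ^ (k % 3) := by rw [← ho, pow_mod_orderOf]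
  simp only at hy1 ⊢
  rw [h5] at hy1 ⊢
  have : k % 3 < 3 := Nat.mod_lt _ (by norm_num)
  interval_cases k % 3
  · simp at hy1
  · simp
  · right
    exact eq_inv_of_mul_eq_one_left (by rw [← pow_succ]; exact hx)

/-- The kill of a regular group of order `⌊n/2⌋ + 2` with at most one involution. -/
lemma kills_of_ns_two {H M : Subgroup (Perm α)} {c : α} (hn : 7 ≤ Fintype.card α) (hNS : NS H)
    (hf : Free M c) (hM : M ≤ symOn (orbF M c)) (hr : Nat.card M = Fintype.card α / 2 + 2)
    (hinv : ∀ x ∈ M, ∀ y ∈ M, x ≠ 1 → y ≠ 1 → x ^ 2 = 1 → y ^ 2 = 1 → x = y) :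
    Kills H M := by
  by_contra hk
  obtain ⟨T', I, hI, hT', h1, h2⟩ := hit_count hNS hf hM hk
  have hI1 : I.card ≤ 1 := by
    rw [Finset.card_le_one]
    intro x hx y hy
    rw [hI] at hx hy
    exact hinv x hx.1 y hy.1 hx.2.1 hy.2.1 hx.2.2 hy.2.2
  have h6 : Nat.card M = 6 := by omega
  have hT2 : 1 < T'.card := by omega
  obtain ⟨b, hb, b', hb', hbb⟩ := Finset.one_lt_card.1 hT2
  have h3 : ∀ b ∈ T', ∀ x, Hit H M c b x → x ^ 3 = 1 := by
    intro b hb x hx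
    by_contra h
    refine (hT' b hb).2 _ (hx.pow h) ?_
    have := pow_card_eq_one' (x := (⟨x, hx.1⟩ : M))
    rw [h6] at this
    rw [← pow_mul]
    simpa using congrArg Subtype.val this
  obtain ⟨x, hx⟩ := exists_hit hk c b
  obtain ⟨y, hy⟩ := exists_hit hk c b'
  have h4 := order_six h6 (x := ⟨x, hx.1⟩) (y := ⟨y, hy.1⟩) (Subtype.ext (h3 b hb x hx))
    (fun h => hx.2.1 (congrArg Subtype.val h)) (Subtype.ext (h3 b' hb' y hy))
    (fun h => hy.2.1 (congrArg Subtype.val h))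
  have h5 : Hit H M c b y := by
    rcases h4 with h4 | h4
    · have : y = x := congrArg Subtype.val h4
      rwa [this]
    · have : y = x⁻¹ := congrArg Subtype.val h4
      rw [this]; exact hx.inv
  exact hbb (hNS.swap_unique hf hM (hT' b hb).1 (hT' b' hb').1 hy.1 hy.2.1 h5.2.2 hy.2.2)

end Prim
end RegNum

/-! ### Five-cycles in primitive groups -/

namespace RegNum

set_option linter.unusedSectionVars false

open Equiv

section Prim

variable {α : Type*} [Fintype α] [DecidableEq α]

/-- By Jordan's theorem, a primitive group of degree at least nine containing a 5-cycle is highly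
transitive. -/
lemma five_transitive {H : Subgroup (Perm α)} (hn : 9 ≤ Fintype.card α)
    (hP : MulAction.IsPreprimitive H α) {z : Perm α} (hz : z ∈ H) (hc : z.IsCycle)
    (h5 : z.support.card = 5) : MulAction.IsMultiplyPretransitive H α 5 := by
  classical
  have hcard : Nat.card α = Fintype.card α := Nat.card_eq_fintype_card
  obtain ⟨m, hm⟩ := Nat.exists_eq_add_of_le hn
  have hmp : MulAction.IsMultiplyPreprimitive H α (m + 3 + 2) := by
    apply hP.isMultiplyPreprimitive (s := (z.supportᶜ : Set α))
    · apply Nat.add_left_cancel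
      rw [Set.ncard_add_ncard_compl, Set.ncard_coe_finset, h5, hcard, hm]
      omega
    · omega
    have := Perm.isPretransitive_of_isCycle_mem hc hz
    apply MulAction.IsPreprimitive.of_prime_card
    convert! Nat.prime_five
    rw [Nat.card_eq_fintype_card, Fintype.card_subtype, ← h5]
    apply congr_arg
    ext x
    simp [SubMulAction.mem_ofFixingSubgroup_iff]
  have := hmp.isMultiplyPretransitive
  exact MulAction.isMultiplyPretransitive_of_le (n := m + 3 + 2) (by omega) (by omega)

/-- A primitive group with no elements moving two or three points contains no 5-cycle, as soon as
there are nine points: two conjugate 5-cycles could be made to meet in a single point. -/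
lemma NS.no_five_cycle {H : Subgroup (Perm α)} (hn : 9 ≤ Fintype.card α) (hNS : NS H)
    (hP : MulAction.IsPreprimitive H α) {x : Fin 5 ↪ α} {z : Perm α} (hz : z ∈ H)
    (h0 : z (x 0) = x 1) (h1 : z (x 1) = x 2) (h2 : z (x 2) = x 3) (h3 : z (x 3) = x 4)
    (h4 : z (x 4) = x 0) (hfix : ∀ a, (∀ i, a ≠ x i) → z a = a) : False := by
  have hmove : ∀ i, z (x i) ≠ x i := by
    intro i
    fin_cases i
    · simp [h0]
    · simp [h1]
    · simp [h2]
    · simp [h3]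
    · simp [h4]
  have hsupp : z.support = Finset.univ.map x := by
    ext a
    simp only [Perm.mem_support, Finset.mem_map, Finset.mem_univ, true_and]
    constructor
    · intro ha
      by_contra! h
      exact ha (hfix a fun i => (h i).symm)
    · rintro ⟨i, rfl⟩
      exact hmove i
  have h5 : z.support.card = 5 := by rw [hsupp]; simp
  have hcyc : z.IsCycle := by
    refine ⟨x 0, hmove 0, fun y hy => ?_⟩
    have : y ∈ z.support := Perm.mem_support.2 hy
    rw [hsupp] at this
    obtain ⟨i, -, rfl⟩ := Finset.mem_map.1 this
    refine ⟨(i : ℕ), ?_⟩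
    have e2 : z (z (x 0)) = x 2 := by rw [h0, h1]
    have e3 : z (z (z (x 0))) = x 3 := by rw [e2, h2]
    have e4 : z (z (z (z (x 0)))) = x 4 := by rw [e3, h3]
    fin_cases i
    · rfl
    · exact h0
    · exact e2
    · exact e3
    · exact e4
  have ht := five_transitive hn hP hz hcyc h5
  obtain ⟨S, hS, hSc⟩ := Finset.exists_subset_card_eq (s := z.supportᶜ) (n := 4)
    (by rw [Finset.card_compl]; omega)
  let e := (S.equivFinOfCardEq hSc).symm
  have heS : ∀ i, z (e i) = e i := fun i => by
    have := hS (e i).2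
    simpa using this
  let y : Fin 5 ↪ α := ⟨Fin.cons (x 0) fun i => (e i : α), by
    rw [Fin.cons_injective_iff]
    constructor
    · rintro ⟨i, hi⟩
      exact hmove 0 (by rw [← hi]; exact heS i)
    · exact fun i j h => e.injective (Subtype.ext h)⟩
  obtain ⟨g, hg⟩ := ht.exists_smul_eq x y
  have hgi : ∀ i, (g : Perm α) (x i) = y i := fun i => by rw [← hg]; rfl
  have hzg : (g : Perm α) * z * (g : Perm α)⁻¹ ∈ H := mul_mem (mul_mem g.2 hz) (inv_mem g.2)
  have hg0 : (g : Perm α) (x 0) = x 0 := hgi 0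
  refine hNS.no_single_meet hz hzg (c := x 0) (hmove 0) ?_ ?_
  · intro h
    simp only [Perm.mul_apply] at h
    have h6 : (g : Perm α)⁻¹ (x 0) = x 0 := by rw [Perm.inv_eq_iff_eq, hg0]
    rw [h6] at h
    nth_rewrite 2 [← hg0] at h
    exact hmove 0 ((g : Perm α).injective h)
  · intro a ha
    by_contra! hcon
    obtain ⟨k1, k2⟩ := hcon
    have k3 : z ((g : Perm α)⁻¹ a) ≠ (g : Perm α)⁻¹ a := by
      intro h
      apply k2
      simp only [Perm.mul_apply]
      rw [h]; simp
    have : (g : Perm α)⁻¹ a ∈ z.support := Perm.mem_support.2 k3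
    rw [hsupp] at this
    obtain ⟨i, -, hi⟩ := Finset.mem_map.1 this
    have hai : a = y i := by
      rw [← hgi, hi]; simp
    refine Fin.cases (fun h => ?_) (fun i h => ?_) i hai
    · exact ha h
    · exact k1 (by rw [h]; exact heS i)

/-- The kill of a regular group of order `n / 2 + 1` for even `n`. By `hit_count`, only elementary
abelian 2-groups `M` can resist; degree eight is settled by the order `5`. If every conjugate of `H`
by a transposition `(c b)` contained a nontrivial element of `M`, there would be involutions `h ∈ M`
in `H` and `y ∈ M` whose conjugate `z` by some `(c b)` lies in `H`, and `h * z * h * z` would be a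
5-cycle. -/
lemma kills_of_ns_one {H M : Subgroup (Perm α)} {c : α} (hn : 7 ≤ Fintype.card α)
    (heven : Even (Fintype.card α)) (hH : H.normalCore = ⊥)
    (hP : MulAction.IsPreprimitive H α) (hf : Free M c)
    (hM : M ≤ symOn (orbF M c)) (hr : Nat.card M = Fintype.card α / 2 + 1) : Kills H M := by
  classical
  by_contra hk
  have hNS : NS H := ns_of_primitive (by omega) hH hP
  obtain ⟨T', I, hI, hT', h1, h2⟩ := hit_count hNS hf hM hk
  obtain ⟨k, hk2⟩ := heven
  have hcardM : (Finset.univ.filter fun x => x ∈ M).card = Nat.card M := by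
    rw [Nat.card_eq_fintype_card, Fintype.card_subtype]
  have hsq : ∀ x ∈ M, x * x = 1 := by
    intro x hx
    by_contra hx2
    have hx1 : x ≠ 1 := fun h => hx2 (by simp [h])
    have h1I : (1 : Perm α) ∉ insert x I := by
      simp [hI, Ne.symm hx1]
    have hxI : x ∉ I := fun h => hx2 (by rw [← sq]; exact ((hI x).1 h).2.2)
    have hsub : insert 1 (insert x I) ⊆ Finset.univ.filter fun x => x ∈ M := by
      intro y hy
      simp only [Finset.mem_insert, hI] at hy
      simp only [Finset.mem_filter, Finset.mem_univ, true_and]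
      rcases hy with rfl | rfl | hy
      exacts [one_mem _, hx, hy.1]
    have := Finset.card_le_card hsub
    rw [Finset.card_insert_of_notMem h1I, Finset.card_insert_of_notMem hxI, hcardM] at this
    omega
  have hinv : ∀ z ∈ M, z⁻¹ = z := fun z hz => inv_eq_of_mul_eq_one_left (hsq z hz)
  have hcomm : ∀ x ∈ M, ∀ y ∈ M, x * y = y * x := fun x hx y hy => by
    rw [← hinv _ (mul_mem hx hy), mul_inv_rev, hinv x hx, hinv y hy]
  by_cases hn8 : Fintype.card α < 9
  · exact hk (kills_of_small hH (by omega) (by omega))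
  obtain ⟨h, hh⟩ := exists_hit hk c c
  obtain ⟨b, hb⟩ : ∃ b, b ∉ orbF M c := by
    by_contra! hall
    have : (orbF M c).card = Fintype.card α := by
      rw [(Finset.eq_univ_iff_forall).2 hall, Finset.card_univ]
    rw [hf.card] at this
    omega
  obtain ⟨y, hy⟩ := exists_hit hk c b
  have hcR : c ∈ orbF M c := self_mem_orbF
  have hbc : b ≠ c := fun h => hb (h ▸ hcR)
  have hhH : h ∈ H := by
    have h3 := hh.2.2
    have h4 : swap c c = 1 := swap_self c
    rwa [h4, one_mul, mul_one] at h3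
  have hyh : y ≠ h := fun e => hbc (hNS.swap_unique hf hM (Or.inr hb) (Or.inl rfl) hh.1 hh.2.1
    (by rw [← e]; exact hy.2.2) hh.2.2)
  have hyy : ∀ a, y (y a) = a := fun a => by rw [← Perm.mul_apply, hsq y hy.1]; rfl
  have hhh : ∀ a, h (h a) = a := fun a => by rw [← Perm.mul_apply, hsq h hh.1]; rfl
  have hyhc : ∀ a, y (h a) = h (y a) := fun a => by
    rw [← Perm.mul_apply, hcomm y hy.1 h hh.1]; rfl
  have hyb : y b = b := hM hy.1 b hb
  have hhb : h b = b := hM hh.1 b hb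
  have hpc : h c ≠ c := hf.moves hh.1 hh.2.1 hcR
  have hqc : y c ≠ c := hf.moves hy.1 hy.2.1 hcR
  have hpq : h c ≠ y c := fun e => hyh (hf.eq hh.1 hy.1 e).symm
  have hvc : h (y c) ≠ c := fun e => hpq (by rw [← e, hhh, e])
  have hvp : h (y c) ≠ h c := fun e => hqc (h.injective e)
  have hvq : h (y c) ≠ y c := fun e => hpc (by rw [← hyhc] at e; exact y.injective e)
  have hin : ∀ {m}, m ∈ M → ∀ {a}, a ∈ orbF M c → m a ≠ b := fun hm _ ha e =>
    hb (e ▸ (orbF_iff hm _).2 ha)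
  have hpb : h c ≠ b := hin hh.1 hcR
  have hqb : y c ≠ b := hin hy.1 hcR
  have hvb : h (y c) ≠ b := hin hh.1 ((orbF_iff hy.1 _).2 hcR)
  set z := swap c b * y * swap c b with hz
  have zb : z b = y c := by
    simp only [hz, Perm.mul_apply, swap_apply_right]
    exact swap_apply_of_ne_of_ne hqc hqb
  have zc : z c = c := by
    simp only [hz, Perm.mul_apply, swap_apply_left, hyb, swap_apply_right]
  have zq : z (y c) = b := by
    simp only [hz, Perm.mul_apply, swap_apply_of_ne_of_ne hqc hqb, hyy, swap_apply_left]
  have zp : z (h c) = h (y c) := by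
    simp only [hz, Perm.mul_apply, swap_apply_of_ne_of_ne hpc hpb, hyhc]
    exact swap_apply_of_ne_of_ne hvc hvb
  have zv : z (h (y c)) = h c := by
    simp only [hz, Perm.mul_apply, swap_apply_of_ne_of_ne hvc hvb, hyhc, hyy]
    exact swap_apply_of_ne_of_ne hpc hpb
  have zo : ∀ a, a ≠ b → a ≠ c → a ≠ y c → z a = y a := by
    intro a h1 h2 h3
    simp only [hz, Perm.mul_apply, swap_apply_of_ne_of_ne h2 h1]
    refine swap_apply_of_ne_of_ne (fun e => h3 (by rw [← e, hyy])) fun e => h1 ?_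
    rw [← hyb] at e
    exact y.injective e
  have hnd : [b, c, y c, h (y c), h c].Nodup := by
    simp only [List.nodup_cons, List.mem_cons, List.not_mem_nil, or_false, not_or,
      not_false_eq_true, List.nodup_nil, and_true]
    exact ⟨⟨hbc, hqb.symm, hvb.symm, hpb.symm⟩, ⟨hqc.symm, hvc.symm, hpc.symm⟩,
      ⟨hvq.symm, hpq.symm⟩, hvp⟩
  let x : Fin 5 ↪ α := ⟨fun i => [b, c, y c, h (y c), h c].get i, hnd.injective_get⟩
  refine hNS.no_five_cycle (by omega) hP (x := x) (z := h * z * h * z)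
    (mul_mem (mul_mem (mul_mem hhH hy.2.2) hhH) hy.2.2) ?_ ?_ ?_ ?_ ?_ ?_
  · change h (z (h (z b))) = c
    rw [zb, zv, hhh]
  · change h (z (h (z c))) = y c
    rw [zc, zp, hhh]
  · change h (z (h (z (y c)))) = h (y c)
    rw [zq, hhb, zb]
  · change h (z (h (z (h (y c))))) = h c
    rw [zv, hhh, zc]
  · change h (z (h (z (h c)))) = b
    rw [zp, hhh, zq, hhb]
  · intro a ha
    have a1 : a ≠ b := ha 0
    have a2 : a ≠ c := ha 1
    have a3 : a ≠ y c := ha 2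
    have a4 : a ≠ h (y c) := ha 3
    have a5 : a ≠ h c := ha 4
    simp only [Perm.mul_apply]
    rw [zo a a1 a2 a3, zo, hyhc, hyy, hhh]
    · intro e
      apply a1
      rw [← hhb] at e
      have := h.injective e
      rw [← hyb] at this
      exact y.injective this
    · intro e
      apply a4
      rw [← hyhc, ← e, hhh, hyy]
    · intro e
      apply a5
      rw [← hyhc] at e
      have := y.injective e
      rw [← this, hhh]

end Prim
end RegNum

/-! ### Killing groups of order slightly above half the degree -/

namespace RegNum

set_option linter.unusedSectionVars false

open Equiv

section Levels

variable {α : Type*} [Fintype α] [DecidableEq α]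

lemma le_symOn_orbF {M : Subgroup (Perm α)} {c : α} {E : Finset α} (hM : M ≤ symOn E)
    (hc : c ∈ E) (h : E.card ≤ (orbF M c).card + 1) : M ≤ symOn (orbF M c) := by
  intro x hx a ha
  by_contra hxa
  have haE : a ∈ E := by
    by_contra h'; exact hxa (hM hx a h')
  have hxaE : x a ∈ E := (symOn_apply_mem (hM hx)).2 haE
  have hxaR : x a ∉ orbF M c := by rwa [orbF_iff hx]
  have hsub : insert a (insert (x a) (orbF M c)) ⊆ E := by
    intro y hy
    simp only [Finset.mem_insert] at hy
    rcases hy with rfl | rfl | hy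
    exacts [haE, hxaE, orbF_subset hM hc hy]
  have := Finset.card_le_card hsub
  rw [Finset.card_insert_of_notMem, Finset.card_insert_of_notMem hxaR] at this
  · omega
  · simp only [Finset.mem_insert, not_or]
    exact ⟨fun h => hxa h.symm, ha⟩

/-- Primitive groups, in the form produced by `trichotomy`. -/
def PrimT (H : Subgroup (Perm α)) : Prop := Trans H ∧ MulAction.IsPreprimitive H α

lemma nonPrim_or_primT (H : Subgroup (Perm α)) : NonPrim H ∨ PrimT H := by
  rcases trichotomy H with h | h | h
  exacts [Or.inl (Or.inl h), Or.inl (Or.inr h), Or.inr h]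

lemma exists_fixed {M : Subgroup (Perm α)} {c : α} {E : Finset α} (hM : M ≤ symOn E)
    (hc : c ∈ E) (hE : E.card < Fintype.card α) : ∃ e, e ∉ orbF M c ∧ ∀ x ∈ M, x e = e := by
  obtain ⟨e, he⟩ : ∃ e, e ∉ E := by
    by_contra! h
    rw [(Finset.eq_univ_iff_forall).2 h, Finset.card_univ] at hE
    exact lt_irrefl _ hE
  exact ⟨e, fun h => he (orbF_subset hM hc h), fun x hx => hM hx e he⟩

/-- Every core-free subgroup kills a group of order at most `⌊n/2⌋ + 1` acting regularly on an
orbit, provided it fixes a point and, at the extreme order, almost all points off that orbit. -/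
lemma kills_low {H M : Subgroup (Perm α)} {c : α} {E : Finset α} (hn : 7 ≤ Fintype.card α)
    (hH : H.normalCore = ⊥) (hf : Free M c) (hM : M ≤ symOn E) (hc : c ∈ E)
    (hE : E.card < Fintype.card α) (h2 : 2 * Nat.card M ≤ Fintype.card α + 2)
    (hEM : 2 * Nat.card M ≤ Fintype.card α + 1 ∨ E.card ≤ Nat.card M + 1) : Kills H M := by
  rcases nonPrim_or_primT H with (hI | ⟨a, hI⟩) | hP
  · exact kills_of_intr hI hf h2
  · obtain ⟨e, he, heM⟩ := exists_fixed hM hc hE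
    exact kills_of_imp hI hf h2 he heM
  · by_cases h1 : 2 * Nat.card M ≤ Fintype.card α + 1
    · exact kills_of_ns hH (ns_of_primitive (by omega) hH hP.2) hf h1
    · have h3 := hEM.resolve_left h1
      refine kills_of_ns_one hn ⟨Nat.card M - 1, by omega⟩ hH hP.2 hf
        (le_symOn_orbF hM hc (by rwa [hf.card])) (by omega)

lemma pair_stab {M : Subgroup (Perm α)} {c : α} {z : Perm α} (hf : Free M c) (hz : z ∈ M)
    (hz2 : z ^ 2 ≠ 1) : ∀ x ∈ M, (∀ q ∈ ({c, z c} : Finset α), x q ∈ ({c, z c} : Finset α)) →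
      x = 1 := by
  intro x hx h
  have hz1 : z ≠ 1 := fun h => hz2 (by simp [h])
  have hzc : z c ≠ c := hf.moves hz hz1 self_mem_orbF
  have h1 := h c (by simp)
  have h2 := h (z c) (by simp)
  simp only [Finset.mem_insert, Finset.mem_singleton] at h1 h2
  rcases h1 with h1 | h1
  · exact hf x hx h1
  · have hxz := hf.eq hx hz h1
    subst hxz
    rcases h2 with h2 | h2
    · exact absurd (hf (x ^ 2) (pow_mem hz 2) (by rw [sq]; exact h2)) hz2
    · exact absurd (x.injective h2) hzc

/-- Every core-free subgroup kills a regular group of order `⌊n/2⌋ + 2` with at most one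
involution. -/
lemma kills_two {H M : Subgroup (Perm α)} {c : α} {E : Finset α} (hn : 7 ≤ Fintype.card α)
    (hH : H.normalCore = ⊥) (hf : Free M c) (hM : M ≤ symOn E) (hc : c ∈ E)
    (hE : E.card < Fintype.card α) (hr : Nat.card M = Fintype.card α / 2 + 2)
    (hEM : E.card ≤ Nat.card M + 1)
    (hinv : ∀ x ∈ M, ∀ y ∈ M, x ≠ 1 → y ≠ 1 → x ^ 2 = 1 → y ^ 2 = 1 → x = y) : Kills H M := by
  classical
  obtain ⟨z, hz, hz2⟩ : ∃ z ∈ M, z ^ 2 ≠ 1 := by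
    by_contra! hall
    have h1 : ((Finset.univ.filter fun x => x ∈ M).erase 1).card ≤ 1 := by
      rw [Finset.card_le_one]
      intro x hx y hy
      simp only [Finset.mem_erase, Finset.mem_filter, Finset.mem_univ, true_and] at hx hy
      exact hinv x hx.2 y hy.2 hx.1 hy.1 (hall x hx.2) (hall y hy.2)
    rw [Finset.card_erase_of_mem (by simp [one_mem])] at h1
    have h2 : (Finset.univ.filter fun x => x ∈ M).card = Nat.card M := by
      rw [Nat.card_eq_fintype_card, Fintype.card_subtype]
    omega
  have hz1 : z ≠ 1 := fun h => hz2 (by simp [h])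
  have hzc : z c ≠ c := hf.moves hz hz1 self_mem_orbF
  have hQ2 : ({c, z c} : Finset α).card = 2 := Finset.card_pair hzc.symm
  have hQ : ({c, z c} : Finset α) ⊆ orbF M c := by
    intro q hq
    simp only [Finset.mem_insert, Finset.mem_singleton] at hq
    rcases hq with rfl | rfl
    exacts [self_mem_orbF, mem_orbF.2 ⟨z, hz, rfl⟩]
  have hQ1 : ({c} : Finset α) ⊆ orbF M c := by simpa using self_mem_orbF
  rcases nonPrim_or_primT H with (⟨A, hA, hA2, hI⟩ | ⟨a, -, B, hB, hB2, hBn, hI⟩) | hP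
  · have hpos := hA.card_pos
    by_cases h1 : A.card + Nat.card M ≤ Fintype.card α + 1
    · refine Intr.kills hI hQ1 (free_singleton hf) ?_ ?_
      · simpa using hpos
      · rwa [hf.card, Finset.card_singleton]
    · refine Intr.kills hI hQ (pair_stab hf hz hz2) ?_ ?_
      · omega
      · rw [hf.card]; omega
  · obtain ⟨e, he, heM⟩ := exists_fixed hM hc hE
    by_cases h1 : B.card + Nat.card M ≤ Fintype.card α + 1
    · refine hI.kills hQ1 (free_singleton hf) ?_ ?_ he heM
      · rw [Finset.card_singleton]; omega
      · rwa [hf.card, Finset.card_singleton]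
    · refine hI.kills hQ (pair_stab hf hz hz2) ?_ ?_ he heM
      · omega
      · rw [hf.card]; omega
  · exact kills_of_ns_two hn (ns_of_primitive (by omega) hH hP.2) hf
      (le_symOn_orbF hM hc (by rwa [hf.card])) hr hinv

/-- If the elements supported on `E` form a group regular on `E`, then either nothing new is
supported on one more point, or the enlarged group is sharply 2-transitive and the point stabilizer
has at most one involution. -/
lemma next_level {K : Subgroup (Perm α)} {E : Finset α} {c c' : α} (hc : c ∈ E) (hc' : c' ∉ E)
    (hf : Free (K ⊓ symOn E) c) (hr : Nat.card ↥(K ⊓ symOn E) = E.card) :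
    K ⊓ symOn (insert c' E) = K ⊓ symOn E ∨
    ∀ x ∈ K ⊓ symOn E, ∀ y ∈ K ⊓ symOn E, x ≠ 1 → y ≠ 1 → x ^ 2 = 1 → y ^ 2 = 1 → x = y := by
  classical
  set M := K ⊓ symOn E with hMdef
  set X := K ⊓ symOn (insert c' E) with hXdef
  have hMX : M ≤ X := fun x hx => ⟨hx.1, fun a ha => hx.2 a fun h => ha (by simp [h])⟩
  have hXM : ∀ x ∈ X, x c' = c' → x ∈ M := by
    intro x hx hxc
    refine ⟨hx.1, fun a ha => ?_⟩
    by_cases h : a = c'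
    · rw [h, hxc]
    · exact hx.2 a (by simp [h, ha])
  by_cases hfix : ∀ x ∈ X, x c' = c'
  · exact Or.inl (le_antisymm (fun x hx => hXM x hx (hfix x hx)) hMX)
  right
  push Not at hfix
  obtain ⟨x₀, hx₀, hx₀c⟩ := hfix
  have horb : orbF M c = E := by
    refine Finset.eq_of_subset_of_card_le (orbF_subset (fun x hx => hx.2) hc) ?_
    rw [hf.card, hr]
  have hEmem : ∀ x ∈ X, ∀ a, a ∈ insert c' E → x a ≠ c' → x a ∈ E := by
    intro x hx a ha hxa
    have := (symOn_apply_mem hx.2).2 ha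
    exact (Finset.mem_insert.1 this).resolve_left hxa
  have he0 : x₀ c' ∈ E := hEmem x₀ hx₀ c' (by simp) hx₀c
  have hg : ∀ s : α, ∃ g : Perm α, s ∈ E → g ∈ X ∧ g c' = s := by
    intro s
    by_cases hs : s ∈ E
    · obtain ⟨m, hm, hms⟩ := mem_orbF.1 (horb ▸ hs : s ∈ orbF M c)
      obtain ⟨m', hm', hms'⟩ := mem_orbF.1 (horb ▸ he0 : x₀ c' ∈ orbF M c)
      refine ⟨m * m'⁻¹ * x₀, fun _ => ⟨mul_mem (mul_mem (hMX hm) (inv_mem (hMX hm'))) hx₀, ?_⟩⟩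
      simp only [Perm.mul_apply]
      rw [← hms', ← hms]; simp
    · exact ⟨1, fun h => absurd h hs⟩
  choose g hg using hg
  intro x hx y hy hx1 hy1 hx2 hy2
  by_contra hxy
  -- the conjugate of an involution of `M` fixes no point of `insert c' E` but `g s c'`
  have hfp : ∀ z ∈ M, z ≠ 1 → ∀ s ∈ E, ∀ t ∈ insert c' E, (g s * z * (g s)⁻¹) t = t → t = s := by
    intro z hz hz1 s hs t ht h
    by_contra hts
    have hgs := hg s hs
    have h1 : z ((g s)⁻¹ t) = (g s)⁻¹ t := by
      simp only [Perm.mul_apply] at h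
      rw [Perm.eq_inv_iff_eq]; exact h
    have h2 : (g s)⁻¹ t ≠ c' := by
      intro h3
      rw [Perm.inv_eq_iff_eq, hgs.2] at h3
      exact hts h3
    have h3 : (g s)⁻¹ t ∈ E := hEmem _ (inv_mem hgs.1) t ht h2
    exact hf.moves hz hz1 (horb.symm ▸ h3) h1
  let z : Bool → Perm α := fun i => if i then x else y
  have hz : ∀ i, z i ∈ M ∧ z i ≠ 1 ∧ z i * z i = 1 := by
    intro i
    cases i
    · exact ⟨hy, hy1, by rw [← sq]; exact hy2⟩
    · exact ⟨hx, hx1, by rw [← sq]; exact hx2⟩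
  let u : α × Bool → Perm α := fun t => g t.1 * z t.2 * (g t.1)⁻¹
  have huX : ∀ t : α × Bool, t.1 ∈ E → u t ∈ X := fun t ht =>
    mul_mem (mul_mem (hg _ ht).1 (hMX (hz _).1)) (inv_mem (hg _ ht).1)
  have huu : ∀ t a, u t (u t a) = a := by
    intro t a
    have : u t * u t = 1 := by
      simp only [u]
      rw [show g t.1 * z t.2 * (g t.1)⁻¹ * (g t.1 * z t.2 * (g t.1)⁻¹) =
        g t.1 * (z t.2 * z t.2) * (g t.1)⁻¹ by simp [mul_assoc], (hz _).2.2]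
      simp
    rw [← Perm.mul_apply, this]; rfl
  have hucE : ∀ t : α × Bool, t.1 ∈ E → u t c' ∈ E := by
    intro t ht
    refine hEmem _ (huX t ht) c' (by simp) fun h => ?_
    have := hfp _ (hz t.2).1 (hz t.2).2.1 t.1 ht c' (by simp) h
    exact hc' (this ▸ ht)
  have hcard : (E ×ˢ (Finset.univ : Finset Bool)).card ≤ E.card := by
    refine Finset.card_le_card_of_injOn (fun t => u t c') ?_ ?_
    · rintro t ht
      simp only [Finset.coe_product, Set.mem_prod, Finset.mem_coe] at ht
      exact hucE t ht.1
    · rintro t ht t' ht' h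
      simp only [Finset.coe_product, Set.mem_prod, Finset.mem_coe] at ht ht' h
      have h1 : u t * u t' = 1 := by
        have k1 : (u t * u t') c' = c' := by
          rw [Perm.mul_apply, ← h, huu]
        have k2 : u t * u t' ∈ M := hXM _ (mul_mem (huX t ht.1) (huX t' ht'.1)) k1
        have k3 : (u t * u t') (u t' c') = u t' c' := by
          rw [Perm.mul_apply, huu, h]
        by_contra hne
        exact hf.moves k2 hne (horb.symm ▸ hucE t' ht'.1) k3
      have h2 : u t = u t' := by
        ext a
        have := congrArg (fun p : Perm α => p (u t' a)) h1
        simp only [Perm.mul_apply, huu, Perm.one_apply] at this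
        exact this
      have h3 : t'.1 = t.1 := by
        refine hfp _ (hz t.2).1 (hz t.2).2.1 t.1 ht.1 t'.1 (by simp [ht'.1]) ?_
        have : u t' t'.1 = t'.1 := by
          simp only [u, Perm.mul_apply]
          have k4 : (g t'.1)⁻¹ t'.1 = c' := by
            rw [Perm.inv_eq_iff_eq, (hg _ ht'.1).2]
          rw [k4, (hz _).1.2 c' hc', (hg _ ht'.1).2]
        rw [← h2] at this
        exact this
      obtain ⟨s, i⟩ := t
      obtain ⟨s', i'⟩ := t'
      simp only at h3
      subst h3
      have h4 : z i = z i' := by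
        simpa [u] using h2
      cases i <;> cases i'
      · rfl
      · exact absurd h4.symm hxy
      · exact absurd h4 hxy
      · rfl
  rw [Finset.card_product] at hcard
  simp only [Finset.card_univ, Fintype.card_bool] at hcard
  have := Finset.card_pos.2 ⟨c, hc⟩
  omega

end Levels
end RegNum

/-! ### Enlarging good sets point by point -/

namespace RegNum

set_option linter.unusedSectionVars false

open Equiv

section Klein

variable {α : Type*} [Fintype α] [DecidableEq α]

/-- Let `V ≤ H` be a Klein four-group acting regularly on a 4-set `T` and fixing all other points.
If an element of `H` moves exactly one point of `T` out of `T`, then suitable involutions in `V` and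
in its conjugate agree on two points, and their product moves at most three points. -/
lemma NS.klein_step {H M : Subgroup (Perm α)} {c : α} (h : NS H) (hMH : M ≤ H) (hf : Free M c)
    (hM : M ≤ symOn (orbF M c)) (h4 : Nat.card M = 4) (hsq : ∀ x ∈ M, x ^ 2 = 1) {g : Perm α}
    (hg : g ∈ H) {p₀ : α} (hp₀ : p₀ ∈ orbF M c) (hgp : g p₀ ∉ orbF M c) :
    ∃ t ∈ orbF M c, t ≠ p₀ ∧ g t ∉ orbF M c := by
  classical
  by_contra! hall
  set T := orbF M c with hT
  have hT4 : T.card = 4 := by rw [hT, hf.card, h4]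
  have hinv : ∀ x ∈ M, ∀ a, x (x a) = a := by
    intro x hx a
    have := hsq x hx
    rw [sq] at this
    rw [← Perm.mul_apply, this]; rfl
  have hgg : ∀ a, g⁻¹ (g a) = a := fun a => by simp
  have hgg' : ∀ a, g (g⁻¹ a) = a := fun a => by simp
  have htr : ∀ a ∈ T, ∀ b ∈ T, ∃ x ∈ M, x a = b := by
    intro a ha b hb
    obtain ⟨m, hm, rfl⟩ := mem_orbF.1 ha
    obtain ⟨m', hm', rfl⟩ := mem_orbF.1 hb
    exact ⟨m' * m⁻¹, mul_mem hm' (inv_mem hm), by simp⟩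
  -- the point `p` of `T` missed by the image of `T`
  obtain ⟨p, hpT, hp⟩ : ∃ p ∈ T, ∀ t ∈ T, g t ≠ p := by
    by_contra! hsurj
    have hsub : T ⊆ (T.erase p₀).image g := by
      intro p hp
      obtain ⟨t, ht, htp⟩ := hsurj p hp
      refine Finset.mem_image.2 ⟨t, Finset.mem_erase.2 ⟨?_, ht⟩, htp⟩
      rintro rfl
      exact hgp (htp ▸ hp)
    have h1 := (Finset.card_le_card hsub).trans Finset.card_image_le
    rw [Finset.card_erase_of_mem hp₀] at h1
    omega
  obtain ⟨b, hb, hbp⟩ : ∃ b ∈ T, b ≠ p₀ := Finset.exists_mem_ne (by omega) p₀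
  obtain ⟨y, hy, hyb⟩ := htr p₀ hp₀ b hb
  have haT : g b ∈ T := hall b hb hbp
  obtain ⟨x, hx, hxa⟩ := htr (g b) haT p hpT
  have hxp : x p = g b := by rw [← hxa, hinv x hx]
  have hyb' : y b = p₀ := by rw [← hyb, hinv y hy]
  have hap : g b ≠ p := hp b hb
  have hx1 : x ≠ 1 := fun h' => hap (by rw [h'] at hxa; simpa using hxa)
  have hy1 : y ≠ 1 := fun h' => hbp (by rw [h'] at hyb; simpa using hyb.symm)
  have hmem : x * (g * y * g⁻¹) ∈ H := mul_mem (hMH hx) (mul_mem (mul_mem hg (hMH hy)) (inv_mem hg))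
  have hne : x * (g * y * g⁻¹) ≠ 1 := by
    intro h'
    have := congrArg (fun t : Perm α => t (g p₀)) h'
    simp only [Perm.mul_apply, hgg, hyb, hxa, Perm.one_apply] at this
    exact hgp (this ▸ hpT)
  have hsub : (x * (g * y * g⁻¹)).support ⊆ {g b, p, g p₀} := by
    intro z hz
    by_contra hn
    simp only [Finset.mem_insert, Finset.mem_singleton, not_or] at hn
    obtain ⟨n1, n2, n3⟩ := hn
    apply Perm.mem_support.1 hz
    simp only [Perm.mul_apply]
    by_cases hzT : z ∈ T
    · -- such a point is `g t`, and both involutions map it to the fourth point of `T`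
      obtain ⟨t, htT, rfl⟩ : ∃ t ∈ T, g t = z := by
        by_contra! hno
        have hsub : (T.erase p₀).image g ⊆ (T.erase p).erase z := by
          intro w hw
          obtain ⟨t, ht, rfl⟩ := Finset.mem_image.1 hw
          have ht' := Finset.mem_erase.1 ht
          exact Finset.mem_erase.2 ⟨hno t ht'.2, Finset.mem_erase.2
            ⟨hp t ht'.2, hall t ht'.2 ht'.1⟩⟩
        have h1 := Finset.card_le_card hsub
        rw [Finset.card_image_of_injective _ g.injective, Finset.card_erase_of_mem hp₀,
          Finset.card_erase_of_mem (Finset.mem_erase.2 ⟨n2, hzT⟩),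
          Finset.card_erase_of_mem hpT] at h1
        omega
      rw [hgg]
      have htb : t ≠ b := fun h' => n1 (by rw [h'])
      have htp : t ≠ p₀ := fun h' => n3 (by rw [h'])
      have hyt : y t ∈ T := (symOn_apply_mem (hM hy)).2 htT
      have hytp : y t ≠ p₀ := fun h' => htb (y.injective (h'.trans hyb'.symm))
      have k1 : g (y t) ∈ (((T.erase (g b)).erase p).erase (g t)) := by
        refine Finset.mem_erase.2 ⟨fun h' => hf.moves hy hy1 htT (g.injective h'),
          Finset.mem_erase.2 ⟨hp _ hyt, Finset.mem_erase.2 ⟨fun h' => htp ?_, hall _ hyt hytp⟩⟩⟩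
        exact y.injective ((g.injective h').trans hyb.symm)
      have k2 : x (g t) ∈ (((T.erase (g b)).erase p).erase (g t)) := by
        refine Finset.mem_erase.2 ⟨hf.moves hx hx1 hzT, Finset.mem_erase.2 ⟨fun h' => n1 ?_,
          Finset.mem_erase.2 ⟨fun h' => n2 ?_, (symOn_apply_mem (hM hx)).2 hzT⟩⟩⟩
        · exact x.injective (h'.trans hxa.symm)
        · exact x.injective (h'.trans hxp.symm)
      have k3 : (((T.erase (g b)).erase p).erase (g t)).card ≤ 1 := by
        rw [Finset.card_erase_of_mem, Finset.card_erase_of_mem, Finset.card_erase_of_mem haT]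
        · omega
        · exact Finset.mem_erase.2 ⟨hap.symm, hpT⟩
        · exact Finset.mem_erase.2 ⟨n2, Finset.mem_erase.2 ⟨n1, hzT⟩⟩
      rw [Finset.card_le_one.1 k3 _ k1 _ k2, hinv x hx]
    · have h1 : g⁻¹ z ∉ T := by
        intro h'
        by_cases h'' : g⁻¹ z = p₀
        · exact n3 (by rw [← h'']; simp)
        · have := hall _ h' h''
          simp at this
          exact hzT this
      rw [hM hy _ h1, hgg', hM hx _ hzT]
  have := h _ hmem hne
  have h3 := (Finset.card_le_card hsub).trans Finset.card_le_three
  omega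

/-- A primitive core-free group of degree 5 or 6 contains no Klein four-group acting regularly on
four points and fixing the others. -/
lemma no_klein {H M : Subgroup (Perm α)} {c : α} (hn : 5 ≤ Fintype.card α)
    (hn6 : Fintype.card α ≤ 6) (hH : H.normalCore = ⊥) (hP : PrimT H) (hMH : M ≤ H)
    (hf : Free M c) (hM : M ≤ symOn (orbF M c)) (h4 : Nat.card M = 4) :
    ∃ x ∈ M, x ^ 2 ≠ 1 := by
  classical
  by_contra! hsq
  have hNS := ns_of_primitive hn hH hP.2
  have hT4 : (orbF M c).card = 4 := by rw [hf.card, h4]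
  have step := fun {g : Perm α} (hg : g ∈ H) {p : α} (hp : p ∈ orbF M c) hgp =>
    hNS.klein_step hMH hf hM h4 hsq hg (p₀ := p) hp hgp
  have hTc := Finset.card_compl (orbF M c)
  rcases (by omega : Fintype.card α = 5 ∨ Fintype.card α = 6) with h5 | h6
  · obtain ⟨e, he⟩ := Finset.card_eq_one.1 (by omega : (orbF M c)ᶜ.card = 1)
    have heq : ∀ a, a ∉ orbF M c → a = e := by
      intro a ha
      have : a ∈ (orbF M c)ᶜ := by simpa using ha
      rw [he] at this; simpa using this
    obtain ⟨g, hg, hge⟩ := hP.1 c e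
    have he' : e ∉ orbF M c := by
      have : e ∈ (orbF M c)ᶜ := by simp [he]
      simpa using this
    obtain ⟨t, -, htc, hgt⟩ := step hg self_mem_orbF (by rwa [hge])
    exact htc (g.injective ((heq _ hgt).trans hge.symm))
  · have hblk : IsBlk H (orbF M c)ᶜ := by
      intro x hx a ha hxa b hb
      rw [Finset.mem_compl] at *
      intro hxb
      obtain ⟨t, ht, htb, hxt⟩ := step (inv_mem hx) hxb (by simpa using hb)
      have hab : a ≠ b := by rintro rfl; exact hxa hxb
      have hta : x⁻¹ t ≠ a := fun h => hxa (by rw [← h]; simpa using ht)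
      have htb' : x⁻¹ t ≠ b := fun h => htb (by rw [← h]; simp)
      have hsub : ({x⁻¹ t, a, b} : Finset α) ⊆ (orbF M c)ᶜ := by
        intro w hw
        simp only [Finset.mem_insert, Finset.mem_singleton] at hw
        rw [Finset.mem_compl]
        rcases hw with rfl | rfl | rfl <;> assumption
      have h1 := Finset.card_le_card hsub
      rw [Finset.card_eq_three.2 ⟨_, _, _, hta, htb', hab, rfl⟩] at h1
      omega
    have hb : MulAction.IsBlock H (((orbF M c)ᶜ : Finset α) : Set α) := by
      rw [MulAction.isBlock_iff_smul_eq_of_nonempty]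
      rintro x ⟨w, hw, hw'⟩
      obtain ⟨a, ha, rfl⟩ := Set.mem_smul_set.1 hw
      have hall := hblk x.1 x.2 a ha hw'
      refine Set.eq_of_subset_of_ncard_le ?_ ?_ (Set.toFinite _)
      · rintro _ ⟨b, hb, rfl⟩
        exact hall b hb
      · exact (Set.ncard_image_of_injective _ (MulAction.injective x)).ge
    rcases hP.2.isTrivialBlock_of_isBlock hb with h | h
    · have h1 : (orbF M c)ᶜ.card ≤ 1 := by
        rw [Finset.card_le_one]
        exact fun a ha b hb => h (by simpa using ha) (by simpa using hb)
      omega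
    · have : c ∈ (((orbF M c)ᶜ : Finset α) : Set α) := by rw [h]; trivial
      simp at this
      exact this self_mem_orbF

end Klein

section Climb

variable {α : Type*} [Fintype α] [DecidableEq α] {ι : Type*} [DecidableEq ι]
  {H : ι → Subgroup (Perm α)}

/-- Enlarge a good set using one group. -/
lemma RegS.adv_one {s : Finset ι} {K : Subgroup (Perm α)} {E : Finset α} {i : ι} (hi : i ∈ s)
    (hk : Kills (H i) (K ⊓ symOn E))
    (next : ∀ K' ≤ K, Good K' E → RegS H K' (s.erase i)) : RegS H K s := by
  obtain ⟨g, hg⟩ := good_of_kill hk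
  exact RegS.step hi g (next _ inf_le_left hg)

/-- Enlarge a good set using two groups, the first of which at least halves the group supported on
the larger set. -/
lemma RegS.adv_two {s : Finset ι} {K : Subgroup (Perm α)} {E : Finset α} {i j : ι} (hi : i ∈ s)
    (hj : j ∈ s) (hij : j ≠ i) (hH : (H i).normalCore = ⊥)
    (hk : ∀ M ≤ K ⊓ symOn E, 2 * Nat.card M ≤ Nat.card ↥(K ⊓ symOn E) → Kills (H j) M)
    (next : ∀ K' ≤ K, Good K' E → RegS H K' ((s.erase i).erase j)) : RegS H K s := by
  obtain ⟨g, hg⟩ : ∃ g, Kills (H j) ((K ⊓ conjSub g (H i)) ⊓ symOn E) := by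
    by_cases hb : K ⊓ symOn E = ⊥
    · exact ⟨1, (kills_of_bot hb).mono (inf_le_inf_right _ inf_le_left)⟩
    · obtain ⟨g, hg⟩ := exists_halve hH hb
      refine ⟨g, ?_⟩
      rw [inf_right_comm]
      exact hk _ inf_le_left hg
  refine RegS.step hi g ?_
  refine RegS.adv_one (Finset.mem_erase.2 ⟨hij, hj⟩) hg fun K' hK' => next K' (hK'.trans inf_le_left)

lemma exists_new {Δ : Finset α} (h : Δ.card < Fintype.card α) : ∃ c, c ∉ Δ := by
  by_contra! h'
  rw [Finset.eq_univ_iff_forall.2 h', Finset.card_univ] at h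
  exact lt_irrefl _ h

/-- At two groups per point, a good set of at least `⌊n/2⌋ + 2` points is enlarged to all points.
The group `κ` is kept for the last point. -/
lemma regS_of_good_upper (hH : ∀ i, (H i).normalCore = ⊥) (hn : 7 ≤ Fintype.card α) {κ : ι}
    (hκ : Intr (H κ) ∨ PrimT (H κ)) (m : ℕ) : ∀ (s : Finset ι) (K : Subgroup (Perm α))
      (Δ : Finset α), κ ∈ s → Good K Δ → Δ.card + m = Fintype.card α → 2 * m ≤ s.card →
      RegS H K s := by
  induction m with
  | zero =>
    intro s K Δ _ hg hm _
    refine RegS.of_bot (good_univ ?_)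
    rwa [← (Finset.card_eq_iff_eq_univ Δ).1 (by omega)]
  | succ m ih =>
    intro s K Δ hκs hg hm hs
    obtain ⟨c, hc⟩ := exists_new (Δ := Δ) (by omega)
    have hE : (insert c Δ).card + m = Fintype.card α := by
      rw [Finset.card_insert_of_notMem hc]; omega
    have hf := free_of_good hg c
    have hr := card_le_of_free hf inf_le_right (Finset.mem_insert_self c Δ)
    have hs1 : (s.erase κ).card = s.card - 1 := Finset.card_erase_of_mem hκs
    obtain ⟨i, hi⟩ : (s.erase κ).Nonempty := by rw [← Finset.card_pos]; omega
    have hi' := Finset.mem_erase.1 hi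
    rcases Nat.eq_zero_or_pos m with rfl | hm0
    · refine RegS.adv_two (E := insert c Δ) hi'.2 hκs hi'.1.symm (hH i) ?_ ?_
      · intro M hM hMc
        rcases hκ with hI | hP
        · exact kills_of_intr hI (hf.mono hM) (by omega)
        · exact kills_of_ns (hH κ) (ns_of_primitive (by omega) (hH κ) hP.2) (hf.mono hM)
            (by omega)
      · intro K' _ hg'
        refine RegS.of_bot (good_univ ?_)
        rwa [← (Finset.card_eq_iff_eq_univ (insert c Δ)).1 (by omega)]
    · obtain ⟨j, hj⟩ : ((s.erase κ).erase i).Nonempty := by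
        rw [← Finset.card_pos, Finset.card_erase_of_mem hi]; omega
      have hj' := Finset.mem_erase.1 hj
      have hj'' := Finset.mem_erase.1 hj'.2
      refine RegS.adv_two (E := insert c Δ) hi'.2 hj''.2 hj'.1 (hH i) ?_ ?_
      · intro M hM hMc
        exact kills_low hn (hH j) (hf.mono hM) (hM.trans inf_le_right)
          (Finset.mem_insert_self c Δ) (by omega) (by omega) (by omega)
      · intro K' _ hg'
        refine ih _ K' (insert c Δ) ?_ hg' hE ?_
        · exact Finset.mem_erase.2 ⟨hj''.1.symm, Finset.mem_erase.2 ⟨hi'.1.symm, hκs⟩⟩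
        · rw [Finset.card_erase_of_mem (Finset.mem_erase.2 ⟨hj'.1, hj''.2⟩),
            Finset.card_erase_of_mem hi'.2]
          omega

/-- The two points after `⌊n/2⌋ + 1` cost only three groups. -/
lemma regS_of_good_middle (hH : ∀ i, (H i).normalCore = ⊥) (hn : 7 ≤ Fintype.card α) {κ : ι}
    (hκ : Intr (H κ) ∨ PrimT (H κ)) {m : ℕ} {s : Finset ι} {K : Subgroup (Perm α)} {Δ : Finset α}
    (hκs : κ ∈ s) (hg : Good K Δ) (hΔ : Δ.card = Fintype.card α / 2 + 1)
    (hm : Δ.card + 2 + m = Fintype.card α) (hs : 2 * m + 3 ≤ s.card) : RegS H K s := by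
  have hm1 : 1 ≤ m := by omega
  obtain ⟨c, hc⟩ := exists_new (Δ := Δ) (by omega)
  have hE : (insert c Δ).card = Δ.card + 1 := Finset.card_insert_of_notMem hc
  obtain ⟨c', hc'⟩ := exists_new (Δ := insert c Δ) (by omega)
  have hE' : (insert c' (insert c Δ)).card = Δ.card + 2 := by
    rw [Finset.card_insert_of_notMem hc']; omega
  have hf := free_of_good hg c
  have hcE := Finset.mem_insert_self c Δ
  have hr := card_le_of_free hf inf_le_right hcE
  obtain ⟨u, hu, hu3⟩ := Finset.exists_subset_card_eq (s := s.erase κ) (n := 3)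
    (by rw [Finset.card_erase_of_mem hκs]; omega)
  obtain ⟨i, j, k, hij, hik, hjk, rfl⟩ := Finset.card_eq_three.1 hu3
  obtain ⟨hiκ, hi⟩ := Finset.mem_erase.1 (hu (by simp : i ∈ _))
  obtain ⟨hjκ, hj⟩ := Finset.mem_erase.1 (hu (by simp : j ∈ _))
  obtain ⟨hkκ, hk⟩ := Finset.mem_erase.1 (hu (by simp : k ∈ _))
  have hj1 : j ∈ s.erase i := Finset.mem_erase.2 ⟨hij.symm, hj⟩
  have hk1 : k ∈ s.erase i := Finset.mem_erase.2 ⟨hik.symm, hk⟩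
  have hcard1 : (s.erase i).card = s.card - 1 := Finset.card_erase_of_mem hi
  have hcard2 : ((s.erase i).erase j).card = s.card - 2 := by
    rw [Finset.card_erase_of_mem hj1]; omega
  have hcard3 : (((s.erase i).erase j).erase k).card = s.card - 3 := by
    rw [Finset.card_erase_of_mem (Finset.mem_erase.2 ⟨hjk.symm, hk1⟩)]; omega
  have hκ2 : κ ∈ (s.erase i).erase j :=
    Finset.mem_erase.2 ⟨hjκ.symm, Finset.mem_erase.2 ⟨hiκ.symm, hκs⟩⟩
  have hκ3 : κ ∈ ((s.erase i).erase j).erase k := Finset.mem_erase.2 ⟨hkκ.symm, hκ2⟩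
  -- once one group has dealt with the first point, two more deal with the second
  have second : ∀ K' ≤ K, Good K' (insert c Δ) → RegS H K' (s.erase i) := by
    intro K' _ hg'
    have hf' := free_of_good hg' c'
    have hcE' := Finset.mem_insert_self c' (insert c Δ)
    have hr' := card_le_of_free hf' inf_le_right hcE'
    refine RegS.adv_two (E := insert c' (insert c Δ)) hj1 hk1 hjk.symm (hH j) ?_ ?_
    · intro M hM hMc
      exact kills_low hn (hH k) (hf'.mono hM) (hM.trans inf_le_right) hcE' (by omega) (by omega)
        (by omega)
    · intro K'' _ hg''
      exact regS_of_good_upper hH hn hκ m _ K'' _ hκ3 hg'' (by omega) (by omega)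
  by_cases hlow : Nat.card ↥(K ⊓ symOn (insert c Δ)) ≤ Δ.card
  · exact RegS.adv_one hi (kills_low hn (hH i) hf inf_le_right hcE (by omega) (by omega)
      (by omega)) second
  · rcases next_level hcE hc' hf (by omega) with hX | hinv
    · refine RegS.adv_two (E := insert c' (insert c Δ)) hi hj hij.symm (hH i) ?_ ?_
      · intro M hM hMc
        rw [hX] at hM hMc
        exact kills_low hn (hH j) (hf.mono hM) (hM.trans inf_le_right) hcE (by omega) (by omega)
          (by omega)
      · intro K'' _ hg''
        exact regS_of_good_upper hH hn hκ m _ K'' _ hκ2 hg'' (by omega) (by omega)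
    · exact RegS.adv_one hi (kills_two hn (hH i) hf inf_le_right hcE (by omega) (by omega)
        (by omega) hinv) second

/-- A primitive group to start with, and a primitive or intransitive one to end with. -/
lemma regS_of_primT (hH : ∀ i, (H i).normalCore = ⊥) (hn : 7 ≤ Fintype.card α) {s : Finset ι}
    (hs : s.card + 1 = Fintype.card α) {p κ : ι} (hp : p ∈ s) (hκs : κ ∈ s) (hpκ : κ ≠ p)
    (hP : PrimT (H p)) (hκ : Intr (H κ) ∨ PrimT (H κ)) : RegS H ⊤ s := by
  obtain ⟨Δ₀, hΔ₀, hc₀⟩ := (ns_of_primitive (by omega) (hH p) hP.2).exists_good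
  obtain ⟨Δ, hΔ, hc⟩ := Finset.exists_subset_card_eq
    (s := Δ₀) (n := (Fintype.card α + 1) / 2) (by omega)
  refine RegS.step hp 1 ?_
  have hg : Good (⊤ ⊓ conjSub 1 (H p)) Δ := hΔ₀.mono (fun x hx => by
    have : x ∈ conjSub 1 (H p) := hx.2
    rw [mem_conjSub] at this
    simpa using this) hΔ
  have hκ1 : κ ∈ s.erase p := Finset.mem_erase.2 ⟨hpκ, hκs⟩
  have hcard1 : (s.erase p).card = s.card - 1 := Finset.card_erase_of_mem hp
  by_cases hodd : (Fintype.card α + 1) / 2 = Fintype.card α / 2 + 1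
  · exact regS_of_good_middle hH hn hκ (m := Fintype.card α - Fintype.card α / 2 - 3) hκ1 hg
      (by omega) (by omega) (by omega)
  · obtain ⟨c, hcΔ⟩ := exists_new (Δ := Δ) (by omega)
    have hE : (insert c Δ).card = Δ.card + 1 := Finset.card_insert_of_notMem hcΔ
    have hf := free_of_good hg c
    have hcE := Finset.mem_insert_self c Δ
    have hr := card_le_of_free hf inf_le_right hcE
    obtain ⟨i, hi⟩ : ((s.erase p).erase κ).Nonempty := by
      rw [← Finset.card_pos, Finset.card_erase_of_mem hκ1]; omega
    obtain ⟨hiκ, hi'⟩ := Finset.mem_erase.1 hi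
    refine RegS.adv_one hi' (kills_low hn (hH i) hf inf_le_right hcE (by omega) (by omega)
      (by omega)) fun K' _ hg' => ?_
    refine regS_of_good_middle hH hn hκ (m := Fintype.card α - Fintype.card α / 2 - 3)
      (Finset.mem_erase.2 ⟨hiκ.symm, hκ1⟩) hg' (by omega) (by omega) ?_
    rw [Finset.card_erase_of_mem hi']
    omega

/-- In degrees 5 and 6 any core-free groups do after the initial primitive one: good sets of 3 and 4
points are enlarged by one group each, as `no_klein` excludes the only obstruction. -/
lemma regS_of_primT_small (hH : ∀ i, (H i).normalCore = ⊥) (hn : 5 ≤ Fintype.card α)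
    (hn6 : Fintype.card α ≤ 6) {s : Finset ι} (hs : s.card + 1 = Fintype.card α) {p : ι}
    (hp : p ∈ s) (hP : PrimT (H p)) : RegS H ⊤ s := by
  obtain ⟨Δ₀, hΔ₀, hc₀⟩ := (ns_of_primitive (by omega) (hH p) hP.2).exists_good
  obtain ⟨Δ, hΔ, hc⟩ := Finset.exists_subset_card_eq (s := Δ₀) (n := 3) (by omega)
  refine RegS.step hp 1 ?_
  have hle : ⊤ ⊓ conjSub 1 (H p) ≤ H p := fun x hx => by
    have : x ∈ conjSub 1 (H p) := hx.2
    rw [mem_conjSub] at this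
    simpa using this
  have hg := hΔ₀.mono hle hΔ
  generalize ⊤ ⊓ conjSub 1 (H p) = K at hle hg
  have hcard1 : (s.erase p).card = s.card - 1 := Finset.card_erase_of_mem hp
  have level : ∀ (t : Finset ι) (K : Subgroup (Perm α)) (Δ : Finset α) (i : ι), i ∈ t → K ≤ H p →
      Good K Δ → Δ.card ≤ 4 → (∀ c ∉ Δ, ∀ K' ≤ H p, Good K' (insert c Δ) → RegS H K' (t.erase i)) →
      RegS H K t := by
    intro t K Δ i hi hK hg h4 next
    obtain ⟨c, hcΔ⟩ := exists_new (Δ := Δ) (by omega)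
    have hE : (insert c Δ).card = Δ.card + 1 := Finset.card_insert_of_notMem hcΔ
    have hf := free_of_good hg c
    have hcE := Finset.mem_insert_self c Δ
    have hr := card_le_of_free hf inf_le_right hcE
    refine RegS.adv_one hi (kills_of_small (hH i) (by omega) fun hM4 => ?_)
      fun K' hK' hg' => next c hcΔ K' (hK'.trans hK) hg'
    exact no_klein hn hn6 (hH p) hP (inf_le_left.trans hK) hf
      (le_symOn_orbF inf_le_right hcE (by rw [hf.card]; omega)) hM4
  obtain ⟨i, hi⟩ : (s.erase p).Nonempty := by rw [← Finset.card_pos]; omega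
  have hcard2 : ((s.erase p).erase i).card = s.card - 2 := by
    rw [Finset.card_erase_of_mem hi]; omega
  refine level _ K Δ i hi hle hg (by omega) fun c hcΔ K₁ hK₁ hg₁ => ?_
  have hE : (insert c Δ).card = 4 := by rw [Finset.card_insert_of_notMem hcΔ]; omega
  obtain ⟨j, hj⟩ : ((s.erase p).erase i).Nonempty := by rw [← Finset.card_pos]; omega
  have hcard3 : (((s.erase p).erase i).erase j).card = s.card - 3 := by
    rw [Finset.card_erase_of_mem hj]; omega
  refine level _ K₁ _ j hj hK₁ hg₁ (by omega) fun c' hc' K₂ hK₂ hg₂ => ?_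
  have hE' : (insert c' (insert c Δ)).card = 5 := by
    rw [Finset.card_insert_of_notMem hc', hE]
  rcases (by omega : Fintype.card α = 5 ∨ Fintype.card α = 6) with h5 | h6
  · refine RegS.of_bot (good_univ ?_)
    rwa [← (Finset.card_eq_iff_eq_univ (insert c' (insert c Δ))).1 (by omega)]
  · -- a group of order at most 6 is killed by two core-free groups
    have hcK : Nat.card K₂ ≤ 6 := by
      obtain ⟨c'', hc''⟩ := exists_new (Δ := insert c' (insert c Δ)) (by omega)
      have hE'' : (insert c'' (insert c' (insert c Δ))).card = Fintype.card α := by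
        rw [Finset.card_insert_of_notMem hc'']; omega
      have hf := free_of_good hg₂ c''
      have hK : K₂ ⊓ symOn Finset.univ = K₂ :=
        inf_eq_left.2 fun x _ a ha => absurd (Finset.mem_univ a) ha
      rw [(Finset.card_eq_iff_eq_univ _).1 hE'', hK] at hf
      rw [← hf.card, ← h6]
      exact Finset.card_le_univ _
    refine regS_of_card_lt hH _ K₂ ?_
    rw [hcard3, show s.card - 3 + 1 = 3 by omega]
    omega

end Climb
end RegNum

/-! ### Combining the cases -/

namespace RegNum

open Equiv

/-- Among at least two imprimitive groups, at most one of them with blocks of size two, one has larger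
blocks. -/
lemma exists_large_block {α ι : Type*} [Fintype α] [DecidableEq α] {v : Finset ι}
    {H : ι → Subgroup (Perm α)} (hc : 1 < v.card) (hv : ∀ i ∈ v, ∃ a, ImpB (H i) a)
    (h2 : ∀ i ∈ v, ∀ j ∈ v, i ≠ j → ImpB (H i) 2 → ¬ ImpB (H j) 2) :
    ∃ i ∈ v, ∃ j ∈ v, i ≠ j ∧ ∃ a, 3 ≤ a ∧ ImpB (H i) a := by
  obtain ⟨i, hi, j, hj, hij⟩ := Finset.one_lt_card.1 hc
  obtain ⟨a, ha⟩ := hv i hi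
  obtain ⟨b, hb⟩ := hv j hj
  obtain ⟨-, -, -, ha2, -⟩ := id ha
  obtain ⟨-, -, -, hb2, -⟩ := id hb
  by_cases h : a = 2
  · refine ⟨j, hj, i, hi, hij.symm, b, ?_, hb⟩
    have : b ≠ 2 := fun h' => h2 i hi j hj hij (h ▸ ha) (h' ▸ hb)
    omega
  · exact ⟨i, hi, j, hj, hij, a, by omega, ha⟩

/-- Any `n - 1` core-free subgroups of the symmetric group form a regular tuple. -/
lemma regS_main {n : ℕ} (hn : 5 ≤ n) {ι : Type*} [DecidableEq ι] {s : Finset ι}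
    (hs : s.card + 1 = n) {H : ι → Subgroup (Perm (Fin n))} (hH : ∀ i, (H i).normalCore = ⊥) :
    RegS H ⊤ s := by
  classical
  have hcard : Fintype.card (Fin n) = n := Fintype.card_fin n
  by_cases h2 : ∃ i ∈ s, ∃ j ∈ s, i ≠ j ∧ ImpB (H i) 2 ∧ ImpB (H j) 2
  · obtain ⟨i, hi, j, hj, hij, hIi, hIj⟩ := h2
    exact regS_of_two_matchings hH hn hs hi hj hij hIi hIj
  push Not at h2
  by_cases hNP : ∀ i ∈ s, NonPrim (H i)
  · by_cases hI : ∃ i ∈ s, Intr (H i)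
    · obtain ⟨i, hi, hI⟩ := hI
      exact regS_of_intr (by omega) hNP (by omega) hi hI
    · push Not at hI
      obtain ⟨i, hi, j, hj, hij, a, ha, hIa⟩ := exists_large_block (by omega)
        (fun i hi => (hNP i hi).resolve_left (hI i hi)) h2
      have := regS_of_block (w := ∅) hH (by omega)
        (fun i hi => (hNP i hi).resolve_left (hI i hi)) (by simp) (by simp) hi hj hij ha hIa
        (by simp; omega)
      simpa using this
  · push Not at hNP
    obtain ⟨p, hp, hpN⟩ := hNP
    have hP := (nonPrim_or_primT (H p)).resolve_left hpN
    by_cases hκ : ∃ κ ∈ s, κ ≠ p ∧ (Intr (H κ) ∨ PrimT (H κ))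
    · obtain ⟨κ, hκs, hκp, hκ⟩ := hκ
      by_cases h7 : 7 ≤ n
      · exact regS_of_primT hH (by omega) (by omega) hp hκs hκp hP hκ
      · exact regS_of_primT_small hH (by omega) (by omega) (by omega) hp hP
    · push Not at hκ
      have hv : ∀ i ∈ s.erase p, ∃ a, ImpB (H i) a := by
        intro i hi
        obtain ⟨hip, his⟩ := Finset.mem_erase.1 hi
        have := hκ i his hip
        rcases nonPrim_or_primT (H i) with (h | h) | h
        exacts [absurd h this.1, h, absurd h this.2]
      have hvc : (s.erase p).card = s.card - 1 := Finset.card_erase_of_mem hp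
      obtain ⟨i, hi, j, hj, hij, a, ha, hIa⟩ := exists_large_block (by omega) hv
        fun i hi j hj => h2 i (Finset.mem_of_mem_erase hi) j (Finset.mem_of_mem_erase hj)
      have := regS_of_block (v := s.erase p) (w := {p}) hH (by omega) hv (by simp) (by simp) hi hj
        hij ha hIa (by simp; omega)
      refine this.mono ?_
      intro x hx
      simp only [Finset.mem_union, Finset.mem_erase, Finset.mem_singleton] at hx
      rcases hx with hx | rfl
      exacts [hx.2, hp]

end RegNum

theorem regularity_number_of_symmetric_group (n : ℕ) (hn : 5 ≤ n) :
    (∀ H : Fin (n - 1) → Subgroup (Equiv.Perm (Fin n)),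
        (∀ i, (H i).normalCore = ⊥) → IsRegularTuple H) ∧
    ((MulAction.stabilizer (Equiv.Perm (Fin n)) (⟨n - 1, by omega⟩ : Fin n)).normalCore = ⊥ ∧
      ∀ g : Fin (n - 2) → Equiv.Perm (Fin n),
        (⨅ i, conjSub (g i)
          (MulAction.stabilizer (Equiv.Perm (Fin n)) (⟨n - 1, by omega⟩ : Fin n))) ≠ ⊥) ∧
    IsLeast {k : ℕ | 0 < k ∧ ∀ H : Fin k → Subgroup (Equiv.Perm (Fin n)),
        (∀ i, (H i).normalCore = ⊥) → IsRegularTuple H} (n - 1) := by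
  have main : ∀ H : Fin (n - 1) → Subgroup (Equiv.Perm (Fin n)),
      (∀ i, (H i).normalCore = ⊥) → IsRegularTuple H := fun H hH =>
    RegNum.isRegularTuple_of_regS
      (RegNum.regS_main hn (by rw [Finset.card_univ, Fintype.card_fin]; omega) hH)
  refine ⟨main, ⟨RegNum.normalCore_stabilizer _, RegNum.not_reg_stabilizer (by omega) _⟩,
    ⟨by omega, main⟩, ?_⟩
  rintro k ⟨-, hk⟩
  by_contra! hlt
  obtain ⟨g, hg⟩ := hk (fun _ => MulAction.stabilizer _ (⟨n - 1, by omega⟩ : Fin n))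
    fun _ => RegNum.normalCore_stabilizer _
  exact RegNum.not_reg_stabilizer (by omega) _ g hg
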